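/- Let k ≥ 1 and let λ1, ..., λk be coprime nonzero integers. Then there exists a constant C, depending only on λ1, ..., λk, such that for every finite subset A of the rational numbers, |λ1·A + ... + λk·A| ≥ (|λ1| + ... + |λk|)·|A| − C. -/

import Mathlib

/-!
An affine map turns a set of at least two rationals into a set `A` of integers whose differences
have no common factor. Write `S` for the sum and `L` for the product of the absolute values of the
coefficients, and suppose that the sum of dilates of `A` has fewer than `S |A|` elements.

Call a residue class modulo `M` full if `A` meets all of its refinements modulo `L M`. When all
classes are full there is a sharp bound. For a single class it is `sum_le_SDt_of_full`: each dilate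
splits into pieces according to residues modulo `L`, one averages the inequality
`|X + Y| ≥ |X| + |Y| - 1` over choices of pieces, and the weights add up to exactly `S`. For several
classes, `layers` decomposes the function counting elements in each class into superlevel sets, and
to each level one applies the inequality `card_le_SD`, that a sum of coprime dilates of `X` in a
finite abelian group has at least `|X|` elements.

A small sum of dilates forces small doubling, hence polynomial growth of the iterated difference
sets. Were there no modulus with most classes full, refining repeatedly by the factor `L` would
produce exponential growth. So there is a modulus `M` with boundedly many occupied residues for
which almost all of `A` lies in full classes (`exists_modulus_mass`). This proves the claim with an
arbitrarily small linear loss (`weak_bound`), and therefore disposes of the sets with almost all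
elements in a proper residue class (`spread`): an element outside that class contributes a set of
almost `|A|` elements disjoint from the other sums.

To remove the loss one studies near equality. Summing over levels, some superlevel set `X` in
`ZMod M` carrying most of `A` has a sum of dilates of size at most `(1 + δ)|X|`, and by `spread` it
is robust, meaning not concentrated in a coset of a proper subgroup. Let `μ` be the greatest common
divisor of all coefficients but the first, `λ`. Projecting away the `μ`-primary part of the group
makes `μ` invertible, while multiplication by `λ` is injective on the fibres of the projection. The
proof of the group inequality then shows where sums are wasted, and combined with the fact that
almost invariance under many translations passes to the group they generate (`disp_closure`), it
shows that the sum of dilates of `X` is almost invariant under all multiples of `λ μ`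
(`exists_disp`). Consequently `X` nearly fills or nearly misses each class modulo
`q = gcd(λ μ, M)` (`fill`). This modulus is bounded in terms of the coefficients alone, and each
class modulo `q` that contains a positive proportion of `A` is full (`full_of_filled`).

For such a bounded modulus the conclusion holds with a constant error (`bound_of_large_full`). If
every occupied class is full, the layer bound suffices. Otherwise one separates large full classes
from much smaller ones, and the rigidity statement `exact_structure` gives an extra layer or an
extra class in the sum of dilates, which outweighs the small classes.
-/

open Pointwise

namespace Dilates

/-! ### Sums of dilates in an abelian group -/

open Classical in
/-- The set of all `∑ i, l i • g i` with `g i ∈ X i`: a sum of dilates of possibly different sets. -/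
noncomputable def SDt {k : ℕ} {G : Type} [AddCommGroup G] (l : Fin k → ℤ)
    (X : Fin k → Finset G) : Finset G :=
  (Fintype.piFinset X).image (fun g => ∑ i, l i • g i)

/-- The sum of dilates `l 0 · X + ⋯ + l (k-1) · X`. -/
noncomputable def SD {k : ℕ} {G : Type} [AddCommGroup G] (l : Fin k → ℤ)
    (X : Finset G) : Finset G := SDt l (fun _ => X)

section basics
variable {k n : ℕ} {G : Type} [AddCommGroup G] {Q : Type} [AddCommGroup Q]

lemma mem_SDt {l : Fin k → ℤ} {X : Fin k → Finset G} {x : G} :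
    x ∈ SDt l X ↔ ∃ g : Fin k → G, (∀ i, g i ∈ X i) ∧ ∑ i, l i • g i = x := by
  simp [SDt]

lemma mem_SD {l : Fin k → ℤ} {X : Finset G} {x : G} :
    x ∈ SD l X ↔ ∃ g : Fin k → G, (∀ i, g i ∈ X) ∧ ∑ i, l i • g i = x := mem_SDt

lemma SD_mono {l : Fin k → ℤ} {X Y : Finset G} (h : X ⊆ Y) : SD l X ⊆ SD l Y := by
  intro x hx
  obtain ⟨g, hg, rfl⟩ := mem_SD.1 hx
  exact mem_SD.2 ⟨g, fun i => h (hg i), rfl⟩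

lemma SD_nonempty {l : Fin k → ℤ} {X : Finset G} (h : X.Nonempty) : (SD l X).Nonempty := by
  obtain ⟨a, ha⟩ := h
  exact ⟨_, mem_SD.2 ⟨fun _ => a, fun _ => ha, rfl⟩⟩

lemma mem_SD_succ {l : Fin (n + 1) → ℤ} {μ : ℤ} {l' : Fin n → ℤ}
    (hl : ∀ j, l j.succ = μ * l' j) {X : Finset G} {x : G} :
    x ∈ SD l X ↔ ∃ a ∈ X, ∃ u ∈ SD l' X, l 0 • a + μ • u = x := by
  constructor
  · intro hx
    obtain ⟨g, hg, rfl⟩ := mem_SD.1 hx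
    refine ⟨g 0, hg 0, _, mem_SD.2 ⟨fun j => g j.succ, fun j => hg _, rfl⟩, ?_⟩
    simp [Fin.sum_univ_succ, Finset.smul_sum, hl, mul_smul]
  · rintro ⟨a, ha, u, hu, rfl⟩
    obtain ⟨g, hg, rfl⟩ := mem_SD.1 hu
    refine mem_SD.2 ⟨Fin.cons a g, ?_, ?_⟩
    · intro i
      refine Fin.cases ?_ (fun j => ?_) i
      · simpa using ha
      · simpa using hg j
    · simp [Fin.sum_univ_succ, Finset.smul_sum, hl, mul_smul]

lemma mem_SD_image [DecidableEq Q] (π : G →+ Q) {l : Fin k → ℤ} {X : Finset G} {y : Q} :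
    y ∈ SD l (X.image π) ↔ ∃ x ∈ SD l X, π x = y := by
  constructor
  · intro hy
    obtain ⟨g, hg, rfl⟩ := mem_SD.1 hy
    choose f hf hfg using fun i => Finset.mem_image.1 (hg i)
    refine ⟨_, mem_SD.2 ⟨f, hf, rfl⟩, ?_⟩
    simp [map_sum, hfg]
  · rintro ⟨x, hx, rfl⟩
    obtain ⟨g, hg, rfl⟩ := mem_SD.1 hx
    exact mem_SD.2 ⟨fun i => π (g i), fun i => Finset.mem_image_of_mem _ (hg i), by simp [map_sum]⟩

/-- A coprime tuple splits as its head together with `μ` times a coprime tuple. -/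
lemma exists_split (l : Fin (n + 2) → ℤ) (hl : ∀ i, l i ≠ 0) (hc : Finset.univ.gcd l = 1) :
    ∃ (μ : ℤ) (l' : Fin (n + 1) → ℤ), μ ≠ 0 ∧ (∀ j, l' j ≠ 0) ∧ Finset.univ.gcd l' = 1 ∧
      (∀ j, l j.succ = μ * l' j) ∧ IsCoprime (l 0) μ := by
  obtain ⟨g, hg, hg1⟩ := Finset.extract_gcd (fun j : Fin (n + 1) => l j.succ)
    (Finset.univ_nonempty (α := Fin (n + 1)))
  set μ := Finset.univ.gcd (fun j : Fin (n + 1) => l j.succ) with hμ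
  have hg' : ∀ j, l j.succ = μ * g j := fun j => hg j (Finset.mem_univ _)
  refine ⟨μ, g, ?_, ?_, hg1, hg', ?_⟩
  · intro h
    have := hg' 0
    rw [h, zero_mul] at this
    exact hl _ this
  · intro j h
    have := hg' j
    rw [h, mul_zero] at this
    exact hl _ this
  · rw [← isRelPrime_iff_isCoprime]
    intro d hd0 hd1
    have : d ∣ Finset.univ.gcd l := by
      refine Finset.dvd_gcd (fun i _ => ?_)
      refine Fin.cases hd0 (fun j => ?_) i
      rw [hg' j]
      exact hd1.mul_right _
    rw [hc] at this
    exact isUnit_of_dvd_one this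

end basics

/-! ### Killing the `μ`-primary part -/

/-- The projection onto the quotient of a finite group by its `μ`-primary part: multiplication by
`μ` becomes injective on the quotient and is nilpotent on the kernel. -/
structure IsPrimaryProj {G Q : Type} [AddCommGroup G] [AddCommGroup Q] (μ : ℤ) (π : G →+ Q) :
    Prop where
  surj : Function.Surjective π
  inj : ∀ y : Q, μ • y = 0 → y = 0
  nil : ∃ N : ℕ, ∀ x, π x = 0 → (μ ^ N) • x = 0

/-- The quotient by the elements killed by some power of `μ` is such a projection. -/
lemma exists_primaryProj (G : Type) [AddCommGroup G] [Finite G] (μ : ℤ) :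
    ∃ (Q : Type) (_ : AddCommGroup Q) (_ : Finite Q) (π : G →+ Q), IsPrimaryProj μ π := by
  let P : AddSubgroup G :=
    { carrier := {x | ∃ N : ℕ, (μ ^ N) • x = 0}
      zero_mem' := ⟨0, by simp⟩
      add_mem' := by
        rintro a b ⟨N, hN⟩ ⟨M, hM⟩
        refine ⟨N + M, ?_⟩
        rw [smul_add, pow_add, mul_smul, mul_smul, hM, smul_comm, hN]
        simp
      neg_mem' := by
        rintro a ⟨N, hN⟩
        exact ⟨N, by rw [smul_neg, hN, neg_zero]⟩ }
  have hP : ∀ x, x ∈ P ↔ ∃ N : ℕ, (μ ^ N) • x = 0 := fun x => Iff.rfl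
  refine ⟨G ⧸ P, inferInstance, inferInstance, QuotientAddGroup.mk' P, ?_, ?_, ?_⟩
  · exact QuotientAddGroup.mk'_surjective P
  · intro y hy
    obtain ⟨x, rfl⟩ := QuotientAddGroup.mk'_surjective P y
    rw [← map_zsmul, ← AddMonoidHom.mem_ker, QuotientAddGroup.ker_mk'] at hy
    rw [← AddMonoidHom.mem_ker, QuotientAddGroup.ker_mk']
    obtain ⟨N, hN⟩ := hy
    exact ⟨N + 1, by rw [pow_succ, mul_smul, hN]⟩
  · have : ∀ x : P, ∃ N : ℕ, (μ ^ N) • (x : G) = 0 := fun x => x.2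
    classical
    choose f hf using this
    cases nonempty_fintype P
    refine ⟨∑ x, f x, fun x hx => ?_⟩
    rw [← AddMonoidHom.mem_ker, QuotientAddGroup.ker_mk'] at hx
    have h1 := hf ⟨x, hx⟩
    rw [← Finset.sum_erase_add _ _ (Finset.mem_univ (⟨x, hx⟩ : P)), pow_add, mul_smul, h1,
      smul_zero]

section proj
variable {n : ℕ} {G Q : Type} [AddCommGroup G] [AddCommGroup Q] {lam μ : ℤ} {π : G →+ Q}

/-- Multipliers coprime to `μ` are injective on the `μ`-primary part. -/
lemma IsPrimaryProj.lam_inj (h : IsPrimaryProj μ π) (hc : IsCoprime lam μ) {x y : G}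
    (hxy : π x = π y) (h1 : lam • x = lam • y) : x = y := by
  obtain ⟨N, hN⟩ := h.nil
  have hz : μ ^ N • (x - y) = 0 := hN _ (by simp [hxy])
  have hl : lam • (x - y) = 0 := by rw [smul_sub, h1, sub_self]
  obtain ⟨a, b, hab⟩ := (hc.pow_right (n := N))
  have : (a * lam + b * μ ^ N) • (x - y) = 0 := by
    rw [add_smul, mul_smul, mul_smul, hz, hl]; simp
  rw [hab, one_smul] at this
  exact sub_eq_zero.1 this

lemma IsPrimaryProj.mu_inj (h : IsPrimaryProj μ π) : Function.Injective (fun y : Q => μ • y) := by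
  intro a b hab
  have : μ • (a - b) = 0 := by rw [smul_sub]; exact sub_eq_zero.2 hab
  exact sub_eq_zero.1 (h.inj _ this)

/-- A translated dilate of a set inside one fibre of `π` injects into a fibre of `T`. -/
lemma IsPrimaryProj.card_le_fiber [DecidableEq Q] (h : IsPrimaryProj μ π) (hc : IsCoprime lam μ)
    {T B : Finset G} {z : G} {y w : Q}
    (hB : ∀ b ∈ B, π b = y) (hT : ∀ b ∈ B, lam • b + z ∈ T) (hw : lam • y + π z = w) :
    B.card ≤ (T.filter (fun t => π t = w)).card := by
  refine Finset.card_le_card_of_injOn (fun b => lam • b + z) ?_ ?_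
  · intro b hb
    have hb : b ∈ B := hb
    simp [hT b hb, hB b hb, hw]
  · intro a ha b hb hab
    have hab : lam • a + z = lam • b + z := hab
    exact h.lam_inj hc ((hB a ha).trans (hB b hb).symm) (add_right_cancel hab)

end proj

lemma exists_max_fiber {G Q : Type} [DecidableEq Q] (π : G → Q) (X : Finset G)
    (hX : X.Nonempty) :
    ∃ y0 ∈ X.image π, ∀ y, (X.filter (fun x => π x = y)).card ≤
      (X.filter (fun x => π x = y0)).card := by
  obtain ⟨y0, hy0, hm⟩ := Finset.exists_max_image (X.image π)
    (fun y => (X.filter (fun x => π x = y)).card) (hX.image _)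
  refine ⟨y0, hy0, fun y => ?_⟩
  by_cases hy : y ∈ X.image π
  · exact hm y hy
  · have : X.filter (fun x => π x = y) = ∅ := by
      refine Finset.filter_eq_empty_iff.2 fun x hx h => hy ?_
      exact Finset.mem_image.2 ⟨x, hx, h⟩
    simp [this]

lemma card_le_of_fibers {G Q : Type} [DecidableEq Q] (π : G → Q) (X : Finset G) (s : ℕ)
    (h : ∀ y, (X.filter (fun x => π x = y)).card ≤ s) : X.card ≤ (X.image π).card * s := by
  rw [mul_comm]
  exact Finset.card_le_mul_card_image X s (fun y _ => h y)

lemma mul_card_le_of_fibers {G Q : Type} [DecidableEq Q] (π : G → Q) (T : Finset G) (V : Finset Q)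
    (s : ℕ) (h : ∀ y ∈ V, s ≤ (T.filter (fun x => π x = y)).card) : V.card * s ≤ T.card := by
  calc V.card * s = ∑ _y ∈ V, s := by simp
    _ ≤ ∑ y ∈ V, (T.filter (fun x => π x = y)).card := Finset.sum_le_sum h
    _ = (T.filter (fun x => π x ∈ V)).card := by
        rw [Finset.card_eq_sum_card_fiberwise (f := π) (t := V)]
        · refine Finset.sum_congr rfl fun y hy => ?_
          congr 1
          ext x
          simp only [Finset.mem_filter]
          constructor
          · rintro ⟨a, b⟩; exact ⟨⟨a, b ▸ hy⟩, b⟩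
          · rintro ⟨⟨a, _⟩, b⟩; exact ⟨a, b⟩
        · intro x hx
          simpa using (Finset.mem_filter.1 hx).2
    _ ≤ T.card := Finset.card_filter_le _ _

/-- A coprime tuple of length one is `±1`. -/
lemma unit_of_gcd_one (l : Fin 1 → ℤ) (hc : Finset.univ.gcd l = 1) : l 0 = 1 ∨ l 0 = -1 := by
  have : IsUnit (l 0) := by
    refine isUnit_of_dvd_one ?_
    rw [← hc]
    refine Finset.dvd_gcd fun i _ => ?_
    rw [Subsingleton.elim i 0]
  exact Int.isUnit_iff.1 this

lemma card_le_SD_one {G : Type} [AddCommGroup G] (l : Fin 1 → ℤ) (hc : Finset.univ.gcd l = 1)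
    (X : Finset G) : X.card ≤ (SD l X).card := by
  refine Finset.card_le_card_of_injOn (fun x => l 0 • x) ?_ ?_
  · intro x hx
    exact mem_SD.2 ⟨fun _ => x, fun _ => hx, by simp⟩
  · intro a _ b _ hab
    rcases unit_of_gcd_one l hc with h | h <;> simpa [h] using hab

/-- In a finite abelian group a sum of coprime dilates of `X` is at least as large as `X`. -/
theorem card_le_SD : ∀ (n : ℕ) (l : Fin (n + 1) → ℤ), (∀ i, l i ≠ 0) → Finset.univ.gcd l = 1 →
    ∀ (G : Type) [AddCommGroup G] [Finite G] (X : Finset G), X.card ≤ (SD l X).card := by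
  classical
  intro n
  induction n with
  | zero => intro l _ hc G _ _ X; exact card_le_SD_one l hc X
  | succ n ih =>
    intro l hl hc G _ _ X
    obtain ⟨μ, l', hμ, hl', hc', hs, hcop⟩ := exists_split l hl hc
    obtain ⟨Q, _, _, π, hπ⟩ := exists_primaryProj G μ
    rcases X.eq_empty_or_nonempty with rfl | hX
    · simp
    obtain ⟨y0, hy0, hmax⟩ := exists_max_fiber π X hX
    set s := (X.filter (fun x => π x = y0)).card
    set V : Finset Q := (SD l' (X.image π)).image (fun u => l 0 • y0 + μ • u) with hV
    have hVc : V.card = (SD l' (X.image π)).card :=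
      Finset.card_image_of_injective _ (fun a b hab => hπ.mu_inj (add_left_cancel hab))
    have h1 : (X.image π).card ≤ V.card := hVc ▸ ih l' hl' hc' Q (X.image π)
    have h2 : V.card * s ≤ (SD l X).card := by
      refine mul_card_le_of_fibers π _ V s ?_
      intro w hw
      obtain ⟨u, hu, rfl⟩ := Finset.mem_image.1 hw
      obtain ⟨x, hx, rfl⟩ := (mem_SD_image π).1 hu
      refine hπ.card_le_fiber hcop (z := μ • x) (fun b hb => (Finset.mem_filter.1 hb).2) ?_ ?_
      · intro b hb
        exact (mem_SD_succ hs).2 ⟨b, (Finset.mem_filter.1 hb).1, x, hx, rfl⟩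
      · simp
    calc X.card ≤ (X.image π).card * s := card_le_of_fibers π X s hmax
      _ ≤ V.card * s := by gcongr
      _ ≤ _ := h2

/-- Rigidity in the group inequality: if every combination of elements of `R` that uses some element
of `R'` already lies in the sum of dilates of `R'`, and the latter is no larger than `R'`, then `R`
is no larger than `R'`. -/
theorem exact_structure {n : ℕ} (l : Fin (n + 2) → ℤ) (hl : ∀ i, l i ≠ 0)
    (hc : Finset.univ.gcd l = 1) {G : Type} [AddCommGroup G] [Finite G] {R R' : Finset G}
    (hsub : R' ⊆ R) (hne : R'.Nonempty) (hcard : (SD l R').card ≤ R'.card)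
    (hmix : ∀ g : Fin (n + 2) → G, (∀ i, g i ∈ R) → (∃ i, g i ∈ R') → ∑ i, l i • g i ∈ SD l R') :
    R' = R := by
  classical
  obtain ⟨μ, l', hμ, hl', hc', hs, hcop⟩ := exists_split l hl hc
  obtain ⟨Q, _, _, π, hπ⟩ := exists_primaryProj G μ
  obtain ⟨y0, hy0, hmax⟩ := exists_max_fiber π R' hne
  set s := (R'.filter (fun x => π x = y0)).card with hsdef
  have hspos : 0 < s := by
    obtain ⟨x, hx, rfl⟩ := Finset.mem_image.1 hy0
    exact Finset.card_pos.2 ⟨x, by simp [hx]⟩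
  -- combinations with head `a` and tail in `SD l' Y`
  have hcomb : ∀ (a : G), ∀ Y ⊆ R, a ∈ R → ∀ u ∈ SD l' Y, (a ∈ R' ∨ Y ⊆ R') →
      l 0 • a + μ • u ∈ SD l R' := by
    intro a Y hY ha u hu hor
    obtain ⟨g, hg, rfl⟩ := mem_SD.1 hu
    have := hmix (Fin.cons a g) ?_ ?_
    · simpa [Fin.sum_univ_succ, Finset.smul_sum, hs, mul_smul] using this
    · intro i
      refine Fin.cases ?_ (fun j => ?_) i
      · simpa using ha
      · simpa using hY (hg j)
    · rcases hor with h | h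
      · exact ⟨0, by simpa using h⟩
      · exact ⟨Fin.succ 0, by simpa using h (hg 0)⟩
  have hgen : ∀ (Y B : Finset G) (y : Q), Y ⊆ R → B ⊆ R → (∀ b ∈ B, π b = y) →
      (B ⊆ R' ∨ Y ⊆ R') → (Y.image π).card * B.card ≤ (SD l R').card := by
    intro Y B y hY hB hy hor
    set V : Finset Q := (SD l' (Y.image π)).image (fun u => l 0 • y + μ • u) with hV
    have hVc : V.card = (SD l' (Y.image π)).card :=
      Finset.card_image_of_injective _ (fun a b hab => hπ.mu_inj (add_left_cancel hab))
    have h1 : (Y.image π).card ≤ V.card := hVc ▸ card_le_SD n l' hl' hc' Q (Y.image π)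
    refine le_trans (Nat.mul_le_mul_right _ h1) (mul_card_le_of_fibers π _ V _ ?_)
    intro w hw
    obtain ⟨u, hu, rfl⟩ := Finset.mem_image.1 hw
    obtain ⟨x, hx, rfl⟩ := (mem_SD_image π).1 hu
    refine hπ.card_le_fiber hcop (z := μ • x) hy ?_ ?_
    · intro b hb
      exact hcomb b Y hY (hB hb) x hx (hor.imp (fun h => h hb) id)
    · simp
  have hW1 := hgen R (R'.filter (fun x => π x = y0)) y0 subset_rfl
    ((Finset.filter_subset _ _).trans hsub) (fun b hb => (Finset.mem_filter.1 hb).2)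
    (Or.inl (Finset.filter_subset _ _))
  have hW2 : R'.card ≤ (R'.image π).card * s := card_le_of_fibers π R' s hmax
  have hWle : (R.image π).card ≤ (R'.image π).card :=
    Nat.le_of_mul_le_mul_right (hW1.trans (hcard.trans hW2)) hspos
  have hWeq : R'.image π = R.image π :=
    Finset.eq_of_subset_of_card_le (Finset.image_subset_image hsub) hWle
  have hWpos : 0 < (R'.image π).card := Finset.card_pos.2 (hne.image _)
  have hfibR : ∀ y, (R.filter (fun x => π x = y)).card ≤ s := by
    intro y
    have := hgen R' (R.filter (fun x => π x = y)) y hsub (Finset.filter_subset _ _)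
      (fun b hb => (Finset.mem_filter.1 hb).2) (Or.inr subset_rfl)
    exact Nat.le_of_mul_le_mul_left (this.trans (hcard.trans hW2)) hWpos
  refine Finset.eq_of_subset_of_card_le hsub ?_
  calc R.card ≤ (R.image π).card * s := card_le_of_fibers π R s hfibR
    _ ≤ (SD l R').card := hW1
    _ ≤ R'.card := hcard

/-! ### Almost invariant sets -/

section disp
variable {H : Type} [AddCommGroup H] [DecidableEq H]

/-- The number of points of `Ω` pushed out of `Ω` by the translation `h`. -/
def disp (Ω : Finset H) (h : H) : ℕ := (Ω.filter (fun x => h + x ∉ Ω)).card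

lemma disp_zero (Ω : Finset H) : disp Ω 0 = 0 := by
  simp [disp]

lemma disp_add (Ω : Finset H) (h k : H) : disp Ω (h + k) ≤ disp Ω h + disp Ω k := by
  have h1 : (Ω.filter (fun x => h + k + x ∉ Ω)) ⊆
      (Ω.filter (fun x => k + x ∉ Ω)) ∪ ((Ω.filter (fun x => h + x ∉ Ω)).image (fun y => -k + y)) := by
    intro x hx
    simp only [Finset.mem_filter, Finset.mem_union, Finset.mem_image] at hx ⊢
    by_cases hk : k + x ∈ Ω
    · exact Or.inr ⟨k + x, ⟨hk, by rw [← add_assoc]; exact hx.2⟩, by abel⟩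
    · exact Or.inl ⟨hx.1, hk⟩
  calc disp Ω (h + k) ≤ _ := Finset.card_le_card h1
    _ ≤ _ := Finset.card_union_le _ _
    _ ≤ disp Ω k + disp Ω h := Nat.add_le_add_left Finset.card_image_le _
    _ = _ := add_comm _ _

lemma disp_add_card (Ω : Finset H) (h : H) :
    disp Ω h + (Ω.filter (fun x => h + x ∈ Ω)).card = Ω.card := by
  rw [disp, add_comm]
  exact Finset.card_filter_add_card_filter_not _

lemma disp_neg (Ω : Finset H) (h : H) : disp Ω (-h) = disp Ω h := by
  have key : ∀ h : H, (Ω.filter (fun x => h + x ∈ Ω)).card ≤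
      (Ω.filter (fun x => -h + x ∈ Ω)).card := by
    intro h
    refine Finset.card_le_card_of_injOn (fun x => h + x) ?_ ?_
    · intro x hx
      have hx := Finset.mem_filter.1 hx
      simp [hx.1, hx.2]
    · intro a _ b _ hab
      exact add_left_cancel hab
  have h1 := disp_add_card Ω h
  have h2 := disp_add_card Ω (-h)
  have h3 := key h
  have h4 := key (-h)
  rw [neg_neg] at h4
  omega

lemma disp_sub (Ω : Finset H) (h k : H) : disp Ω (h - k) ≤ disp Ω h + disp Ω k := by
  rw [sub_eq_add_neg]
  exact (disp_add Ω h (-k)).trans_eq (by rw [disp_neg])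

/-- The translations moving at most a proportion `θ` of `Ω` out of `Ω`. -/
noncomputable def Sym [Fintype H] (Ω : Finset H) (θ : ℝ) : Finset H :=
  Finset.univ.filter (fun h => (disp Ω h : ℝ) ≤ θ * Ω.card)

lemma mem_Sym [Fintype H] {Ω : Finset H} {θ : ℝ} {h : H} :
    h ∈ Sym Ω θ ↔ (disp Ω h : ℝ) ≤ θ * Ω.card := by simp [Sym]

lemma Sym_mono [Fintype H] {Ω : Finset H} {θ θ' : ℝ} (h : θ ≤ θ') : Sym Ω θ ⊆ Sym Ω θ' := by
  intro x hx
  rw [mem_Sym] at *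
  exact hx.trans (by gcongr)

/-- Double counting of the pairs of points of `Ω` whose difference is such a period. -/
lemma card_Sym_half [Fintype H] {Ω : Finset H} (hΩ : Ω.Nonempty) :
    (Sym Ω (1 / 2)).card ≤ 2 * Ω.card := by
  have hpos : 0 < Ω.card := hΩ.card_pos
  have h1 : ∀ h ∈ Sym Ω (1 / 2), Ω.card ≤ 2 * (Ω.filter (fun x => h + x ∈ Ω)).card := by
    intro h hh
    rw [mem_Sym] at hh
    have h2 := disp_add_card Ω h
    have h3 : (disp Ω h : ℝ) + ((Ω.filter (fun x => h + x ∈ Ω)).card : ℝ) = Ω.card := by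
      exact_mod_cast h2
    have : (Ω.card : ℝ) ≤ 2 * (Ω.filter (fun x => h + x ∈ Ω)).card := by linarith
    exact_mod_cast this
  have h2 : ∑ h ∈ Sym Ω (1 / 2), (Ω.filter (fun x => h + x ∈ Ω)).card ≤ Ω.card * Ω.card := by
    simp_rw [Finset.card_filter]
    rw [Finset.sum_comm]
    have : ∀ x ∈ Ω, ∑ h ∈ Sym Ω (1 / 2), (if h + x ∈ Ω then 1 else 0) ≤ Ω.card := by
      intro x _
      rw [← Finset.card_filter]
      refine Finset.card_le_card_of_injOn (fun h => h + x) ?_ ?_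
      · intro h hh
        exact (Finset.mem_filter.1 hh).2
      · intro a _ b _ hab
        exact add_right_cancel hab
    calc _ ≤ ∑ x ∈ Ω, Ω.card := Finset.sum_le_sum this
      _ = _ := by simp
  have h3 : (Sym Ω (1 / 2)).card * Ω.card ≤ 2 * (Ω.card * Ω.card) := by
    calc (Sym Ω (1 / 2)).card * Ω.card = ∑ h ∈ Sym Ω (1 / 2), Ω.card := by simp
      _ ≤ ∑ h ∈ Sym Ω (1 / 2), 2 * (Ω.filter (fun x => h + x ∈ Ω)).card := Finset.sum_le_sum h1
      _ = 2 * ∑ h ∈ Sym Ω (1 / 2), (Ω.filter (fun x => h + x ∈ Ω)).card := by rw [Finset.mul_sum]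
      _ ≤ _ := by gcongr
  rw [← mul_assoc] at h3
  exact Nat.le_of_mul_le_mul_right h3 hpos

/-- The additive form of the theorem on sets of doubling less than `3/2`. -/
lemma closure_subset_sub (S : Finset H) (h : ((S + S).card : ℝ) < 3 / 2 * S.card) :
    ∀ x ∈ AddSubgroup.closure ((S - S : Finset H) : Set H), x ∈ S - S := by
  have h' : ((S + S).card : ℚ) < (3 / 2 : ℚ) * S.card := by
    have : (((S + S).card : ℚ) : ℝ) < (((3 / 2 : ℚ) * S.card : ℚ) : ℝ) := by
      push_cast; exact h
    exact_mod_cast this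
  obtain ⟨S', hS'⟩ : ∃ S' : Finset (Multiplicative H), ∀ z, z ∈ S' ↔ z.toAdd ∈ S :=
    ⟨S.map Multiplicative.ofAdd.toEmbedding, fun z => by
      simp only [Finset.mem_map_equiv]; rfl⟩
  have hcardS : S'.card = S.card :=
    Finset.card_equiv Multiplicative.toAdd (fun z => hS' z)
  have hcardSS : (S' * S').card = (S + S).card := by
    refine Finset.card_equiv Multiplicative.toAdd (fun z => ?_)
    rw [Finset.mem_mul, Finset.mem_add]
    constructor
    · rintro ⟨p, hp, q, hq, rfl⟩
      exact ⟨_, (hS' p).1 hp, _, (hS' q).1 hq, rfl⟩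
    · rintro ⟨p, hp, q, hq, hpq⟩
      exact ⟨Multiplicative.ofAdd p, (hS' _).2 hp, Multiplicative.ofAdd q, (hS' _).2 hq,
        Multiplicative.toAdd.injective (by simpa using hpq)⟩
  have h2 : ((S' * S').card : ℚ) < (3 / 2 : ℚ) * S'.card := by rw [hcardS, hcardSS]; exact h'
  have e : ∀ z : Multiplicative H, z ∈ Finset.invMulSubgroup S' h2 ↔ z.toAdd ∈ S - S := by
    intro z
    rw [← SetLike.mem_coe, Finset.invMulSubgroup_eq_mul_inv, Set.mem_mul, Finset.mem_sub]
    constructor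
    · rintro ⟨p, hp, q, hq, rfl⟩
      refine ⟨_, (hS' p).1 hp, q⁻¹.toAdd, (hS' _).1 (Finset.mem_inv'.1 hq), ?_⟩
      simp
    · rintro ⟨p, hp, q, hq, hpq⟩
      refine ⟨Multiplicative.ofAdd p, (hS' _).2 hp, (Multiplicative.ofAdd q)⁻¹,
        Finset.mem_inv'.2 (by rw [inv_inv]; exact (hS' _).2 hq), ?_⟩
      exact Multiplicative.toAdd.injective (by simpa [sub_eq_add_neg] using hpq)
  have key : ∀ a b c d, a ∈ S → b ∈ S → c ∈ S → d ∈ S → (a - b) + (c - d) ∈ S - S := by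
    intro a b c d ha hb hc hd
    have h1 := (Finset.invMulSubgroup S' h2).mul_mem
      ((e (Multiplicative.ofAdd (a - b))).2 (Finset.sub_mem_sub ha hb))
      ((e (Multiplicative.ofAdd (c - d))).2 (Finset.sub_mem_sub hc hd))
    exact (e _).1 h1
  intro x hx
  have hne : S.Nonempty := by
    by_contra hS
    rw [Finset.not_nonempty_iff_eq_empty] at hS
    simp [hS] at h
  obtain ⟨s, hs⟩ := hne
  refine AddSubgroup.closure_induction (p := fun x _ => x ∈ S - S) ?_ ?_ ?_ ?_ hx
  · intro x hx; exact hx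
  · exact Finset.mem_sub.2 ⟨s, hs, s, hs, sub_self s⟩
  · intro x y _ _ hx hy
    obtain ⟨a, ha, b, hb, rfl⟩ := Finset.mem_sub.1 hx
    obtain ⟨c, hc, d, hd, rfl⟩ := Finset.mem_sub.1 hy
    exact key a b c d ha hb hc hd
  · intro x _ hx
    obtain ⟨a, ha, b, hb, rfl⟩ := Finset.mem_sub.1 hx
    exact Finset.mem_sub.2 ⟨b, hb, a, ha, by abel⟩

end disp

/-- If `Ω` is almost invariant under a set `D` of translations which is not much smaller than `Ω`,
then it is almost invariant under the whole group generated by `D`. Otherwise the sets of almost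
periods at the scales `η, 2η, 4η, …` would grow geometrically; where they do not, they have doubling
less than `3/2`, so their differences form a subgroup. -/
theorem disp_closure (c η' : ℝ) (hη' : 0 < η') : ∃ η : ℝ, 0 < η ∧
    ∀ (H : Type) [AddCommGroup H] [Finite H] [DecidableEq H] (Ω D : Finset H), Ω.Nonempty →
      (∀ d ∈ D, (disp Ω d : ℝ) ≤ η * Ω.card) → (Ω.card : ℝ) ≤ c * D.card →
      ∀ h ∈ AddSubgroup.closure (D : Set H), (disp Ω h : ℝ) ≤ η' * Ω.card := by
  obtain ⟨J, hJ⟩ := pow_unbounded_of_one_lt (2 * c) (by norm_num : (1 : ℝ) < 3 / 2)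
  have hm : 0 < min (1 / 2) η' := lt_min (by norm_num) hη'
  refine ⟨min (1 / 2) η' / 2 ^ J, by positivity, ?_⟩
  intro H _ _ _ Ω D hΩ hD hc h hh
  set η := min (1 / 2) η' / 2 ^ J with hη
  have hη0 : 0 < η := by positivity
  cases nonempty_fintype H
  have hJη : (2 : ℝ) ^ J * η = min (1 / 2) η' := by rw [hη]; field_simp
  have hle : ∀ j ≤ J, (2 : ℝ) ^ j * η ≤ min (1 / 2) η' := by
    intro j hj
    rw [← hJη]
    gcongr
    norm_num
  have hDS : ∀ j, D ⊆ Sym Ω (2 ^ j * η) := by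
    intro j d hd
    refine mem_Sym.2 ((hD d hd).trans ?_)
    gcongr
    nlinarith [one_le_pow₀ (by norm_num : (1 : ℝ) ≤ 2) (n := j)]
  have h0S : ∀ j, (0 : H) ∈ Sym Ω (2 ^ j * η) := by
    intro j
    rw [mem_Sym, disp_zero]; simp; positivity
  have hΩpos : (0 : ℝ) < Ω.card := by exact_mod_cast hΩ.card_pos
  -- At some scale the set of almost periods grows by a factor less than `3/2`.
  have hex : ∃ j < J, ((Sym Ω (2 ^ (j + 1) * η)).card : ℝ) < 3 / 2 * (Sym Ω (2 ^ j * η)).card := by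
    by_contra hcon
    push Not at hcon
    have hgrow : ∀ j ≤ J, (3 / 2 : ℝ) ^ j * (Sym Ω (2 ^ 0 * η)).card ≤
        (Sym Ω (2 ^ j * η)).card := by
      intro j
      induction j with
      | zero => intro _; simp
      | succ j ih =>
        intro hj
        have h1 := ih (by omega)
        have h2 := hcon j (by omega)
        rw [pow_succ]
        nlinarith
    have h1 := hgrow J le_rfl
    have h2 : ((Sym Ω (2 ^ J * η)).card : ℝ) ≤ 2 * Ω.card := by
      have : (Sym Ω (2 ^ J * η)).card ≤ 2 * Ω.card :=
        (Finset.card_le_card (Sym_mono ((hle J le_rfl).trans (min_le_left _ _)))).trans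
          (card_Sym_half hΩ)
      exact_mod_cast this
    have h3 : (D.card : ℝ) ≤ (Sym Ω (2 ^ 0 * η)).card := by
      exact_mod_cast Finset.card_le_card (hDS 0)
    have h4 : (0 : ℝ) < (Sym Ω (2 ^ 0 * η)).card := by
      exact_mod_cast Finset.card_pos.2 ⟨0, h0S 0⟩
    rcases le_or_gt c 0 with hc0 | hc0
    · have : c * D.card ≤ 0 := mul_nonpos_of_nonpos_of_nonneg hc0 (by positivity)
      linarith
    · have h5 := mul_lt_mul_of_pos_right hJ h4
      have h6 := mul_le_mul_of_nonneg_left h3 hc0.le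
      have h7 := h5.trans_le (h1.trans (h2.trans (mul_le_mul_of_nonneg_left hc zero_le_two)))
      rw [mul_assoc] at h7
      exact absurd h6 (not_le.2 (lt_of_mul_lt_mul_left h7 zero_le_two))
  obtain ⟨j, hj, hlt⟩ := hex
  set S := Sym Ω (2 ^ j * η) with hS
  have hSS : S + S ⊆ Sym Ω (2 ^ (j + 1) * η) := by
    intro x hx
    obtain ⟨a, ha, b, hb, rfl⟩ := Finset.mem_add.1 hx
    rw [hS, mem_Sym] at ha hb
    rw [mem_Sym]
    have : (disp Ω (a + b) : ℝ) ≤ disp Ω a + disp Ω b := by exact_mod_cast disp_add Ω a b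
    rw [pow_succ]
    linarith
  have hSmS : S - S ⊆ Sym Ω (2 ^ (j + 1) * η) := by
    intro x hx
    obtain ⟨a, ha, b, hb, rfl⟩ := Finset.mem_sub.1 hx
    rw [hS, mem_Sym] at ha hb
    rw [mem_Sym]
    have : (disp Ω (a - b) : ℝ) ≤ disp Ω a + disp Ω b := by exact_mod_cast disp_sub Ω a b
    rw [pow_succ]
    linarith
  have hlt' : ((S + S).card : ℝ) < 3 / 2 * S.card :=
    lt_of_le_of_lt (by exact_mod_cast Finset.card_le_card hSS) hlt
  have hcl := closure_subset_sub S hlt' h (AddSubgroup.closure_mono (fun d hd => by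
    exact Finset.mem_sub.2 ⟨d, hDS j hd, 0, h0S j, sub_zero d⟩) hh)
  have := mem_Sym.1 (hSmS hcl)
  refine this.trans ?_
  gcongr
  exact (hle (j + 1) (by omega)).trans (min_le_right _ _)

/-! ### Near equality in the group inequality -/

/-- The fibre of `X` over `y`. -/
def fib {G Q : Type} [DecidableEq Q] (π : G → Q) (X : Finset G) (y : Q) : Finset G :=
  X.filter (fun x => π x = y)

lemma mem_fib {G Q : Type} [DecidableEq Q] {π : G → Q} {X : Finset G} {y : Q} {x : G} :
    x ∈ fib π X y ↔ x ∈ X ∧ π x = y := by simp [fib]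

lemma sum_fib {G Q : Type} [DecidableEq Q] [DecidableEq G] (π : G → Q) (T : Finset G)
    (V : Finset Q) : ∑ y ∈ V, (fib π T y).card = (T.filter (fun x => π x ∈ V)).card := by
  rw [Finset.card_eq_sum_card_fiberwise (f := π) (t := V)]
  · refine Finset.sum_congr rfl fun y hy => ?_
    congr 1
    ext x
    simp only [Finset.mem_filter, mem_fib]
    constructor
    · rintro ⟨a, b⟩; exact ⟨⟨a, b ▸ hy⟩, b⟩
    · rintro ⟨⟨a, _⟩, b⟩; exact ⟨a, b⟩
  · intro x hx
    simpa using (Finset.mem_filter.1 hx).2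

lemma sum_fib_le {G Q : Type} [DecidableEq Q] [DecidableEq G] (π : G → Q) (T : Finset G)
    (V : Finset Q) : ∑ y ∈ V, (fib π T y).card ≤ T.card := by
  rw [sum_fib]; exact Finset.card_filter_le _ _

lemma sum_fib_image {G Q : Type} [DecidableEq Q] [DecidableEq G] (π : G → Q) (T : Finset G) :
    ∑ y ∈ T.image π, (fib π T y).card = T.card := by
  rw [sum_fib]
  congr 1
  exact Finset.filter_true_of_mem (fun x hx => Finset.mem_image_of_mem _ hx)

/-- In a cyclic group an element has at most `|m|` preimages under multiplication by `m`. -/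
lemma card_le_smul_image {G : Type} [AddCommGroup G] [Finite G] [IsAddCyclic G] [DecidableEq G]
    {m : ℤ} (hm : m ≠ 0) (X : Finset G) :
    X.card ≤ m.natAbs * (X.image (fun x => m • x)).card := by
  classical
  cases nonempty_fintype G
  refine Finset.card_le_mul_card_image X _ (fun y hy => ?_)
  obtain ⟨x0, hx0, rfl⟩ := Finset.mem_image.1 hy
  refine le_trans ?_ (IsAddCyclic.card_nsmul_eq_zero_le (α := G) (Int.natAbs_pos.2 hm))
  refine Finset.card_le_card_of_injOn (fun x => x - x0) ?_ ?_
  · intro x hx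
    have hx := (Finset.mem_filter.1 hx).2
    have h0 : m • (x - x0) = 0 := by rw [smul_sub, hx, sub_self]
    have : m.natAbs • (x - x0) = 0 := by
      rcases Int.natAbs_eq m with h | h
      · rw [h, natCast_zsmul] at h0; exact h0
      · rw [h, neg_smul, natCast_zsmul, neg_eq_zero] at h0; exact h0
    simpa using this
  · intro a _ b _ hab
    exact sub_left_injective hab

/-- The situation in which `X` is almost extremal for the group inequality, together with the data
of its proof: the fibre over `y0` is the largest fibre of `X` for the projection `π` that kills the
`μ`-primary part. -/
structure NearEq {n : ℕ} {G Q : Type} [AddCommGroup G] [AddCommGroup Q] [DecidableEq Q]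
    (l : Fin (n + 2) → ℤ) (μ : ℤ) (l' : Fin (n + 1) → ℤ) (π : G →+ Q) (X : Finset G) (y0 : Q)
    (δ : ℝ) : Prop where
  l0 : l 0 ≠ 0
  l1 : l 1 ≠ 0
  l'0 : ∀ j, l' j ≠ 0
  gcd : Finset.univ.gcd l' = 1
  split : ∀ j, l j.succ = μ * l' j
  cop : IsCoprime (l 0) μ
  proj : IsPrimaryProj μ π
  mem : y0 ∈ X.image π
  max : ∀ y, (fib π X y).card ≤ (fib π X y0).card
  dpos : 0 < δ
  dle : δ ≤ 1 / 10
  small : ((SD l X).card : ℝ) ≤ (1 + δ) * X.card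

/-- The set of values `μ • u` for `u` in the sum of dilates of the projection of `X`. -/
noncomputable def tailV {n : ℕ} {G Q : Type} [AddCommGroup G] [AddCommGroup Q] [DecidableEq Q]
    (μ : ℤ) (l' : Fin n → ℤ) (π : G →+ Q) (X : Finset G) : Finset Q :=
  (SD l' (X.image π)).image (fun u => μ • u)

namespace NearEq

set_option linter.unusedSectionVars false

variable {n : ℕ} {G Q : Type} [AddCommGroup G] [AddCommGroup Q] [DecidableEq Q] [DecidableEq G]
  {l : Fin (n + 2) → ℤ} {μ : ℤ} {l' : Fin (n + 1) → ℤ} {π : G →+ Q} {X : Finset G} {y0 : Q} {δ : ℝ}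

lemma mem_tailV {v : Q} :
    v ∈ tailV μ l' π X ↔ ∃ x ∈ SD l' X, π (μ • x) = v := by
  simp only [tailV, Finset.mem_image, mem_SD_image]
  constructor
  · rintro ⟨u, ⟨x, hx, rfl⟩, rfl⟩; exact ⟨x, hx, by simp⟩
  · rintro ⟨x, hx, rfl⟩; exact ⟨_, ⟨x, hx, rfl⟩, by simp⟩

lemma s_pos (h : NearEq l μ l' π X y0 δ) : 0 < (fib π X y0).card := by
  obtain ⟨x, hx, hxy⟩ := Finset.mem_image.1 h.mem
  exact Finset.card_pos.2 ⟨x, mem_fib.2 ⟨hx, hxy⟩⟩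

/-- Adding one element of the tail sum to the dilate of a fibre of `X` does not shrink the fibre,
because multiplication by `l 0` is injective on it. -/
lemma fib_le (h : NearEq l μ l' π X y0 δ) (y : Q) {v : Q} (hv : v ∈ tailV μ l' π X) :
    (fib π X y).card ≤ (fib π (SD l X) (l 0 • y + v)).card := by
  obtain ⟨x, hx, rfl⟩ := mem_tailV.1 hv
  refine h.proj.card_le_fiber h.cop (z := μ • x) (fun b hb => (mem_fib.1 hb).2) ?_ rfl
  intro b hb
  exact (mem_SD_succ h.split).2 ⟨b, (mem_fib.1 hb).1, x, hx, rfl⟩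

lemma sub_le (h : NearEq l μ l' π X y0 δ) [Finite Q] (Y : Finset Q) :
    Y.card ≤ ((SD l' Y).image (fun u => μ • u)).card := by
  rw [Finset.card_image_of_injective _ h.proj.mu_inj]
  exact card_le_SD n l' h.l'0 h.gcd Q Y

lemma W_le_V (h : NearEq l μ l' π X y0 δ)
    [Finite Q] : (X.image π).card ≤ (tailV μ l' π X).card := h.sub_le _

lemma V_pos (h : NearEq l μ l' π X y0 δ) [Finite Q] : 0 < (tailV μ l' π X).card :=
  lt_of_lt_of_le (Finset.card_pos.2 ⟨_, h.mem⟩) h.W_le_V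

lemma X_le (h : NearEq l μ l' π X y0 δ) : X.card ≤ (X.image π).card * (fib π X y0).card :=
  card_le_of_fibers π X _ h.max

/-- The sum of dilates is hardly larger than the part guaranteed by the proof of the inequality. -/
lemma T_le (h : NearEq l μ l' π X y0 δ) [Finite Q] : ((SD l X).card : ℝ) ≤
    (1 + δ) * ((fib π X y0).card * (tailV μ l' π X).card) := by
  refine h.small.trans ?_
  have := h.dpos
  have h1 : (X.card : ℝ) ≤ (X.image π).card * (fib π X y0).card := by exact_mod_cast h.X_le
  have h2 : ((X.image π).card : ℝ) ≤ (tailV μ l' π X).card := by exact_mod_cast h.W_le_V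
  have h3 : (X.card : ℝ) ≤ (fib π X y0).card * (tailV μ l' π X).card := by
    rw [mul_comm]; exact h1.trans (by gcongr)
  gcongr

/-- Fibres of the sum of dilates over points outside the translate of `V` by `l 0 • y0` come in
addition to those over this translate. -/
lemma sum_fibers_le (Z : Finset Q)
    (hZ : ∀ z ∈ Z, z - l 0 • y0 ∉ tailV μ l' π X) :
    ∑ v ∈ tailV μ l' π X, (fib π (SD l X) (l 0 • y0 + v)).card +
      ∑ z ∈ Z, (fib π (SD l X) z).card ≤ (SD l X).card := by
  have h1 : ∑ v ∈ tailV μ l' π X, (fib π (SD l X) (l 0 • y0 + v)).card =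
      ∑ z ∈ (tailV μ l' π X).image (fun v => l 0 • y0 + v), (fib π (SD l X) z).card := by
    rw [Finset.sum_image]
    intro a _ b _ hab
    exact add_left_cancel hab
  rw [h1, ← Finset.sum_union]
  · exact sum_fib_le π _ _
  · rw [Finset.disjoint_left]
    intro z hz hz'
    obtain ⟨v, hv, rfl⟩ := Finset.mem_image.1 hz
    exact hZ _ hz' (by simpa using hv)

/-- The fibres over the translate of `V` already contribute `s |V|` elements, `s` being the size of
the maximal fibre; all others are surplus. -/
lemma card_tail_le (h : NearEq l μ l' π X y0 δ)
    (Z : Finset Q) (hZ : ∀ z ∈ Z, z - l 0 • y0 ∉ tailV μ l' π X) :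
    (fib π X y0).card * (tailV μ l' π X).card + ∑ z ∈ Z, (fib π (SD l X) z).card ≤
      (SD l X).card := by
  refine le_trans (Nat.add_le_add_right ?_ _) (sum_fibers_le Z hZ)
  calc (fib π X y0).card * (tailV μ l' π X).card = ∑ v ∈ tailV μ l' π X, (fib π X y0).card := by
        simp [mul_comm]
    _ ≤ _ := Finset.sum_le_sum fun v hv => h.fib_le y0 hv

/-- At most half of the fibres exceed the guaranteed size by a proportion `2 δ`. -/
lemma few_large (h : NearEq l μ l' π X y0 δ) [Finite Q] :
    2 * (((tailV μ l' π X).filter (fun v => (1 + 2 * δ) * (fib π X y0).card <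
      (fib π (SD l X) (l 0 • y0 + v)).card)).card : ℝ) ≤ (tailV μ l' π X).card := by
  set V := tailV μ l' π X
  set s : ℝ := ((fib π X y0).card : ℝ) with hs
  have hspos : 0 < s := Nat.cast_pos.2 h.s_pos
  have h1 : (∑ v ∈ V, ((fib π (SD l X) (l 0 • y0 + v)).card : ℝ)) ≤ (SD l X).card := by
    have := sum_fibers_le (l := l) (μ := μ) (l' := l') (π := π) (X := X) (y0 := y0) ∅ (by simp)
    simp only [Finset.sum_empty, add_zero] at this
    exact_mod_cast this
  have h2 : ∑ v ∈ V, (s + if (1 + 2 * δ) * s < (fib π (SD l X) (l 0 • y0 + v)).card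
      then 2 * δ * s else 0) ≤ ∑ v ∈ V, ((fib π (SD l X) (l 0 • y0 + v)).card : ℝ) := by
    refine Finset.sum_le_sum fun v hv => ?_
    split_ifs with hc
    · linarith
    · have : s ≤ (fib π (SD l X) (l 0 • y0 + v)).card := Nat.cast_le.2 (h.fib_le y0 hv)
      linarith
  rw [Finset.sum_add_distrib, ← Finset.sum_filter] at h2
  simp only [Finset.sum_const, nsmul_eq_mul] at h2
  have h3 := h.T_le
  have h4 : (2 * δ * s) * ((V.filter (fun v => (1 + 2 * δ) * s <
      (fib π (SD l X) (l 0 • y0 + v)).card)).card : ℝ) ≤ δ * s * V.card := by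
    have : ((SD l X).card : ℝ) ≤ (1 + δ) * (s * V.card) := h3
    linarith
  have hd := h.dpos
  have h5 : 0 < δ * s := by positivity
  have : δ * s * (2 * ((V.filter (fun v => (1 + 2 * δ) * s <
      (fib π (SD l X) (l 0 • y0 + v)).card)).card : ℝ)) ≤ δ * s * V.card := by linarith
  exact le_of_mul_le_mul_left this h5

/-- Near equality in the group inequality makes `X` almost as large as `s |V|`. -/
lemma X_ge (h : NearEq l μ l' π X y0 δ)
    [Finite Q] : (1 - δ) * ((fib π X y0).card * (tailV μ l' π X).card) ≤ X.card := by
  have h1 : ((fib π X y0).card * (tailV μ l' π X).card : ℝ) ≤ (SD l X).card := by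
    have := h.card_tail_le ∅ (by simp)
    simp only [Finset.sum_empty, add_zero] at this
    exact_mod_cast this
  have h2 := h1.trans h.small
  have := h.dpos
  have := h.dle
  have h3 := mul_le_mul_of_nonneg_left h2 (by linarith : (0 : ℝ) ≤ 1 - δ)
  refine h3.trans ?_
  have hX : (0 : ℝ) ≤ X.card := by positivity
  have h4 : (1 - δ) * (1 + δ) ≤ 1 := by nlinarith
  calc (1 - δ) * ((1 + δ) * X.card) = ((1 - δ) * (1 + δ)) * X.card := by ring
    _ ≤ 1 * X.card := by gcongr
    _ = X.card := one_mul _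

/-- The elements of the quotient whose fibre has nearly the maximal size. -/
noncomputable def Wbig (π : G →+ Q) (X : Finset G) (y0 : Q) (θ : ℝ) : Finset Q :=
  (X.image π).filter (fun y => (1 - θ) * (fib π X y0).card ≤ (fib π X y).card)

/-- Few fibres of `X` are much smaller than the maximal one. -/
lemma card_compl_Wbig (h : NearEq l μ l' π X y0 δ) [Finite Q] {θ : ℝ} :
    θ * ((X.image π \ Wbig π X y0 θ).card : ℝ) ≤ δ * (tailV μ l' π X).card := by
  set s : ℝ := ((fib π X y0).card : ℝ) with hs
  have hspos : 0 < s := Nat.cast_pos.2 h.s_pos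
  have h1 : (X.card : ℝ) = ∑ y ∈ X.image π, ((fib π X y).card : ℝ) := by
    exact_mod_cast (sum_fib_image π X).symm
  have h2 : ∑ y ∈ X.image π, ((fib π X y).card : ℝ) ≤
      ∑ y ∈ X.image π, (s - if y ∈ X.image π \ Wbig π X y0 θ then θ * s else 0) := by
    refine Finset.sum_le_sum fun y hy => ?_
    split_ifs with hc
    · simp only [Wbig, Finset.mem_sdiff, Finset.mem_filter, not_and, not_le] at hc
      have := hc.2 hy
      linarith
    · have : ((fib π X y).card : ℝ) ≤ s := Nat.cast_le.2 (h.max y)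
      linarith
  rw [Finset.sum_sub_distrib, ← Finset.sum_filter, Finset.filter_mem_eq_inter,
    Finset.inter_eq_right.2 Finset.sdiff_subset] at h2
  simp only [Finset.sum_const, nsmul_eq_mul] at h2
  have h3 := h.X_ge
  have h4 : ((X.image π).card : ℝ) ≤ (tailV μ l' π X).card := by exact_mod_cast h.W_le_V
  have h5 := mul_le_mul_of_nonneg_left h4 hspos.le
  have : s * (θ * ((X.image π \ Wbig π X y0 θ).card : ℝ)) ≤ s * (δ * (tailV μ l' π X).card) := by
    have : (1 - δ) * (s * (tailV μ l' π X).card) ≤ X.card := h3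
    linarith
  exact le_of_mul_le_mul_left this hspos

/-- The fibres of nearly maximal size lie over a set more than half as large as `V`. -/
lemma card_Wbig (h : NearEq l μ l' π X y0 δ) [Finite Q] {θ : ℝ} (hθ : 0 < θ) (hδθ : δ ≤ θ / 4) :
    (tailV μ l' π X).card < 2 * ((Wbig π X y0 θ).card : ℝ) := by
  have h1 := h.card_compl_Wbig (θ := θ)
  have hV : (0 : ℝ) < (tailV μ l' π X).card := by exact_mod_cast h.V_pos
  have h2 : ((X.image π \ Wbig π X y0 θ).card : ℝ) + (Wbig π X y0 θ).card = (X.image π).card := by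
    exact_mod_cast Finset.card_sdiff_add_card_eq_card (Finset.filter_subset _ _)
  have h3 : (1 - δ) * (tailV μ l' π X).card ≤ ((X.image π).card : ℝ) := by
    have h4 := h.X_ge
    have h5 : (X.card : ℝ) ≤ (X.image π).card * (fib π X y0).card := by exact_mod_cast h.X_le
    have hspos : (0 : ℝ) < (fib π X y0).card := by exact_mod_cast h.s_pos
    refine le_of_mul_le_mul_left ?_ hspos
    linarith
  have h4 : ((X.image π \ Wbig π X y0 θ).card : ℝ) ≤ (tailV μ l' π X).card / 4 := by
    refine le_of_mul_le_mul_left ?_ hθ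
    refine h1.trans ?_
    nlinarith
  have := h.dle
  nlinarith

/-- Most of `X` lies over `Wbig`. -/
lemma mass_Wbig (h : NearEq l μ l' π X y0 δ) [Finite Q] {θ : ℝ} (hθ : 0 < θ) :
    (1 - 2 * (δ / θ)) * (X.card : ℝ) ≤
      (X.filter (fun x => π x ∈ Wbig π X y0 θ)).card := by
  set s : ℝ := ((fib π X y0).card : ℝ) with hs
  have hspos : 0 < s := Nat.cast_pos.2 h.s_pos
  have h1 : (X.card : ℝ) = ((X.filter (fun x => π x ∈ Wbig π X y0 θ)).card : ℝ) +
      ((X.filter (fun x => π x ∈ X.image π \ Wbig π X y0 θ)).card : ℝ) := by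
    have := sum_fib_image π X
    rw [← Finset.sum_sdiff (Finset.filter_subset _ _ : Wbig π X y0 θ ⊆ X.image π), sum_fib, sum_fib]
      at this
    rw [add_comm]
    exact_mod_cast this.symm
  have h2 : ((X.filter (fun x => π x ∈ X.image π \ Wbig π X y0 θ)).card : ℝ) ≤
      s * (X.image π \ Wbig π X y0 θ).card := by
    rw [← sum_fib]
    push_cast
    calc _ ≤ ∑ y ∈ X.image π \ Wbig π X y0 θ, s := by
          refine Finset.sum_le_sum fun y _ => ?_
          exact Nat.cast_le.2 (h.max y)
      _ = _ := by simp [mul_comm]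
  have h3 := h.card_compl_Wbig (θ := θ)
  have h3' : ((X.image π \ Wbig π X y0 θ).card : ℝ) ≤ δ / θ * (tailV μ l' π X).card := by
    rw [div_mul_eq_mul_div, le_div_iff₀ hθ, mul_comm]; exact h3
  have h4 := h.X_ge
  have hdle := h.dle
  have h5 : s * (tailV μ l' π X).card ≤ 2 * X.card := by
    have : 0 ≤ s * (tailV μ l' π X).card := by positivity
    have h4' : (1 - δ) * (s * (tailV μ l' π X).card) ≤ X.card := h4
    nlinarith
  have hdp := h.dpos
  have h6 : s * (X.image π \ Wbig π X y0 θ).card ≤ δ / θ * (2 * X.card) := by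
    calc s * (X.image π \ Wbig π X y0 θ).card ≤ s * (δ / θ * (tailV μ l' π X).card) := by gcongr
      _ = δ / θ * (s * (tailV μ l' π X).card) := by ring
      _ ≤ _ := by gcongr
  linarith

end NearEq

/-! ### Robust sets -/

/-- No coset of a proper subgroup contains more than a proportion `1 - ε` of `X`. -/
def Robust {G : Type} [AddCommGroup G] (X : Finset G) (ε : ℝ) : Prop :=
  ∀ H : AddSubgroup G, H ≠ ⊤ → ∀ a : G, ∀ Y ⊆ X, (∀ y ∈ Y, y - a ∈ H) →
    (Y.card : ℝ) ≤ (1 - ε) * X.card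

/-- The conclusion of `disp_closure` for one group: near-invariance with error `η` under a set of
translations at least `1/c` times as large passes, with error `η'`, to the group it generates. -/
def PropDisp (H : Type) [AddCommGroup H] [DecidableEq H] (c η η' : ℝ) : Prop :=
  ∀ Ω D : Finset H, Ω.Nonempty → (∀ d ∈ D, (disp Ω d : ℝ) ≤ η * Ω.card) →
    (Ω.card : ℝ) ≤ c * D.card →
    ∀ h ∈ AddSubgroup.closure (D : Set H), (disp Ω h : ℝ) ≤ η' * Ω.card

namespace NearEq

set_option linter.unusedSectionVars false

variable {n : ℕ} {G Q : Type} [AddCommGroup G] [AddCommGroup Q] [DecidableEq Q] [DecidableEq G]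
  {l : Fin (n + 2) → ℤ} {μ : ℤ} {l' : Fin (n + 1) → ℤ} {π : G →+ Q} {X : Finset G} {y0 : Q} {δ : ℝ}

lemma X_pos (h : NearEq l μ l' π X y0 δ) : (0 : ℝ) < X.card := by
  obtain ⟨x, hx, -⟩ := Finset.mem_image.1 h.mem
  exact Nat.cast_pos.2 (Finset.card_pos.2 ⟨x, hx⟩)

/-- A fibre of at least half the maximal size moves `V` only slightly: each point pushed out of `V`
gives an extra fibre of the sum of dilates. -/
lemma disp_V_of_large (h : NearEq l μ l' π X y0 δ) [Finite Q] (y : Q)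
    (hy : ((fib π X y0).card : ℝ) ≤ 2 * (fib π X y).card) :
    (disp (tailV μ l' π X) (l 0 • (y - y0)) : ℝ) ≤ 2 * δ * (tailV μ l' π X).card := by
  set V := tailV μ l' π X with hV
  set s : ℝ := ((fib π X y0).card : ℝ) with hs
  have hspos : 0 < s := Nat.cast_pos.2 h.s_pos
  set B := V.filter (fun v => l 0 • (y - y0) + v ∉ V) with hB
  have h1 := h.card_tail_le (B.image (fun v => l 0 • y + v)) (by
    intro z hz
    obtain ⟨v, hv, rfl⟩ := Finset.mem_image.1 hz
    have := (Finset.mem_filter.1 hv).2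
    rw [smul_sub] at this
    convert this using 2
    abel)
  rw [Finset.sum_image (fun a _ b _ hab => add_left_cancel hab)] at h1
  have h2 : (disp V (l 0 • (y - y0)) : ℝ) * (s / 2) ≤
      ∑ v ∈ B, ((fib π (SD l X) (l 0 • y + v)).card : ℝ) := by
    calc (disp V (l 0 • (y - y0)) : ℝ) * (s / 2) = ∑ v ∈ B, s / 2 := by
          rw [Finset.sum_const, nsmul_eq_mul]; rfl
      _ ≤ _ := by
          refine Finset.sum_le_sum fun v hv => ?_
          have h3 : ((fib π X y).card : ℝ) ≤ (fib π (SD l X) (l 0 • y + v)).card :=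
            Nat.cast_le.2 (h.fib_le y (Finset.mem_filter.1 hv).1)
          linarith
  have h3 := h.T_le
  have h4 : s * V.card + ∑ v ∈ B, ((fib π (SD l X) (l 0 • y + v)).card : ℝ) ≤
      (SD l X).card := by
    have := (Nat.cast_le (α := ℝ)).2 h1
    push_cast at this
    exact this
  have h5 : (SD l X).card ≤ (1 + δ) * (s * V.card) := h3
  have h6 : s * (disp V (l 0 • (y - y0)) : ℝ) ≤ s * (2 * δ * V.card) := by linarith
  exact le_of_mul_le_mul_left h6 hspos

lemma mem_Wbig {θ : ℝ} {y : Q} : y ∈ Wbig π X y0 θ ↔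
    y ∈ X.image π ∧ (1 - θ) * (fib π X y0).card ≤ (fib π X y).card := by
  simp [Wbig]

/-- The set `V` is almost invariant under all multiples of `l 0`. -/
lemma disp_V (h : NearEq l μ l' π X y0 δ)
    [Finite Q] [Finite G] [IsAddCyclic Q] {θ ε δ1 ηP : ℝ} (hθ : 0 < θ) (hθ2 : θ ≤ 1 / 2)
    (hδθ : δ ≤ θ / 4) (hε : 2 * (δ / θ) < ε) (hrob : Robust X ε)
    (hP : PropDisp Q (2 * (l 0).natAbs) ηP δ1) (hδP : 2 * δ ≤ ηP) (q : Q) :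
    (disp (tailV μ l' π X) (l 0 • q) : ℝ) ≤ δ1 * (tailV μ l' π X).card := by
  set V := tailV μ l' π X with hV
  set D := (Wbig π X y0 θ).image (fun y => l 0 • (y - y0)) with hD
  have hs0 : (0 : ℝ) ≤ (fib π X y0).card := by positivity
  have h1 : ∀ d ∈ D, (disp V d : ℝ) ≤ ηP * V.card := by
    intro d hd
    obtain ⟨y, hy, rfl⟩ := Finset.mem_image.1 hd
    refine (h.disp_V_of_large y ?_).trans (by gcongr)
    have := (mem_Wbig.1 hy).2
    nlinarith
  have h2 : (V.card : ℝ) ≤ 2 * (l 0).natAbs * D.card := by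
    have h3 := h.card_Wbig hθ hδθ
    have h4 : (Wbig π X y0 θ).card ≤ (l 0).natAbs * D.card := by
      have h5 := card_le_smul_image h.l0 ((Wbig π X y0 θ).image (fun y => y - y0))
      rw [Finset.card_image_of_injective _ sub_left_injective, Finset.image_image] at h5
      exact h5
    have h4' : ((Wbig π X y0 θ).card : ℝ) ≤ (l 0).natAbs * D.card := by exact_mod_cast h4
    linarith
  have h3 := hP V D (Finset.card_pos.1 h.V_pos) h1 h2
  refine h3 _ ?_
  -- By robustness the preimage of the group generated by `D` is everything, since a translate of
  -- it contains the part of `X` over `Wbig`.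
  let f : G →+ Q := (zsmulAddGroupHom (l 0)).comp π
  have hf : ∀ g, f g = l 0 • π g := fun g => rfl
  set H := (AddSubgroup.closure (D : Set Q)).comap f with hH
  have hHt : H = ⊤ := by
    by_contra hne
    obtain ⟨x0, hx0, hxy⟩ := Finset.mem_image.1 h.mem
    have h5 := hrob H hne x0 (X.filter (fun x => π x ∈ Wbig π X y0 θ)) (Finset.filter_subset _ _) (by
      intro x hx
      rw [hH, AddSubgroup.mem_comap, hf, map_sub, hxy]
      exact AddSubgroup.subset_closure
        (Finset.mem_image_of_mem _ (Finset.mem_filter.1 hx).2))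
    have h6 := h.mass_Wbig hθ
    have := h.X_pos
    nlinarith
  obtain ⟨g, rfl⟩ := h.proj.surj q
  have : g ∈ H := by rw [hHt]; trivial
  rwa [hH, AddSubgroup.mem_comap] at this

/-- There is a typical `v` in any subset of `V` containing more than half of it. -/
lemma exists_typical (h : NearEq l μ l' π X y0 δ)
    [Finite Q] (V' : Finset Q) (hV' : V' ⊆ tailV μ l' π X)
    (hc : ((tailV μ l' π X).card : ℝ) < 2 * V'.card) :
    ∃ v ∈ V', ((fib π (SD l X) (l 0 • y0 + v)).card : ℝ) ≤ (1 + 2 * δ) * (fib π X y0).card := by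
  by_contra hcon
  push Not at hcon
  have h1 := h.few_large
  have h2 : V'.card ≤ ((tailV μ l' π X).filter (fun v => (1 + 2 * δ) * (fib π X y0).card <
      (fib π (SD l X) (l 0 • y0 + v)).card)).card :=
    Finset.card_le_card fun v hv => Finset.mem_filter.2 ⟨hV' hv, hcon v hv⟩
  have h2' := (Nat.cast_le (α := ℝ)).2 h2
  linarith

end NearEq

/-! ### Fibres of the projection -/

namespace NearEq

set_option linter.unusedSectionVars false

variable {n : ℕ} {G Q : Type} [AddCommGroup G] [AddCommGroup Q] [DecidableEq Q] [DecidableEq G]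
  {l : Fin (n + 2) → ℤ} {μ : ℤ} {l' : Fin (n + 1) → ℤ} {π : G →+ Q} {X : Finset G} {y0 : Q} {δ : ℝ}

/-- The maximal sizes of the pieces of fibres lying in the classes modulo `μ G` add up to hardly
more than the maximal size of a fibre. -/
lemma sum_pieces_le (h : NearEq l μ l' π X y0 δ)
    [Finite Q] {C : Type} [AddCommGroup C] [Fintype C] [DecidableEq C]
    (κ : G →+ C) (hκs : Function.Surjective κ) (hκ : ∀ x, κ x = 0 ↔ ∃ g, x = μ • g)
    {δ1 : ℝ} (hδ1 : 2 * (Fintype.card C * δ1) < 1)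
    (hV : ∀ q, (disp (tailV μ l' π X) (l 0 • q) : ℝ) ≤ δ1 * (tailV μ l' π X).card)
    (yc : C → Q) :
    (∑ c, (((fib π X (yc c)).filter (fun x => κ x = c)).card : ℝ)) ≤
      (1 + 2 * δ) * (fib π X y0).card := by
  set V := tailV μ l' π X with hVdef
  have hVpos : (0 : ℝ) < V.card := Nat.cast_pos.2 h.V_pos
  have hinj : Function.Injective (fun c : C => l 0 • c) := by
    intro c d hcd
    obtain ⟨x, hx⟩ := hκs (c - d)
    have h1 : κ (l 0 • x) = 0 := by
      rw [map_zsmul, hx, smul_sub]; exact sub_eq_zero.2 hcd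
    obtain ⟨g, hg⟩ := (hκ _).1 h1
    obtain ⟨a, b, hab⟩ := h.cop
    have h2 : x = μ • (a • g + b • x) := by
      calc x = (a * l 0 + b * μ) • x := by rw [hab, one_smul]
        _ = _ := by
          rw [add_smul, mul_smul, hg, smul_add, smul_comm a μ g, mul_comm b μ, mul_smul]
    have h3 : κ x = 0 := (hκ _).2 ⟨_, h2⟩
    exact sub_eq_zero.1 (hx ▸ h3)
  -- A typical point of `V` stays in `V` under all the translations used below.
  set V' := V.filter (fun v => ∀ c, l 0 • (y0 - yc c) + v ∈ V) with hV'
  have hcard : (V.card : ℝ) < 2 * V'.card := by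
    have h1 : (V.filter (fun v => ¬ ∀ c, l 0 • (y0 - yc c) + v ∈ V)).card ≤
        ∑ c, disp V (l 0 • (y0 - yc c)) := by
      refine le_trans (Finset.card_le_card ?_) Finset.card_biUnion_le
      intro v hv
      obtain ⟨hv, hn⟩ := Finset.mem_filter.1 hv
      push Not at hn
      obtain ⟨c, hc⟩ := hn
      exact Finset.mem_biUnion.2 ⟨c, Finset.mem_univ _, Finset.mem_filter.2 ⟨hv, hc⟩⟩
    have h2 : (∑ c, (disp V (l 0 • (y0 - yc c)) : ℝ)) ≤ Fintype.card C * (δ1 * V.card) := by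
      calc _ ≤ ∑ _c : C, δ1 * (V.card : ℝ) := Finset.sum_le_sum fun c _ => hV _
        _ = _ := by simp
    have h3 : (V'.card : ℝ) + (V.filter (fun v => ¬ ∀ c, l 0 • (y0 - yc c) + v ∈ V)).card =
        V.card := by
      exact_mod_cast Finset.card_filter_add_card_filter_not _
    have h1' := (Nat.cast_le (α := ℝ)).2 h1
    push_cast at h1'
    nlinarith
  obtain ⟨v, hv, hle⟩ := h.exists_typical V' (Finset.filter_subset _ _) hcard
  refine le_trans ?_ hle
  obtain ⟨hvV, hvc⟩ := Finset.mem_filter.1 hv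
  choose xc hxc hxc2 using fun c => mem_tailV.1 (hvc c)
  have h1 := sum_fib_le κ (fib π (SD l X) (l 0 • y0 + v)) (Finset.univ.image (fun c : C => l 0 • c))
  rw [Finset.sum_image (fun a _ b _ hab => hinj hab)] at h1
  refine le_trans ?_ (Nat.cast_le.2 h1)
  push_cast
  refine Finset.sum_le_sum fun c _ => Nat.cast_le.2 ?_
  refine Finset.card_le_card_of_injOn (fun b => l 0 • b + μ • xc c) ?_ ?_
  · intro b hb
    obtain ⟨hb, hbc⟩ := Finset.mem_filter.1 hb
    obtain ⟨hb, hbπ⟩ := mem_fib.1 hb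
    refine mem_fib.2 ⟨mem_fib.2 ⟨(mem_SD_succ h.split).2 ⟨b, hb, xc c, hxc c, rfl⟩, ?_⟩, ?_⟩
    · rw [map_add, hxc2, map_zsmul, hbπ, smul_sub]; abel
    · have : κ (μ • xc c) = 0 := (hκ _).2 ⟨_, rfl⟩
      rw [map_add, this, map_zsmul, hbc, add_zero]
  · intro a ha b hb hab
    have ha := (mem_fib.1 (Finset.mem_filter.1 ha).1).2
    have hb := (mem_fib.1 (Finset.mem_filter.1 hb).1).2
    exact h.proj.lam_inj h.cop (ha.trans hb.symm) (add_right_cancel hab)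

/-- The differences of any fibre of nearly maximal size generate the `μ`-primary part. -/
lemma closure_fib (h : NearEq l μ l' π X y0 δ)
    [Finite Q] {C : Type} [AddCommGroup C] [Fintype C] [DecidableEq C]
    (κ : G →+ C) (hκs : Function.Surjective κ) (hκ : ∀ x, κ x = 0 ↔ ∃ g, x = μ • g)
    {δ1 : ℝ} (hδ1 : 2 * (Fintype.card C * δ1) < 1)
    (hV : ∀ q, (disp (tailV μ l' π X) (l 0 • q) : ℝ) ≤ δ1 * (tailV μ l' π X).card)
    {θ η1 ε : ℝ} (hη1 : 0 < η1) (hθ1 : 0 < θ) (hθ2 : θ < 1) (hθ : θ + 2 * δ < η1 / 2)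
    (hε : Fintype.card C * η1 < ε)
    (hrob : Robust X ε) (y : Q) (hy : y ∈ Wbig π X y0 θ) (p : G) (hp : π p = 0) :
    p ∈ AddSubgroup.closure {d | ∃ a ∈ fib π X y, ∃ b ∈ fib π X y, d = a - b} := by
  set H := AddSubgroup.closure {d | ∃ a ∈ fib π X y, ∃ b ∈ fib π X y, d = a - b} with hH
  set s : ℝ := ((fib π X y0).card : ℝ) with hs
  have hspos : 0 < s := Nat.cast_pos.2 h.s_pos
  have hmax : ∀ c : C, ∃ yc : Q, ∀ y, ((fib π X y).filter (fun x => κ x = c)).card ≤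
      ((fib π X yc).filter (fun x => κ x = c)).card := fun c =>
    Finite.exists_max (fun y => ((fib π X y).filter (fun x => κ x = c)).card)
  choose yc hyc using hmax
  set m : C → ℝ := fun c => (((fib π X (yc c)).filter (fun x => κ x = c)).card : ℝ) with hm
  have hsum : ∑ c, m c ≤ (1 + 2 * δ) * s := h.sum_pieces_le κ hκs hκ hδ1 hV yc
  have hyW := (mem_Wbig.1 hy).2
  -- every class with a large maximal piece meets the fibre over `y`
  have hmeet : ∀ c, (θ + 2 * δ) * s < m c → ∃ x ∈ fib π X y, κ x = c := by
    intro c hc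
    have h1 : ((fib π X y).card : ℝ) = ∑ c, (((fib π X y).filter (fun x => κ x = c)).card : ℝ) := by
      have := Finset.card_eq_sum_card_fiberwise (f := κ) (s := fib π X y) (t := Finset.univ)
        (fun x _ => Finset.mem_coe.2 (Finset.mem_univ _))
      exact_mod_cast this
    rw [← Finset.add_sum_erase _ _ (Finset.mem_univ c)] at h1
    rw [← Finset.add_sum_erase _ _ (Finset.mem_univ c)] at hsum
    have h2 : ∑ c ∈ Finset.univ.erase c, (((fib π X y).filter (fun x => κ x = c)).card : ℝ) ≤
        ∑ c ∈ Finset.univ.erase c, m c :=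
      Finset.sum_le_sum fun c _ => Nat.cast_le.2 (hyc c y)
    have h3 : (0 : ℝ) < (((fib π X y).filter (fun x => κ x = c)).card : ℝ) := by
      have : (1 - θ) * s ≤ (fib π X y).card := hyW
      linarith
    obtain ⟨x, hx⟩ := Finset.card_pos.1 (Nat.cast_pos.1 h3)
    exact ⟨x, (Finset.mem_filter.1 hx).1, (Finset.mem_filter.1 hx).2⟩
  -- large classes have large maximal pieces
  have hbig : ∀ c, η1 * X.card ≤ ((X.filter (fun x => κ x = c)).card : ℝ) →
      (θ + 2 * δ) * s < m c := by
    intro c hc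
    have h1 : (X.filter (fun x => κ x = c)).card ≤ (tailV μ l' π X).card *
        ((fib π X (yc c)).filter (fun x => κ x = c)).card := by
      refine (card_le_of_fibers π _ ((fib π X (yc c)).filter (fun x => κ x = c)).card ?_).trans ?_
      · intro y
        refine le_trans (Finset.card_le_card ?_) (hyc c y)
        intro x hx
        simp only [Finset.mem_filter, mem_fib] at hx ⊢
        tauto
      · refine Nat.mul_le_mul_right _ (le_trans (Finset.card_le_card ?_) h.W_le_V)
        exact Finset.image_subset_image (Finset.filter_subset _ _)
    have h1' : ((X.filter (fun x => κ x = c)).card : ℝ) ≤ (tailV μ l' π X).card * m c := by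
      rw [hm, ← Nat.cast_mul]
      exact Nat.cast_le.2 h1
    have h2 := h.X_ge
    have hVpos : (0 : ℝ) < (tailV μ l' π X).card := Nat.cast_pos.2 h.V_pos
    have h3 : η1 * ((1 - δ) * (s * (tailV μ l' π X).card)) ≤ (tailV μ l' π X).card * m c :=
      (mul_le_mul_of_nonneg_left h2 hη1.le).trans (hc.trans h1')
    have h4 : η1 * (1 - δ) * s ≤ m c := by
      refine le_of_mul_le_mul_left ?_ hVpos
      linarith
    have := h.dle
    have h5 : η1 / 2 * s ≤ η1 * (1 - δ) * s := by
      refine mul_le_mul_of_nonneg_right ?_ hspos.le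
      nlinarith
    nlinarith
  have hne : 0 < (fib π X y).card := by
    have : (0 : ℝ) < (fib π X y).card :=
      lt_of_lt_of_le (mul_pos (by linarith) hspos) hyW
    exact Nat.cast_pos.1 this
  obtain ⟨x1, hx1⟩ := Finset.card_pos.1 hne
  -- robustness: `H` and the multiples of `μ` generate everything
  let K : AddSubgroup G := (H.map κ).comap κ
  have hKt : K = ⊤ := by
    by_contra hK
    have h1 := hrob K hK x1 (X.filter (fun x => η1 * X.card ≤
      ((X.filter (fun x' => κ x' = κ x)).card : ℝ))) (Finset.filter_subset _ _) (by
        intro x hx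
        obtain ⟨x2, hx2, hx2c⟩ := hmeet _ (hbig _ (Finset.mem_filter.1 hx).2)
        refine AddSubgroup.mem_comap.2 ⟨x2 - x1, ?_, ?_⟩
        · exact AddSubgroup.subset_closure ⟨x2, hx2, x1, hx1, rfl⟩
        · rw [map_sub, map_sub, hx2c])
    have h2 : (((X.filter (fun x => ¬ η1 * X.card ≤
        ((X.filter (fun x' => κ x' = κ x)).card : ℝ))).card : ℝ)) ≤
        Fintype.card C * (η1 * X.card) := by
      have h3 := Finset.card_eq_sum_card_fiberwise (f := κ) (s := (X.filter (fun x => ¬ η1 * X.card ≤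
        ((X.filter (fun x' => κ x' = κ x)).card : ℝ)))) (t := Finset.univ)
        (fun x _ => Finset.mem_coe.2 (Finset.mem_univ _))
      rw [h3]
      push_cast
      calc _ ≤ ∑ _c : C, η1 * (X.card : ℝ) := by
            refine Finset.sum_le_sum fun c _ => ?_
            by_cases hc : η1 * X.card ≤ ((X.filter (fun x' => κ x' = c)).card : ℝ)
            · rw [Finset.filter_filter, Finset.filter_false_of_mem]
              · simp; positivity
              · rintro x _ ⟨h4, h5⟩
                rw [h5] at h4
                exact h4 hc
            · push Not at hc
              refine le_trans (Nat.cast_le.2 (Finset.card_le_card ?_)) hc.le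
              intro x hx
              simp only [Finset.mem_filter] at hx ⊢
              exact ⟨hx.1.1, hx.2⟩
        _ = _ := by simp
    have h3 : (((X.filter (fun x => η1 * X.card ≤
        ((X.filter (fun x' => κ x' = κ x)).card : ℝ))).card : ℝ)) + ((X.filter (fun x => ¬ η1 * X.card ≤
        ((X.filter (fun x' => κ x' = κ x)).card : ℝ))).card : ℝ) = X.card := by
      exact_mod_cast Finset.card_filter_add_card_filter_not _
    have := h.X_pos
    nlinarith
  have hHP : ∀ x ∈ H, π x = 0 := by
    intro x hx
    have : H ≤ π.ker := by
      refine (AddSubgroup.closure_le _).2 ?_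
      rintro d ⟨a, ha, b, hb, rfl⟩
      rw [SetLike.mem_coe, AddMonoidHom.mem_ker, map_sub, (mem_fib.1 ha).2, (mem_fib.1 hb).2,
        sub_self]
    exact this hx
  -- hence `ker π = H + μ ker π`, and `μ` is nilpotent on `ker π`
  have hstep : ∀ p, π p = 0 → ∃ g, π g = 0 ∧ p - μ • g ∈ H := by
    intro p hp
    have : p ∈ K := by rw [hKt]; trivial
    obtain ⟨x, hx, hxp⟩ := AddSubgroup.mem_comap.1 this
    have h1 : κ (p - x) = 0 := by rw [map_sub, hxp, sub_self]
    obtain ⟨g, hg⟩ := (hκ _).1 h1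
    refine ⟨g, h.proj.inj _ ?_, ?_⟩
    · rw [← map_zsmul, ← hg, map_sub, hp, hHP x hx, sub_zero]
    · rw [← hg, sub_sub_cancel]; exact hx
  have hiter : ∀ (j : ℕ) p, π p = 0 → ∃ g, π g = 0 ∧ p - μ ^ j • g ∈ H := by
    intro j
    induction j with
    | zero => intro p hp; exact ⟨p, hp, by simp⟩
    | succ j ih =>
      intro p hp
      obtain ⟨g, hg, hgH⟩ := ih p hp
      obtain ⟨g', hg', hgH'⟩ := hstep g hg
      refine ⟨g', hg', ?_⟩
      have : p - μ ^ (j + 1) • g' = (p - μ ^ j • g) + μ ^ j • (g - μ • g') := by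
        rw [smul_sub, pow_succ, mul_smul]; abel
      rw [this]
      exact H.add_mem hgH (H.zsmul_mem hgH' _)
  obtain ⟨N, hN⟩ := h.proj.nil
  obtain ⟨g, hg, hgH⟩ := hiter N p hp
  rwa [hN g hg, sub_zero] at hgH

end NearEq

lemma one_mem_of_gcd {n : ℕ} (l' : Fin n → ℤ) (hg : Finset.univ.gcd l' = 1) (S : AddSubgroup ℤ)
    (h : ∀ j, l' j ∈ S) : (1 : ℤ) ∈ S := by
  obtain ⟨d, rfl⟩ := Int.subgroup_cyclic S
  have h' : ∀ m : ℤ, m ∈ AddSubgroup.closure {d} ↔ d ∣ m := by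
    intro m
    rw [← AddSubgroup.zmultiples_eq_closure, Int.mem_zmultiples_iff]
  rw [h', ← hg]
  exact Finset.dvd_gcd fun j _ => (h' _).1 (h j)

namespace NearEq

set_option linter.unusedSectionVars false

variable {n : ℕ} {G Q : Type} [AddCommGroup G] [AddCommGroup Q] [DecidableEq Q] [DecidableEq G]
  {l : Fin (n + 2) → ℤ} {μ : ℤ} {l' : Fin (n + 1) → ℤ} {π : G →+ Q} {X : Finset G} {y0 : Q} {δ : ℝ}

lemma card_dil (h : NearEq l μ l' π X y0 δ)
    : ((fib π X y0).image (fun x => l 0 • x)).card = (fib π X y0).card := by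
  refine Finset.card_image_of_injOn ?_
  intro a ha b hb hab
  exact h.proj.lam_inj h.cop ((mem_fib.1 ha).2.trans (mem_fib.1 hb).2.symm) hab

/-- The dilate of the maximal fibre is almost invariant under `μ ker π`. -/
lemma disp_dil (h : NearEq l μ l' π X y0 δ)
    [Finite Q] [Finite G] [IsAddCyclic G] {θ δ4 ηP : ℝ} (hθ : 0 < θ)
    (hθ2 : θ ≤ 1 / 2) (hδθ : δ ≤ θ / 4)
    (hgen : ∀ y ∈ Wbig π X y0 θ, ∀ p, π p = 0 →
      p ∈ AddSubgroup.closure {d | ∃ a ∈ fib π X y, ∃ b ∈ fib π X y, d = a - b})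
    (hP : PropDisp G (2 * (l 1).natAbs) ηP δ4) (hδP : 2 * δ ≤ ηP) (p : G) (hp : π p = 0) :
    (disp ((fib π X y0).image (fun x => l 0 • x)) (μ • p) : ℝ) ≤ δ4 * (fib π X y0).card := by
  set Ω := (fib π X y0).image (fun x => l 0 • x) with hΩ
  have hΩc : Ω.card = (fib π X y0).card := h.card_dil
  obtain ⟨v, hv, hvle⟩ := h.exists_typical ((SD l' (Wbig π X y0 θ)).image (fun u => μ • u))
    (Finset.image_subset_image (SD_mono (Finset.filter_subset _ _))) (by
      have h1 := h.card_Wbig hθ hδθ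
      have h2 := (Nat.cast_le (α := ℝ)).2 (h.sub_le (Wbig π X y0 θ))
      linarith)
  obtain ⟨u, hu, rfl⟩ := Finset.mem_image.1 hv
  obtain ⟨g, hg, rfl⟩ := mem_SD.1 hu
  have hne : ∀ j, ∃ x, x ∈ fib π X (g j) := by
    intro j
    obtain ⟨x, hx, hxg⟩ := Finset.mem_image.1 (mem_Wbig.1 (hg j)).1
    exact ⟨x, mem_fib.2 ⟨hx, hxg⟩⟩
  choose f hf using hne
  -- All translates of `Ω` by `Z` lie in one typical fibre of the sum of dilates, so differences of
  -- elements of `Z` barely move `Ω`.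
  set Z := (SDt l' (fun j => fib π X (g j))).image (fun x => μ • x) with hZ
  set z0 := μ • ∑ j, l' j • f j with hz0
  have hz0Z : z0 ∈ Z := Finset.mem_image_of_mem _ (mem_SDt.2 ⟨f, hf, rfl⟩)
  have hZT : ∀ z ∈ Z, ∀ ω ∈ Ω, ω + z ∈ fib π (SD l X) (l 0 • y0 + μ • ∑ j, l' j • g j) := by
    intro z hz ω hω
    obtain ⟨x, hx, rfl⟩ := Finset.mem_image.1 hz
    obtain ⟨b, hb, rfl⟩ := Finset.mem_image.1 hω
    obtain ⟨k, hk, rfl⟩ := mem_SDt.1 hx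
    refine mem_fib.2 ⟨(mem_SD_succ h.split).2 ⟨b, (mem_fib.1 hb).1, _,
      mem_SD.2 ⟨k, fun i => (mem_fib.1 (hk i)).1, rfl⟩, rfl⟩, ?_⟩
    have : ∀ i, π (k i) = g i := fun i => (mem_fib.1 (hk i)).2
    simp only [map_add, map_zsmul, map_sum, this, (mem_fib.1 hb).2]
  set D := Z.image (fun z => z - z0) with hD
  have h1 : ∀ d ∈ D, (disp Ω d : ℝ) ≤ ηP * Ω.card := by
    intro d hd
    obtain ⟨z, hz, rfl⟩ := Finset.mem_image.1 hd
    have h2 : disp Ω (z - z0) + Ω.card ≤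
        (fib π (SD l X) (l 0 • y0 + μ • ∑ j, l' j • g j)).card := by
      rw [disp, ← Finset.card_image_of_injective (Ω.filter _) (add_left_injective z),
        ← Finset.card_image_of_injective Ω (add_left_injective z0), ← Finset.card_union_of_disjoint]
      · refine Finset.card_le_card (Finset.union_subset ?_ ?_)
        · intro t ht
          obtain ⟨ω, hω, rfl⟩ := Finset.mem_image.1 ht
          exact hZT z hz ω (Finset.mem_filter.1 hω).1
        · intro t ht
          obtain ⟨ω, hω, rfl⟩ := Finset.mem_image.1 ht
          exact hZT z0 hz0Z ω hω
      · rw [Finset.disjoint_left]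
        intro t ht ht'
        obtain ⟨ω, hω, rfl⟩ := Finset.mem_image.1 ht
        obtain ⟨ω', hω', he⟩ := Finset.mem_image.1 ht'
        refine (Finset.mem_filter.1 hω).2 ?_
        have he : ω' + z0 = ω + z := he
        have : z - z0 + ω = ω' := by rw [eq_sub_of_add_eq he]; abel
        rwa [this]
    have h3 := (Nat.cast_le (α := ℝ)).2 h2
    rw [hΩc] at h3 ⊢
    push_cast at h3
    have h4 : (0 : ℝ) ≤ (fib π X y0).card := by positivity
    nlinarith
  have hupd : ∀ j a b, (∑ i, l' i • Function.update f j a i) - ∑ i, l' i • Function.update f j b i =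
      l' j • (a - b) := by
    intro j a b
    rw [← Finset.sum_sub_distrib, Finset.sum_eq_single j]
    · simp [smul_sub]
    · intro i _ hij
      simp [Function.update_of_ne hij]
    · simp
  have hupdZ : ∀ j, ∀ a ∈ fib π X (g j), μ • (∑ i, l' i • Function.update f j a i) ∈ Z := by
    intro j a ha
    refine Finset.mem_image_of_mem _ (mem_SDt.2 ⟨_, fun i => ?_, rfl⟩)
    by_cases hij : i = j
    · subst hij; simpa using ha
    · rw [Function.update_of_ne hij]; exact hf i
  have h2 : (Ω.card : ℝ) ≤ 2 * (l 1).natAbs * D.card := by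
    have h3 : (fib π X (g 0)).card ≤ (l 1).natAbs * D.card := by
      refine (card_le_smul_image h.l1 _).trans (Nat.mul_le_mul_left _ ?_)
      rw [hD, Finset.card_image_of_injective _ sub_left_injective]
      refine Finset.card_le_card_of_injOn
        (fun t => t + μ • ∑ i, l' i • Function.update f 0 0 i) ?_ ?_
      · intro t ht
        obtain ⟨a, ha, rfl⟩ := Finset.mem_image.1 ht
        have h4 := hupdZ 0 a ha
        have h5 := hupd 0 a 0
        have h6 : l 1 = μ * l' 0 := h.split 0
        rw [sub_eq_iff_eq_add, sub_zero] at h5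
        rw [h5, smul_add, ← mul_smul, ← h6] at h4
        exact h4
      · intro a _ b _ hab
        exact add_right_cancel hab
    have h4 := (mem_Wbig.1 (hg 0)).2
    have h5 := (Nat.cast_le (α := ℝ)).2 h3
    push_cast at h5
    have h6 : (0 : ℝ) ≤ (fib π X y0).card := by positivity
    rw [hΩc]
    nlinarith
  have hΩne : Ω.Nonempty := by
    rw [← Finset.card_pos, hΩc]; exact h.s_pos
  have h3 := hP Ω D hΩne h1 h2
  rw [hΩc] at h3
  refine h3 _ ?_
  set E := AddSubgroup.closure (D : Set G) with hE
  have hsubE : ∀ z ∈ Z, ∀ z' ∈ Z, z - z' ∈ E := by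
    intro z hz z' hz'
    have e1 : z - z0 ∈ E := AddSubgroup.subset_closure (Finset.mem_image_of_mem _ hz)
    have e2 : z' - z0 ∈ E := AddSubgroup.subset_closure (Finset.mem_image_of_mem _ hz')
    have := E.sub_mem e1 e2
    rwa [sub_sub_sub_cancel_right] at this
  have hj : ∀ j, (μ * l' j) • p ∈ E := by
    intro j
    have h4 := hgen (g j) (hg j) p hp
    have h5 : AddSubgroup.closure {d | ∃ a ∈ fib π X (g j), ∃ b ∈ fib π X (g j), d = a - b} ≤
        E.comap (zsmulAddGroupHom (μ * l' j)) := by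
      refine (AddSubgroup.closure_le _).2 ?_
      rintro d ⟨a, ha, b, hb, rfl⟩
      have h6 := hsubE _ (hupdZ j a ha) _ (hupdZ j b hb)
      rw [← smul_sub, hupd, ← mul_smul] at h6
      exact h6
    exact h5 h4
  have h4 := one_mem_of_gcd l' h.gcd (E.comap (zmultiplesHom G (μ • p))) (fun j => by
    rw [AddSubgroup.mem_comap, zmultiplesHom_apply, ← mul_smul, mul_comm]
    exact hj j)
  rw [AddSubgroup.mem_comap, zmultiplesHom_apply, one_smul] at h4
  exact h4

/-- Almost invariance of `V` and of the dilate of the maximal fibre combine to almost invariance of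
the sum of dilates under all multiples of `l 0 * μ`. -/
lemma disp_T (h : NearEq l μ l' π X y0 δ) [Finite Q] {δ1 δ4 : ℝ} (hδ1 : 0 ≤ δ1) (hδ4 : 0 ≤ δ4)
    (hV : ∀ q, (disp (tailV μ l' π X) (l 0 • q) : ℝ) ≤ δ1 * (tailV μ l' π X).card)
    (hΩ : ∀ p, π p = 0 →
      (disp ((fib π X y0).image (fun x => l 0 • x)) (μ • p) : ℝ) ≤ δ4 * (fib π X y0).card)
    (g : G) :
    (disp (SD l X) ((l 0 * μ) • g) : ℝ) ≤ (δ + δ1 + δ4) * (SD l X).card := by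
  set T := SD l X with hT
  set V := tailV μ l' π X with hVdef
  set Ω := (fib π X y0).image (fun x => l 0 • x) with hΩdef
  have hΩc : Ω.card = (fib π X y0).card := h.card_dil
  have hex : ∀ v, ∃ x, v ∈ V → x ∈ SD l' X ∧ π (μ • x) = v := by
    intro v
    by_cases hv : v ∈ V
    · obtain ⟨x, hx, hxv⟩ := mem_tailV.1 hv
      exact ⟨x, fun _ => ⟨hx, hxv⟩⟩
    · exact ⟨0, fun h => absurd h hv⟩
  choose xv hxv using hex
  -- One translate of `Ω` over each point of `V`; their union is almost all of `T`.
  set T0 := V.biUnion (fun v => Ω.image (fun ω => ω + μ • xv v)) with hT0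
  have hπΩ : ∀ ω ∈ Ω, π ω = l 0 • y0 := by
    intro ω hω
    obtain ⟨b, hb, rfl⟩ := Finset.mem_image.1 hω
    rw [map_zsmul, (mem_fib.1 hb).2]
  have hT0T : T0 ⊆ T := by
    intro t ht
    obtain ⟨v, hv, ht⟩ := Finset.mem_biUnion.1 ht
    obtain ⟨ω, hω, rfl⟩ := Finset.mem_image.1 ht
    obtain ⟨b, hb, rfl⟩ := Finset.mem_image.1 hω
    exact (mem_SD_succ h.split).2 ⟨b, (mem_fib.1 hb).1, xv v, (hxv v hv).1, rfl⟩
  have hT0c : T0.card = V.card * (fib π X y0).card := by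
    rw [hT0, Finset.card_biUnion]
    · rw [Finset.sum_congr rfl (fun v _ =>
        Finset.card_image_of_injective Ω (add_left_injective (μ • xv v)))]
      simp [hΩc]
    · intro v hv w hw hvw
      rw [Function.onFun, Finset.disjoint_left]
      intro t ht ht'
      obtain ⟨ω, hω, rfl⟩ := Finset.mem_image.1 ht
      obtain ⟨ω', hω', he⟩ := Finset.mem_image.1 ht'
      have := congrArg π he
      rw [map_add, map_add, hπΩ _ hω, hπΩ _ hω', (hxv v hv).2, (hxv w hw).2] at this
      exact hvw (add_left_cancel this).symm
  set hh := (l 0 * μ) • g with hhh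
  have hπh : π hh = l 0 • π (μ • g) := by rw [hhh, mul_smul, map_zsmul]
  set Vb := V.filter (fun v => π hh + v ∉ V) with hVb
  have hVbc : Vb.card = disp V (π hh) := rfl
  set pv : Q → G := fun v => l 0 • g + xv v - xv (π hh + v) with hpv
  set Ωb : Q → Finset G := fun v => Ω.filter (fun ω => μ • pv v + ω ∉ Ω) with hΩb
  have hcover : T.filter (fun t => hh + t ∉ T) ⊆ (T \ T0) ∪
      (Vb.biUnion (fun v => Ω.image (fun ω => ω + μ • xv v)) ∪
        (V \ Vb).biUnion (fun v => (Ωb v).image (fun ω => ω + μ • xv v))) := by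
    intro t ht
    obtain ⟨htT, htn⟩ := Finset.mem_filter.1 ht
    by_cases ht0 : t ∈ T0
    · refine Finset.mem_union_right _ ?_
      obtain ⟨v, hv, ht⟩ := Finset.mem_biUnion.1 ht0
      obtain ⟨ω, hω, rfl⟩ := Finset.mem_image.1 ht
      by_cases hvb : v ∈ Vb
      · exact Finset.mem_union_left _ (Finset.mem_biUnion.2 ⟨v, hvb, ht⟩)
      · refine Finset.mem_union_right _ (Finset.mem_biUnion.2
          ⟨v, Finset.mem_sdiff.2 ⟨hv, hvb⟩, Finset.mem_image_of_mem _
            (Finset.mem_filter.2 ⟨hω, fun hc => htn (hT0T ?_)⟩)⟩)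
        have hw : π hh + v ∈ V := by
          by_contra hw
          exact hvb (Finset.mem_filter.2 ⟨hv, hw⟩)
        refine Finset.mem_biUnion.2 ⟨_, hw, Finset.mem_image.2 ⟨_, hc, ?_⟩⟩
        simp only [hpv, hhh, smul_sub, smul_add, mul_comm (l 0) μ, mul_smul]
        abel
    · exact Finset.mem_union_left _ (Finset.mem_sdiff.2 ⟨htT, ht0⟩)
  have hc1 : ((T \ T0).card : ℝ) ≤ δ * (V.card * (fib π X y0).card) := by
    have e1 : ((T \ T0).card : ℝ) + T0.card = T.card := by
      exact_mod_cast Finset.card_sdiff_add_card_eq_card hT0T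
    have e2 : (T.card : ℝ) ≤ (1 + δ) * ((fib π X y0).card * V.card) := h.T_le
    rw [hT0c] at e1
    push_cast at e1
    linarith
  have hc2 : ((Vb.biUnion (fun v => Ω.image (fun ω => ω + μ • xv v))).card : ℝ) ≤
      δ1 * (V.card * (fib π X y0).card) := by
    have e1 : (Vb.biUnion (fun v => Ω.image (fun ω => ω + μ • xv v))).card ≤
        Vb.card * (fib π X y0).card := by
      refine Finset.card_biUnion_le_card_mul _ _ _ (fun v _ => ?_)
      rw [← hΩc]; exact Finset.card_image_le
    have e2 := (Nat.cast_le (α := ℝ)).2 e1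
    push_cast at e2
    have e3 := hV (π (μ • g))
    rw [← hπh, ← hVbc] at e3
    refine e2.trans ?_
    rw [← mul_assoc]
    gcongr
  have hc3 : (((V \ Vb).biUnion (fun v => (Ωb v).image (fun ω => ω + μ • xv v))).card : ℝ) ≤
      δ4 * (V.card * (fib π X y0).card) := by
    have e1 := (Nat.cast_le (α := ℝ)).2 (Finset.card_biUnion_le (s := V \ Vb)
      (t := fun v => (Ωb v).image (fun ω => ω + μ • xv v)))
    push_cast at e1
    refine e1.trans ?_
    calc _ ≤ ∑ v ∈ V \ Vb, δ4 * ((fib π X y0).card : ℝ) := by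
          refine Finset.sum_le_sum fun v hv => ?_
          obtain ⟨hv, hvb⟩ := Finset.mem_sdiff.1 hv
          have hw : π hh + v ∈ V := by
            by_contra hw
            exact hvb (Finset.mem_filter.2 ⟨hv, hw⟩)
          have hp0 : π (pv v) = 0 := by
            refine h.proj.inj _ ?_
            have a1 := (hxv v hv).2
            have a2 := (hxv _ hw).2
            rw [map_zsmul] at a1 a2
            have a3 : π hh = μ • (l 0 • π g) := by
              rw [hπh, map_zsmul, smul_comm]
            simp only [hpv, map_sub, map_add, smul_sub, smul_add, a1, a2, map_zsmul]
            rw [← a3]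
            abel
          refine le_trans (Nat.cast_le.2 Finset.card_image_le) (hΩ _ hp0)
      _ = ((V \ Vb).card : ℝ) * (δ4 * (fib π X y0).card) := by simp
      _ ≤ (V.card : ℝ) * (δ4 * (fib π X y0).card) := by
          gcongr
          exact Finset.sdiff_subset
      _ = _ := by ring
  have hsV : ((V.card * (fib π X y0).card : ℕ) : ℝ) ≤ T.card := by
    rw [← hT0c]; exact Nat.cast_le.2 (Finset.card_le_card hT0T)
  push_cast at hsV
  have hfin : (disp T hh : ℝ) ≤ (T \ T0).card +
      ((Vb.biUnion (fun v => Ω.image (fun ω => ω + μ • xv v))).card +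
        ((V \ Vb).biUnion (fun v => (Ωb v).image (fun ω => ω + μ • xv v))).card) := by
    have := (Finset.card_le_card hcover).trans ((Finset.card_union_le _ _).trans
      (Nat.add_le_add_left (Finset.card_union_le _ _) _))
    exact_mod_cast this
  have hd := h.dpos
  calc (disp T hh : ℝ) ≤ (δ + δ1 + δ4) * (V.card * (fib π X y0).card) := by linarith
    _ ≤ _ := by gcongr

end NearEq

/-! ### Almost invariance of small sums of dilates -/

/-- If the sum of dilates of a robust set `X` in a finite cyclic group is barely larger than `X`,
then it is almost invariant under the subgroup of multiples of `l 0 * μ`, where `μ` is the greatest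
common divisor of the remaining coefficients. -/
theorem exists_disp {n : ℕ} (l : Fin (n + 2) → ℤ) (hl : ∀ i, l i ≠ 0) (μ : ℤ)
    (l' : Fin (n + 1) → ℤ) (hμ : μ ≠ 0) (hl' : ∀ j, l' j ≠ 0) (hg : Finset.univ.gcd l' = 1)
    (hs : ∀ j, l j.succ = μ * l' j) (hcop : IsCoprime (l 0) μ)
    (ε δ5 δm : ℝ) (hε : 0 < ε) (hδ5 : 0 < δ5) (hδm : 0 < δm) :
    ∃ δ : ℝ, 0 < δ ∧ δ ≤ δm ∧ δ ≤ 1 / 10 ∧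
      ∀ (G : Type) [AddCommGroup G] [Finite G] [IsAddCyclic G] [DecidableEq G] (X : Finset G),
        X.Nonempty → Robust X ε → ((SD l X).card : ℝ) ≤ (1 + δ) * X.card →
        ∀ g : G, (disp (SD l X) ((l 0 * μ) • g) : ℝ) ≤ δ5 * (SD l X).card := by
  have hm : (0 : ℝ) < (μ.natAbs : ℝ) := Nat.cast_pos.2 (Int.natAbs_pos.2 hμ)
  set m : ℝ := (μ.natAbs : ℝ) with hmdef
  obtain ⟨η1, hη1⟩ : ∃ η1, η1 = ε / (2 * m) := ⟨_, rfl⟩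
  have hη1p : 0 < η1 := by rw [hη1]; positivity
  have hmη1 : m * η1 = ε / 2 := by rw [hη1]; field_simp
  obtain ⟨θ, hθp, hθ1, hθ2⟩ : ∃ θ : ℝ, 0 < θ ∧ θ ≤ η1 / 8 ∧ θ ≤ 1 / 4 :=
    ⟨min (η1 / 8) (1 / 4), by positivity, min_le_left _ _, min_le_right _ _⟩
  obtain ⟨δ1, hδ1p, hδ1, hδ1'⟩ : ∃ x : ℝ, 0 < x ∧ x ≤ δ5 / 3 ∧ x ≤ 1 / (4 * m) :=
    ⟨min (δ5 / 3) (1 / (4 * m)), by positivity, min_le_left _ _, min_le_right _ _⟩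
  have hmδ1 : m * δ1 ≤ 1 / 4 := by
    rw [le_div_iff₀ (by positivity)] at hδ1'
    linarith
  obtain ⟨ηA, hηA, hA⟩ := disp_closure (2 * (l 0).natAbs) δ1 hδ1p
  obtain ⟨ηB, hηB, hB⟩ := disp_closure (2 * (l 1).natAbs) (δ5 / 3) (by positivity)
  obtain ⟨δ, hδ, d1, d2, d3, d4, d5, d6, d7⟩ : ∃ x : ℝ, 0 < x ∧ x ≤ δm ∧ x ≤ 1 / 10 ∧ x ≤ δ5 / 3 ∧
      x ≤ θ / 4 ∧ x ≤ θ * ε / 4 ∧ x ≤ ηA / 2 ∧ x ≤ ηB / 2 := by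
    refine ⟨min δm (min (1 / 10) (min (δ5 / 3) (min (θ / 4) (min (θ * ε / 4)
      (min (ηA / 2) (ηB / 2)))))), by positivity, ?_⟩
    simp
  refine ⟨δ, hδ, d1, d2, ?_⟩
  intro G _ _ _ _ X hX hrob hsmall g
  obtain ⟨Q, _, _, π, hπ⟩ := exists_primaryProj G μ
  classical
  obtain ⟨y0, hy0, hmax⟩ := exists_max_fiber π X hX
  have hN : NearEq l μ l' π X y0 δ :=
    { l0 := hl 0, l1 := hl 1, l'0 := hl', gcd := hg, split := hs, cop := hcop, proj := hπ
      mem := by convert hy0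
      max := by intro y; unfold fib; convert hmax y
      dpos := hδ, dle := d2, small := hsmall }
  have : IsAddCyclic Q := isAddCyclic_of_surjective π hπ.surj
  have hV := hN.disp_V (δ1 := δ1) (ηP := ηA) hθp (by linarith) d4 (by
      have : δ / θ ≤ ε / 4 := by rw [div_le_iff₀ hθp]; linarith
      linarith) hrob (fun Ω D h1 h2 h3 => hA Q Ω D h1 h2 h3) (by linarith)
  let R : AddSubgroup G := (zsmulAddGroupHom μ : G →+ G).range
  have hRmem : ∀ x, x ∈ R ↔ ∃ g, x = μ • g := fun x =>
    ⟨fun ⟨g, hg⟩ => ⟨g, hg.symm⟩, fun ⟨g, hg⟩ => ⟨g, hg.symm⟩⟩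
  cases nonempty_fintype G
  let : Fintype (G ⧸ R) := Fintype.ofFinite _
  have hC : (Fintype.card (G ⧸ R) : ℝ) ≤ m := by
    have h1 := card_le_smul_image hμ (Finset.univ : Finset G)
    have h2 : Nat.card R = (Finset.univ.image (fun x : G => μ • x)).card := by
      rw [← SetLike.coe_sort_coe, Nat.card_coe_set_eq, ← Set.ncard_coe_finset]
      congr 1
      ext x
      simp only [SetLike.mem_coe, hRmem, Finset.coe_image, Finset.coe_univ, Set.image_univ,
        Set.mem_range, eq_comm]
    have h3 : Nat.card G = R.index * Nat.card R := R.index_mul_card.symm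
    have h4 : 0 < Nat.card R := Nat.card_pos
    rw [Finset.card_univ, ← Nat.card_eq_fintype_card, h3, ← h2] at h1
    have h5 := Nat.le_of_mul_le_mul_right h1 h4
    rw [AddSubgroup.index, Nat.card_eq_fintype_card] at h5
    exact Nat.cast_le.2 h5
  have hgen := hN.closure_fib (C := G ⧸ R) (QuotientAddGroup.mk' R)
    (QuotientAddGroup.mk'_surjective R) (fun x => by
      rw [QuotientAddGroup.mk'_apply, QuotientAddGroup.eq_zero_iff, hRmem])
    (δ1 := δ1) (by nlinarith) hV (θ := θ) (η1 := η1) (ε := ε) hη1p hθp (by linarith) (by linarith)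
    (by nlinarith) hrob
  have hΩ := hN.disp_dil (δ4 := δ5 / 3) (ηP := ηB) hθp (by linarith) d4 hgen
    (fun Ω D h1 h2 h3 => hB G Ω D h1 h2 h3) (by linarith)
  have hfin := hN.disp_T hδ1p.le (by positivity) hV hΩ g
  refine hfin.trans ?_
  gcongr
  linarith

/-- If the sum of dilates of `X` is almost invariant under `ker φ` and barely larger than `X`, then
`X` nearly fills or nearly misses each fibre of `φ`. -/
theorem fill {n : ℕ} (l : Fin (n + 1) → ℤ) (hl : ∀ i, l i ≠ 0) (hg : Finset.univ.gcd l = 1)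
    {G Q : Type} [AddCommGroup G] [Fintype G] [IsAddCyclic G] [DecidableEq G] [AddCommGroup Q]
    [Fintype Q] [DecidableEq Q] (φ : G →+ Q) (hφ : Function.Surjective φ) (X : Finset G)
    (hX : X.Nonempty) {q0 : ℕ} (hq : Fintype.card Q ≤ q0) {δ δ5 η : ℝ} (hδ : 0 < δ)
    (hδ1 : δ ≤ 1) (hη : 0 < η) (hη1 : η ≤ 1) (hδη : δ ≤ η / 2) (hδ5 : 0 < δ5)
    (hδ5η : δ5 * q0 * (l 0).natAbs ≤ η * (η / 2))
    (hsmall : ((SD l X).card : ℝ) ≤ (1 + δ) * X.card)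
    (hdisp : ∀ h, φ h = 0 → (disp (SD l X) h : ℝ) ≤ δ5 * (SD l X).card) :
    ((fib φ Finset.univ 0).card : ℝ) ≤ 4 * X.card ∧
    ∀ r, ((fib φ X r).card : ℝ) < η * (fib φ Finset.univ 0).card ∨
      (1 - 2 * q0 * η) * (fib φ Finset.univ 0).card ≤ (fib φ X r).card := by
  set T := SD l X with hT
  set K := fib φ Finset.univ 0 with hK
  set L0 : ℝ := (K.card : ℝ) with hL0
  have hKm : ∀ h, h ∈ K → φ h = 0 := fun h hh => (mem_fib.1 hh).2
  clear_value K L0 T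
  have hL0p : 0 < L0 := by
    rw [hL0]
    have : 0 < K.card := Finset.card_pos.2 ⟨0, hK ▸ mem_fib.2 ⟨Finset.mem_univ _, map_zero φ⟩⟩
    exact Nat.cast_pos.2 this
  have hl0 : (1 : ℝ) ≤ ((l 0).natAbs : ℝ) := Nat.one_le_cast.2 (Int.natAbs_pos.2 (hl 0))
  have hfull : ∀ r t, φ t = r → (K.image (fun h => h + t)) = fib φ Finset.univ r := by
    rintro r t rfl
    ext x
    simp only [Finset.mem_image, mem_fib, hK, Finset.mem_univ, true_and]
    constructor
    · rintro ⟨a, ha, rfl⟩; simp [ha]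
    · intro hx; exact ⟨x - t, by simp [hx], by simp⟩
  have hfullc : ∀ r, (fib φ Finset.univ r).card = K.card := by
    intro r
    obtain ⟨t, ht⟩ := hφ r
    rw [← hfull r t ht, Finset.card_image_of_injective _ (add_left_injective t)]
  have hfibL : ∀ (Y : Finset G) r, ((fib φ Y r).card : ℝ) ≤ L0 := by
    intro Y r
    rw [hL0, ← hfullc r]
    refine Nat.cast_le.2 (Finset.card_le_card ?_)
    intro x hx
    exact mem_fib.2 ⟨Finset.mem_univ _, (mem_fib.1 hx).2⟩
  have hsumf : ∀ (Y : Finset G), (Y.card : ℝ) = ∑ r : Q, ((fib φ Y r).card : ℝ) := by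
    intro Y
    have := Finset.card_eq_sum_card_fiberwise (f := φ) (s := Y) (t := Finset.univ)
      (fun x _ => Finset.mem_coe.2 (Finset.mem_univ _))
    exact_mod_cast this
  have hq' : (Fintype.card Q : ℝ) ≤ q0 := Nat.cast_le.2 hq
  have hTle : (T.card : ℝ) ≤ q0 * L0 := by
    rw [hsumf T]
    calc _ ≤ ∑ r : Q, L0 := Finset.sum_le_sum fun r _ => hfibL T r
      _ = Fintype.card Q * L0 := by simp
      _ ≤ _ := by gcongr
  -- averaging the displacement over the kernel
  have hkey : ∀ r, ((fib φ T r).card : ℝ) * (L0 - (fib φ T r).card) ≤ L0 * (δ5 * T.card) := by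
    intro r
    have h1 : ∑ h ∈ K, ((fib φ T r).filter (fun t => h + t ∉ fib φ T r)).card ≤
        ∑ h ∈ K, disp T h := by
      refine Finset.sum_le_sum fun h hh => Finset.card_le_card ?_
      intro t ht
      obtain ⟨ht, hn⟩ := Finset.mem_filter.1 ht
      refine Finset.mem_filter.2 ⟨(mem_fib.1 ht).1, fun hc => hn (mem_fib.2 ⟨hc, ?_⟩)⟩
      rw [map_add, hKm h hh, (mem_fib.1 ht).2, zero_add]
    have h2 : ∑ h ∈ K, ((fib φ T r).filter (fun t => h + t ∉ fib φ T r)).card =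
        ∑ t ∈ fib φ T r, (K.filter (fun h => h + t ∉ fib φ T r)).card := by
      simp only [Finset.card_filter]
      exact Finset.sum_comm
    have h3 : ∀ t ∈ fib φ T r, ((K.filter (fun h => h + t ∉ fib φ T r)).card : ℝ) =
        L0 - (fib φ T r).card := by
      intro t ht
      have h4 : (K.filter (fun h => h + t ∈ fib φ T r)).card = (fib φ T r).card := by
        rw [← Finset.card_image_of_injective (K.filter _) (add_left_injective t)]
        congr 1
        ext x
        simp only [Finset.mem_image, Finset.mem_filter]
        constructor
        · rintro ⟨a, ⟨-, ha⟩, rfl⟩; exact ha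
        · intro hx
          refine ⟨x - t, ⟨hK ▸ mem_fib.2 ⟨Finset.mem_univ _, ?_⟩, by simpa using hx⟩, by simp⟩
          rw [map_sub, (mem_fib.1 ht).2, (mem_fib.1 hx).2, sub_self]
      have h5 := Finset.card_filter_add_card_filter_not (s := K) (fun h => h + t ∈ fib φ T r)
      rw [h4] at h5
      rw [hL0, ← h5]
      push_cast
      ring
    have h4 : ((∑ h ∈ K, disp T h : ℕ) : ℝ) ≤ L0 * (δ5 * T.card) := by
      push_cast
      calc _ ≤ ∑ h ∈ K, δ5 * (T.card : ℝ) :=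
            Finset.sum_le_sum fun h hh => hdisp h (hKm h hh)
        _ = _ := by simp [hL0]
    have h5 := (Nat.cast_le (α := ℝ)).2 h1
    rw [h2] at h5
    refine le_trans (le_of_eq ?_) (h5.trans h4)
    push_cast
    rw [Finset.sum_congr rfl h3, Finset.sum_const, nsmul_eq_mul]
  have hTne : T.Nonempty := hT ▸ SD_nonempty hX
  have hTp : (0 : ℝ) < T.card := Nat.cast_pos.2 hTne.card_pos
  have hq0 : (0 : ℝ) < q0 := by
    by_contra h0
    have : (T.card : ℝ) ≤ 0 := hTle.trans (mul_nonpos_of_nonpos_of_nonneg (not_lt.1 h0) hL0p.le)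
    linarith
  have hq1 : (1 : ℝ) ≤ q0 := by
    have h0 : 0 < q0 := Nat.cast_pos.1 hq0
    exact Nat.one_le_cast.2 h0
  have hδ5q : δ5 * q0 ≤ 1 / 2 := by
    have : δ5 * q0 * 1 ≤ δ5 * q0 * (l 0).natAbs := by gcongr
    nlinarith
  refine ⟨?_, ?_⟩
  · have : Nonempty Q := ⟨0⟩
    obtain ⟨r, hr⟩ := Finite.exists_max (fun r => (fib φ T r).card)
    have h1 : (T.card : ℝ) ≤ q0 * (fib φ T r).card := by
      rw [hsumf T]
      calc _ ≤ ∑ _r : Q, ((fib φ T r).card : ℝ) :=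
            Finset.sum_le_sum fun r' _ => Nat.cast_le.2 (hr r')
        _ = Fintype.card Q * (fib φ T r).card := by simp
        _ ≤ _ := mul_le_mul_of_nonneg_right hq' (Nat.cast_nonneg _)
    have h2 : (0 : ℝ) < (fib φ T r).card := by
      by_contra h0
      have : q0 * ((fib φ T r).card : ℝ) ≤ 0 := mul_nonpos_of_nonneg_of_nonpos hq0.le (not_lt.1 h0)
      linarith
    have h3 := hkey r
    have h4 : L0 * (δ5 * T.card) ≤ (fib φ T r).card * (L0 * (δ5 * q0)) := by
      calc _ ≤ L0 * (δ5 * (q0 * (fib φ T r).card)) := by gcongr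
        _ = _ := by ring
    have h5 := le_of_mul_le_mul_left (h3.trans h4) h2
    have h6 : ((fib φ T r).card : ℝ) ≤ T.card := by
      refine Nat.cast_le.2 (Finset.card_le_card ?_)
      intro x hx; exact (mem_fib.1 hx).1
    have h7 : (1 + δ) * (X.card : ℝ) ≤ 2 * X.card := by
      exact mul_le_mul_of_nonneg_right (by linarith) (Nat.cast_nonneg _)
    nlinarith
  · set Xb : Finset Q := Finset.univ.filter (fun r => η * L0 ≤ (fib φ X r).card) with hXb
    have hbig : ∀ x ∈ SD l Xb, (1 - η / 2) * L0 ≤ (fib φ T x).card := by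
      intro x hx
      obtain ⟨g, hg, rfl⟩ := mem_SD.1 hx
      have hgX : ∀ i, η * L0 ≤ (fib φ X (g i)).card := fun i => (Finset.mem_filter.1 (hg i)).2
      have hne : ∀ i, ∃ x, x ∈ fib φ X (g i) := by
        intro i
        have : (0 : ℝ) < (fib φ X (g i)).card := lt_of_lt_of_le (by positivity) (hgX i)
        exact Finset.card_pos.1 (Nat.cast_pos.1 this)
      choose f hf using hne
      have h1 : (fib φ X (g 0)).card ≤ (l 0).natAbs * (fib φ T (∑ i, l i • g i)).card := by
        refine (card_le_smul_image (hl 0) _).trans (Nat.mul_le_mul_left _ ?_)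
        refine Finset.card_le_card_of_injOn (fun t => t + ∑ j : Fin n, l j.succ • f j.succ) ?_
          (fun a _ b _ hab => add_right_cancel hab)
        intro t ht
        obtain ⟨a, ha, rfl⟩ := Finset.mem_image.1 ht
        refine mem_fib.2 ⟨hT ▸ mem_SD.2 ⟨Fin.cons a (fun j => f j.succ), ?_, ?_⟩, ?_⟩
        · intro i
          refine Fin.cases ?_ (fun j => ?_) i
          · simpa using (mem_fib.1 ha).1
          · simpa using (mem_fib.1 (hf _)).1
        · simp [Fin.sum_univ_succ]
        · have : ∀ i, φ (f i) = g i := fun i => (mem_fib.1 (hf i)).2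
          simp [Fin.sum_univ_succ, this, (mem_fib.1 ha).2]
      set Tx : ℝ := ((fib φ T (∑ i, l i • g i)).card : ℝ) with hTx
      have h2 : η * L0 ≤ (l 0).natAbs * Tx := by
        refine (hgX 0).trans ?_
        have := (Nat.cast_le (α := ℝ)).2 h1
        push_cast at this
        exact this
      have h3 : Tx * (L0 - Tx) ≤ L0 * (δ5 * (q0 * L0)) := (hkey _).trans (by gcongr)
      have hTx0 : 0 ≤ Tx := Nat.cast_nonneg _
      have h4 : 0 ≤ L0 - Tx := sub_nonneg.2 (hfibL _ _)
      have h5 : η * L0 * (L0 - Tx) ≤ η * L0 * (η / 2 * L0) := by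
        calc η * L0 * (L0 - Tx) ≤ (l 0).natAbs * Tx * (L0 - Tx) := by gcongr
          _ = (l 0).natAbs * (Tx * (L0 - Tx)) := by ring
          _ ≤ (l 0).natAbs * (L0 * (δ5 * (q0 * L0))) := by gcongr
          _ = (δ5 * q0 * (l 0).natAbs) * (L0 * L0) := by ring
          _ ≤ (η * (η / 2)) * (L0 * L0) := by gcongr
          _ = _ := by ring
      have h6 := le_of_mul_le_mul_left h5 (by positivity)
      linarith
    have h1 : (Xb.card : ℝ) * ((1 - η / 2) * L0) ≤ T.card := by
      have hGL : (Xb.card : ℝ) ≤ (SD l Xb).card := Nat.cast_le.2 (card_le_SD n l hl hg Q Xb)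
      have h0 : 0 ≤ (1 - η / 2) * L0 := mul_nonneg (by linarith) hL0p.le
      calc _ ≤ ((SD l Xb).card : ℝ) * ((1 - η / 2) * L0) := by gcongr
        _ = ∑ x ∈ SD l Xb, ((1 - η / 2) * L0) := by simp
        _ ≤ ∑ x ∈ SD l Xb, ((fib φ T x).card : ℝ) := Finset.sum_le_sum hbig
        _ ≤ ∑ x, ((fib φ T x).card : ℝ) := Finset.sum_le_sum_of_subset_of_nonneg
            (Finset.subset_univ _) (fun _ _ _ => Nat.cast_nonneg _)
        _ = _ := (hsumf T).symm
    have h2 : (1 - η / 2) * (Xb.card * ((1 - η / 2) * L0)) ≤ X.card := by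
      have hh : (1 - η / 2) * (1 + δ) ≤ 1 := by nlinarith
      have hx0 : (0 : ℝ) ≤ X.card := Nat.cast_nonneg _
      calc _ ≤ (1 - η / 2) * ((1 + δ) * X.card) := by
            refine mul_le_mul_of_nonneg_left (h1.trans hsmall) (by linarith)
        _ = ((1 - η / 2) * (1 + δ)) * X.card := by ring
        _ ≤ 1 * X.card := mul_le_mul_of_nonneg_right hh hx0
        _ = _ := one_mul _
    have h3 : (1 - η) * (Xb.card * L0) ≤ X.card := by
      have : (1 - η) ≤ (1 - η / 2) * (1 - η / 2) := by nlinarith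
      have h0 : (0 : ℝ) ≤ Xb.card * L0 := mul_nonneg (Nat.cast_nonneg _) hL0p.le
      nlinarith
    intro r
    rw [or_iff_not_imp_left, not_lt]
    intro hr
    have hrX : r ∈ Xb := Finset.mem_filter.2 ⟨Finset.mem_univ _, hr⟩
    have h4 : (X.card : ℝ) ≤ (fib φ X r).card + (Xb.card - 1) * L0 + q0 * (η * L0) := by
      rw [hsumf X, ← Finset.sum_filter_add_sum_filter_not Finset.univ
        (fun r => η * L0 ≤ (fib φ X r).card), ← hXb, ← Finset.add_sum_erase _ _ hrX]
      have e1 : ∑ x ∈ Xb.erase r, ((fib φ X x).card : ℝ) ≤ (Xb.card - 1) * L0 := by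
        calc _ ≤ ∑ x ∈ Xb.erase r, L0 := Finset.sum_le_sum fun x _ => hfibL _ _
          _ = _ := by
            rw [Finset.sum_const, nsmul_eq_mul, Finset.cast_card_erase_of_mem hrX]
      have e2 : ∑ x with ¬ η * L0 ≤ (fib φ X x).card, ((fib φ X x).card : ℝ) ≤ q0 * (η * L0) := by
        calc _ ≤ ∑ x with ¬ η * L0 ≤ ((fib φ X x).card : ℝ), η * L0 :=
              Finset.sum_le_sum fun x hx => (not_le.1 (Finset.mem_filter.1 hx).2).le
          _ ≤ ∑ x : Q, η * L0 := Finset.sum_le_sum_of_subset_of_nonneg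
            (Finset.subset_univ _) (fun _ _ _ => by positivity)
          _ = Fintype.card Q * (η * L0) := by simp
          _ ≤ _ := by gcongr
      linarith
    have h5 : (Xb.card : ℝ) ≤ q0 := (Nat.cast_le.2 (Finset.card_le_univ Xb)).trans hq'
    have h6 : η * (Xb.card * L0) ≤ η * (q0 * L0) := by gcongr
    linarith

/-! ### Sums of dilates of full residue classes -/

/-- Iterated form of `|X + Y| ≥ |X| + |Y| - 1` in the integers. -/
lemma sum_card_le_SDt : ∀ (n : ℕ) (l : Fin (n + 1) → ℤ), (∀ i, l i ≠ 0) →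
    ∀ P : Fin (n + 1) → Finset ℤ, (∀ i, (P i).Nonempty) →
      ∑ i, (P i).card ≤ (SDt l P).card + n := by
  intro n
  induction n with
  | zero =>
    intro l hl P hP
    have : ((P 0).image (fun x => l 0 • x)).card ≤ (SDt l P).card := by
      refine Finset.card_le_card ?_
      intro x hx
      obtain ⟨a, ha, rfl⟩ := Finset.mem_image.1 hx
      exact mem_SDt.2 ⟨fun _ => a, fun i => by rw [Fin.fin_one_eq_zero i]; exact ha, by simp⟩
    rw [Finset.card_image_of_injective _ (show Function.Injective (fun x : ℤ => l 0 • x) from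
      fun a b hab => mul_left_cancel₀ (hl 0) hab)] at this
    simpa using this
  | succ n ih =>
    intro l hl P hP
    have h1 := ih (fun j => l j.succ) (fun j => hl _) (fun j => P j.succ) (fun j => hP _)
    have h2 : (P 0).image (fun x => l 0 • x) + SDt (fun j => l j.succ) (fun j => P j.succ) ⊆
        SDt l P := by
      intro x hx
      obtain ⟨a, ha, b, hb, rfl⟩ := Finset.mem_add.1 hx
      obtain ⟨a, ha', rfl⟩ := Finset.mem_image.1 ha
      obtain ⟨g, hg, rfl⟩ := mem_SDt.1 hb
      refine mem_SDt.2 ⟨Fin.cons a g, ?_, by simp [Fin.sum_univ_succ]⟩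
      intro i
      refine Fin.cases ?_ (fun j => ?_) i
      · exact ha'
      · exact hg j
    have h3 : (SDt (fun j => l j.succ) (fun j => P j.succ)).Nonempty := by
      choose g hg using hP
      exact ⟨_, mem_SDt.2 ⟨fun j => g j.succ, fun j => hg _, rfl⟩⟩
    have h4 := cauchy_davenport_add_of_linearOrder_isCancelAdd
      ((hP 0).image (fun x => l 0 • x)) h3
    rw [Finset.card_image_of_injective _ (show Function.Injective (fun x : ℤ => l 0 • x) from
      fun a b hab => mul_left_cancel₀ (hl 0) hab)] at h4
    have h5 := Finset.card_le_card h2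
    rw [Fin.sum_univ_succ]
    omega

/-- Summation along a surjective homomorphism. -/
lemma card_mul_sum_comp {H K : Type} [AddCommGroup H] [AddCommGroup K] [Fintype H] [Fintype K]
    [DecidableEq K] (ψ : H →+ K) (hψ : Function.Surjective ψ) (F : K → ℕ) :
    Fintype.card K * ∑ y, F (ψ y) = Fintype.card H * ∑ x, F x := by
  have hc : ∀ x : K, (Finset.univ.filter (fun y => ψ y = x)).card =
      (Finset.univ.filter (fun y => ψ y = 0)).card := fun x =>
    AddMonoidHom.card_fiber_eq_of_mem_range ψ (hψ x) (hψ 0)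
  have h1 : ∑ y, F (ψ y) = (Finset.univ.filter (fun y => ψ y = 0)).card * ∑ x, F x := by
    rw [← Finset.sum_fiberwise_of_maps_to (s := Finset.univ) (t := Finset.univ) (g := ψ)
      (fun _ _ => Finset.mem_univ _), Finset.mul_sum]
    refine Finset.sum_congr rfl fun x _ => ?_
    rw [Finset.sum_congr rfl (g := fun _ => F x)
      (fun y hy => by rw [(Finset.mem_filter.1 hy).2]), Finset.sum_const, hc, smul_eq_mul]
  have h2 : Fintype.card H = Fintype.card K * (Finset.univ.filter (fun y => ψ y = 0)).card := by
    have := Finset.card_eq_sum_card_fiberwise (f := ψ) (s := Finset.univ) (t := Finset.univ)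
      (fun x _ => Finset.mem_coe.2 (Finset.mem_univ _))
    rw [Finset.sum_congr rfl (fun x _ => hc x), Finset.sum_const, smul_eq_mul] at this
    simpa using this
  rw [h1, h2]
  ring

/-- The product of the absolute values of the coefficients. -/
def prodAbs {k : ℕ} (l : Fin k → ℤ) : ℕ := ∏ i, (l i).natAbs

/-- The sum of the absolute values of the coefficients. -/
def sumAbs {k : ℕ} (l : Fin k → ℤ) : ℕ := ∑ i, (l i).natAbs

lemma prodAbs_pos {k : ℕ} {l : Fin k → ℤ} (hl : ∀ i, l i ≠ 0) : 0 < prodAbs l :=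
  Finset.prod_pos fun i _ => Int.natAbs_pos.2 (hl i)

/-- The solutions `w` of `m b = m w` include the translates of `b` by multiples of `L / d`. -/
lemma le_card_solutions {d L : ℕ} [NeZero L] (hd : d ∣ L) (m : ℤ) (hm : m.natAbs = d)
    (b : ZMod L) : d ≤ (Finset.univ.filter (fun w : ZMod L => (m : ZMod L) * b = m * w)).card := by
  obtain ⟨e, he⟩ := hd
  have hL : L ≠ 0 := NeZero.ne L
  have hd0 : d ≠ 0 := by rintro rfl; simp at he; exact hL he
  have he0 : 0 < e := by
    rcases Nat.eq_zero_or_pos e with h | h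
    · subst h; simp at he; exact absurd he hL
    · exact h
  calc d = (Finset.range d).card := (Finset.card_range d).symm
    _ ≤ _ := by
      refine Finset.card_le_card_of_injOn (fun j => b + ((j * e : ℕ) : ZMod L)) ?_ ?_
      · intro j _
        refine Finset.mem_coe.2 (Finset.mem_filter.2 ⟨Finset.mem_univ _, ?_⟩)
        have h0 : (m : ZMod L) * ((j * e : ℕ) : ZMod L) = 0 := by
          have h1 : (m : ZMod L) * ((j * e : ℕ) : ZMod L) = ((m * (j * e : ℕ) : ℤ) : ZMod L) := by
            push_cast; ring
          rw [h1, ZMod.intCast_zmod_eq_zero_iff_dvd]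
          rw [← Int.natAbs_dvd_natAbs, Int.natAbs_mul, hm, Int.natAbs_natCast, Int.natAbs_natCast, he]
          exact ⟨j, by ring⟩
        rw [mul_add, h0, add_zero]
      · intro i hi j hj hij
        have hi : i < d := Finset.mem_range.1 (Finset.mem_coe.1 hi)
        have hj : j < d := Finset.mem_range.1 (Finset.mem_coe.1 hj)
        have h1 := add_left_cancel hij
        rw [ZMod.natCast_eq_natCast_iff', Nat.mod_eq_of_lt, Nat.mod_eq_of_lt] at h1
        · exact Nat.eq_of_mul_eq_mul_right he0 h1
        · rw [he]; exact Nat.mul_lt_mul_of_pos_right hj he0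
        · rw [he]; exact Nat.mul_lt_mul_of_pos_right hi he0

/-- The sharp lower bound for sums of dilates of sets meeting every residue class modulo the product
of the coefficients. Each set splits into pieces according to the residue of its dilate, and
the bound comes from averaging `sum_card_le_SDt` over all choices of one piece from each set. -/
theorem sum_le_SDt_of_full (n : ℕ) (l : Fin (n + 1) → ℤ) (hl : ∀ i, l i ≠ 0)
    (hg : Finset.univ.gcd l = 1) (B : Fin (n + 1) → Finset ℤ)
    (hB : ∀ i (z : ℤ), ∃ b ∈ B i, (prodAbs l : ℤ) ∣ b - z) :
    ∑ i, (l i).natAbs * (B i).card ≤ (SDt l B).card + n * prodAbs l := by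
  classical
  set L := prodAbs l with hL
  have hL0 : 0 < L := prodAbs_pos hl
  have : NeZero L := ⟨hL0.ne'⟩
  let φ : (Fin (n + 1) → ZMod L) →+ ZMod L :=
    { toFun := fun y => ∑ i, (l i : ZMod L) * y i
      map_zero' := by simp
      map_add' := fun x y => by simp [mul_add, Finset.sum_add_distrib] }
  have hφ : Function.Surjective φ := by
    have h1 : (1 : ℤ) ∈ AddSubgroup.comap (Int.castAddHom (ZMod L)) φ.range := by
      refine one_mem_of_gcd l hg _ (fun j => ?_)
      refine ⟨Pi.single j 1, ?_⟩
      show ∑ i, (l i : ZMod L) * (Pi.single j 1 : Fin (n + 1) → ZMod L) i = _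
      simp [Pi.single_apply]
    obtain ⟨y, hy⟩ := h1
    intro x
    refine ⟨fun i => x * y i, ?_⟩
    have hy' : ∑ i, (l i : ZMod L) * y i = 1 := by
      have h2 : φ y = ((1 : ℤ) : ZMod L) := hy
      rwa [Int.cast_one] at h2
    show ∑ i, (l i : ZMod L) * (x * y i) = x
    calc _ = x * ∑ i, (l i : ZMod L) * y i := by
          rw [Finset.mul_sum]
          exact Finset.sum_congr rfl fun i _ => by ring
      _ = x := by rw [hy', mul_one]
  set piece : Fin (n + 1) → ZMod L → Finset ℤ :=
    fun i w => (B i).filter (fun b => (l i : ZMod L) * b = l i * w) with hpiece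
  set T := SDt l B with hT
  -- The integer inequality for the pieces selected by `y`, which are then summed over all `y`.
  have h1 : ∀ y : Fin (n + 1) → ZMod L, ∑ i, (piece i (y i)).card ≤
      (fib (Int.cast : ℤ → ZMod L) T (φ y)).card + n := by
    intro y
    refine (sum_card_le_SDt n l hl (fun i => piece i (y i)) (fun i => ?_)).trans
      (Nat.add_le_add_right (Finset.card_le_card ?_) _)
    · obtain ⟨z, hz⟩ := ZMod.intCast_surjective (y i)
      obtain ⟨b, hb, hbz⟩ := hB i z
      refine ⟨b, Finset.mem_filter.2 ⟨hb, ?_⟩⟩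
      have : ((b - z : ℤ) : ZMod L) = 0 := (ZMod.intCast_zmod_eq_zero_iff_dvd _ _).2 hbz
      rw [Int.cast_sub, sub_eq_zero, hz] at this
      rw [this]
    · intro x hx
      obtain ⟨g, hg, rfl⟩ := mem_SDt.1 hx
      refine mem_fib.2 ⟨mem_SDt.2 ⟨g, fun i => (Finset.mem_filter.1 (hg i)).1, rfl⟩, ?_⟩
      show _ = ∑ i, (l i : ZMod L) * y i
      rw [Int.cast_sum]
      refine Finset.sum_congr rfl fun i _ => ?_
      rw [smul_eq_mul, Int.cast_mul]
      exact (Finset.mem_filter.1 (hg i)).2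
  have h2 := Finset.sum_le_sum (fun y (_ : y ∈ (Finset.univ : Finset (Fin (n + 1) → ZMod L))) => h1 y)
  rw [Finset.sum_add_distrib, Finset.sum_comm] at h2
  have h3 := Nat.mul_le_mul_left (Fintype.card (ZMod L)) h2
  rw [mul_add, card_mul_sum_comp φ hφ (fun x => (fib (Int.cast : ℤ → ZMod L) T x).card),
    Finset.mul_sum] at h3
  have h4 : ∀ i, Fintype.card (ZMod L) * ∑ y : Fin (n + 1) → ZMod L, (piece i (y i)).card =
      Fintype.card (Fin (n + 1) → ZMod L) * ∑ w, (piece i w).card := fun i =>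
    card_mul_sum_comp (Pi.evalAddMonoidHom (fun _ : Fin (n + 1) => ZMod L) i)
      (Function.surjective_eval i) (fun w => (piece i w).card)
  have h5 : ∀ i, (l i).natAbs * (B i).card ≤ ∑ w, (piece i w).card := by
    intro i
    have : ∑ w, (piece i w).card =
        ∑ b ∈ B i, (Finset.univ.filter (fun w : ZMod L => (l i : ZMod L) * b = l i * w)).card := by
      simp only [hpiece, Finset.card_filter]
      exact Finset.sum_comm
    rw [this, mul_comm, ← smul_eq_mul, ← Finset.sum_const]
    refine Finset.sum_le_sum fun b _ => le_card_solutions ?_ (l i) rfl _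
    exact Finset.dvd_prod_of_mem (fun i => (l i).natAbs) (Finset.mem_univ i)
  have h6 : T.card = ∑ x, (fib (Int.cast : ℤ → ZMod L) T x).card :=
    Finset.card_eq_sum_card_fiberwise (fun x _ => Finset.mem_coe.2 (Finset.mem_univ _))
  rw [Finset.sum_congr rfl (fun i _ => h4 i), ← Finset.mul_sum, ← h6, Finset.sum_const,
    Finset.card_univ, ZMod.card] at h3
  have h7 : 0 < Fintype.card (Fin (n + 1) → ZMod L) := Fintype.card_pos
  refine Nat.le_of_mul_le_mul_left ?_ h7
  refine (Nat.mul_le_mul_left _ (Finset.sum_le_sum fun i _ => h5 i)).trans (h3.trans ?_)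
  rw [smul_eq_mul, mul_add]
  exact le_of_eq (by ring)

/-- The residue class `r` modulo `M` is full for `A`: `A` meets all of its refinements modulo
`prodAbs l * M`. -/
def Full {k : ℕ} (l : Fin k → ℤ) (A : Finset ℤ) (M : ℕ) (r : ZMod M) : Prop :=
  ∀ z : ℤ, (z : ZMod M) = r → ∃ a ∈ A, ((prodAbs l * M : ℕ) : ℤ) ∣ a - z

/-- The elements of `A` in the residue class `r` modulo `M`. -/
def cls (A : Finset ℤ) (M : ℕ) (r : ZMod M) : Finset ℤ := fib (Int.cast : ℤ → ZMod M) A r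

lemma mem_cls {A : Finset ℤ} {M : ℕ} {r : ZMod M} {x : ℤ} :
    x ∈ cls A M r ↔ x ∈ A ∧ (x : ZMod M) = r := mem_fib

lemma Full.dvd {k : ℕ} {l : Fin k → ℤ} {A : Finset ℤ} {M : ℕ} {r : ZMod M} (h : Full l A M r)
    {z : ℤ} (hz : (z : ZMod M) = r) : ∃ a ∈ cls A M r, ((prodAbs l * M : ℕ) : ℤ) ∣ a - z := by
  obtain ⟨a, ha, had⟩ := h z hz
  refine ⟨a, mem_cls.2 ⟨ha, ?_⟩, had⟩
  have : ((a - z : ℤ) : ZMod M) = 0 := (ZMod.intCast_zmod_eq_zero_iff_dvd _ _).2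
    ((Int.natCast_dvd_natCast.2 (Dvd.intro_left _ rfl)).trans had)
  rw [Int.cast_sub, sub_eq_zero, hz] at this
  exact this

lemma Full.nonempty {k : ℕ} {l : Fin k → ℤ} {A : Finset ℤ} {M : ℕ} {r : ZMod M}
    (h : Full l A M r) : (cls A M r).Nonempty := by
  obtain ⟨z, hz⟩ := ZMod.intCast_surjective r
  obtain ⟨a, ha, -⟩ := h.dvd hz
  exact ⟨a, ha⟩

/-- Rescaled form of `sum_le_SDt_of_full`. -/
theorem sum_le_cls {n : ℕ} (l : Fin (n + 1) → ℤ) (hl : ∀ i, l i ≠ 0)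
    (hg : Finset.univ.gcd l = 1) (A : Finset ℤ) {M : ℕ} (hM : 0 < M) (r : Fin (n + 1) → ZMod M)
    (hr : ∀ i, Full l A M (r i)) :
    ∑ i, (l i).natAbs * (cls A M (r i)).card ≤
      (cls (SD l A) M (∑ i, l i • r i)).card + n * prodAbs l := by
  classical
  choose z hz using fun i => ZMod.intCast_surjective (r i)
  have hM0 : (M : ℤ) ≠ 0 := by exact_mod_cast hM.ne'
  have hdvd : ∀ i, ∀ a ∈ cls A M (r i), (M : ℤ) ∣ a - z i := by
    intro i a ha
    rw [← ZMod.intCast_zmod_eq_zero_iff_dvd, Int.cast_sub, (mem_cls.1 ha).2, hz, sub_self]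
  set B : Fin (n + 1) → Finset ℤ := fun i => (cls A M (r i)).image (fun a => (a - z i) / M) with hB
  have h1 := sum_le_SDt_of_full n l hl hg B (by
    intro i w
    obtain ⟨a, ha, had⟩ := (hr i).dvd (z := z i + M * w) (by simp [hz])
    refine ⟨_, Finset.mem_image_of_mem _ ha, ?_⟩
    obtain ⟨t, ht⟩ := hdvd i a ha
    rw [ht, Int.mul_ediv_cancel_left _ hM0]
    have h2 : a - (z i + M * w) = M * (t - w) := by linear_combination ht
    rw [h2, Nat.cast_mul, mul_comm (prodAbs l : ℤ)] at had
    exact Int.dvd_of_mul_dvd_mul_left hM0 had)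
  have h2 : ∀ i, (B i).card = (cls A M (r i)).card := by
    intro i
    refine Finset.card_image_of_injOn ?_
    intro a ha b hb hab
    obtain ⟨t, ht⟩ := hdvd i a ha
    obtain ⟨u, hu⟩ := hdvd i b hb
    simp only [ht, hu, Int.mul_ediv_cancel_left _ hM0] at hab
    subst hab
    linarith
  simp only [h2] at h1
  refine h1.trans (Nat.add_le_add_right ?_ _)
  refine Finset.card_le_card_of_injOn (fun t => (∑ i, l i * z i) + M * t) ?_ ?_
  · intro t ht
    obtain ⟨g, hg, rfl⟩ := mem_SDt.1 ht
    choose a ha hag using fun i => Finset.mem_image.1 (hg i)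
    have h3 : ∀ i, a i = z i + M * g i := by
      intro i
      obtain ⟨t, ht⟩ := hdvd i _ (ha i)
      rw [← hag i, ht, Int.mul_ediv_cancel_left _ hM0]
      linarith
    refine Finset.mem_coe.2 (mem_cls.2 ⟨mem_SD.2 ⟨a, fun i => (mem_cls.1 (ha i)).1, ?_⟩, ?_⟩)
    · simp only [h3, Finset.mul_sum, smul_eq_mul, ← Finset.sum_add_distrib]
      exact Finset.sum_congr rfl fun i _ => by ring
    · simp [hz]
  · intro s _ t _ hst
    exact mul_left_cancel₀ hM0 (add_left_cancel hst)

/-- Layer-cake bound: the sum of dilates is bounded below by the sums of dilates, in the cyclic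
group of residues, of the superlevel sets of the function counting elements in each class. -/
theorem layers {n : ℕ} (l : Fin (n + 1) → ℤ) (hl : ∀ i, l i ≠ 0)
    (hg : Finset.univ.gcd l = 1) (A : Finset ℤ) {M : ℕ} (hM : 0 < M) (R : Finset (ZMod M))
    (hR : ∀ r ∈ R, Full l A M r) (N : ℕ) :
    sumAbs l * ∑ t ∈ Finset.Icc 1 N, (SD l (R.filter (fun r => t ≤ (cls A M r).card))).card ≤
      ∑ x ∈ SD l R, (cls (SD l A) M x).card + n * prodAbs l * (SD l R).card := by
  set Rt : ℕ → Finset (ZMod M) := fun t => R.filter (fun r => t ≤ (cls A M r).card) with hRt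
  -- At the largest level whose sum of dilates contains `x`, each of the classes chosen to represent
  -- `x` has at least that many elements.
  have h1 : ∀ x ∈ SD l R, sumAbs l * ((Finset.Icc 1 N).filter (fun t => x ∈ SD l (Rt t))).card ≤
      (cls (SD l A) M x).card + n * prodAbs l := by
    intro x _
    rcases ((Finset.Icc 1 N).filter (fun t => x ∈ SD l (Rt t))).eq_empty_or_nonempty with he | hne
    · simp [he]
    · set m := Finset.max' _ hne with hm
      have hmm := Finset.max'_mem _ hne
      rw [← hm] at hmm
      have h2 : ((Finset.Icc 1 N).filter (fun t => x ∈ SD l (Rt t))).card ≤ m := by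
        refine (Finset.card_le_card (t := Finset.Icc 1 m) ?_).trans (by simp)
        intro t ht
        exact Finset.mem_Icc.2 ⟨(Finset.mem_Icc.1 (Finset.mem_filter.1 ht).1).1,
          Finset.le_max' _ _ ht⟩
      obtain ⟨g, hgR, rfl⟩ := mem_SD.1 (Finset.mem_filter.1 hmm).2
      refine le_trans ?_ (sum_le_cls l hl hg A hM g
        (fun i => hR _ (Finset.mem_filter.1 (hgR i)).1))
      rw [sumAbs, Finset.sum_mul]
      exact Finset.sum_le_sum fun i _ => Nat.mul_le_mul_left _
        (h2.trans (Finset.mem_filter.1 (hgR i)).2)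
  have h2 : ∑ t ∈ Finset.Icc 1 N, (SD l (Rt t)).card =
      ∑ x ∈ SD l R, ((Finset.Icc 1 N).filter (fun t => x ∈ SD l (Rt t))).card := by
    classical
    simp only [Finset.card_filter]
    rw [Finset.sum_comm]
    refine Finset.sum_congr rfl fun t _ => ?_
    rw [← Finset.card_filter]
    congr 1
    ext x
    rw [Finset.mem_filter]
    exact ⟨fun hx => ⟨SD_mono (Finset.filter_subset _ _) hx, hx⟩, fun hx => hx.2⟩
  rw [h2, Finset.mul_sum]
  refine (Finset.sum_le_sum h1).trans ?_
  rw [Finset.sum_add_distrib, Finset.sum_const, smul_eq_mul, mul_comm (SD l R).card]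

/-! ### Growth of iterated difference sets -/

/-- The iterated sumset `D + ⋯ + D` with `N` summands. -/
def iter (D : Finset ℤ) : ℕ → Finset ℤ
  | 0 => {0}
  | N + 1 => iter D N + D

lemma iter_succ (D : Finset ℤ) (N : ℕ) : iter D (N + 1) = iter D N + D := rfl

lemma iter_mono {D E : Finset ℤ} (h : D ⊆ E) : ∀ N, iter D N ⊆ iter E N
  | 0 => subset_rfl
  | N + 1 => Finset.add_subset_add (iter_mono h N) h

lemma zero_mem_iter {D : Finset ℤ} (h : (0 : ℤ) ∈ D) : ∀ N, (0 : ℤ) ∈ iter D N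
  | 0 => Finset.mem_singleton_self _
  | N + 1 => Finset.mem_add.2 ⟨0, zero_mem_iter h N, 0, h, by simp⟩

lemma iter_add (D : Finset ℤ) (M N : ℕ) : iter D (M + N) = iter D M + iter D N := by
  induction N with
  | zero =>
    show iter D M = iter D M + {0}
    rw [show ({0} : Finset ℤ) = 0 from rfl, add_zero]
  | succ N ih => rw [← add_assoc, iter_succ, ih, iter_succ, add_assoc]

/-- A small sum of dilates forces small doubling. -/
lemma card_sub_self_le {n : ℕ} (l : Fin (n + 2) → ℤ) (hl : ∀ i, l i ≠ 0) {A : Finset ℤ}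
    {S : ℕ} (h : (SD l A).card ≤ S * A.card) : (A - A).card ≤ S ^ 2 * A.card := by
  rcases A.eq_empty_or_nonempty with rfl | ⟨a0, ha0⟩
  · simp
  have inj : ∀ i, Function.Injective (fun x : ℤ => l i * x) :=
    fun i a b hab => mul_left_cancel₀ (hl i) hab
  set X := A.image (fun x => l 0 * x) with hX
  set Y := A.image (fun x => l 1 * x) with hY
  have hXc : X.card = A.card := Finset.card_image_of_injective _ (inj 0)
  have hYc : Y.card = A.card := Finset.card_image_of_injective _ (inj 1)
  have h1 : (X + Y).card ≤ (SD l A).card := by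
    refine Finset.card_le_card_of_injOn
      (fun t => t + ∑ i : Fin n, l i.succ.succ * a0) ?_ (fun a _ b _ hab => add_right_cancel hab)
    intro t ht
    obtain ⟨x, hx, y, hy, rfl⟩ := Finset.mem_add.1 ht
    obtain ⟨a, ha, rfl⟩ := Finset.mem_image.1 hx
    obtain ⟨b, hb, rfl⟩ := Finset.mem_image.1 hy
    refine mem_SD.2 ⟨Fin.cons a (Fin.cons b (fun _ => a0)), ?_, ?_⟩
    · intro i
      refine Fin.cases ha (fun j => Fin.cases hb (fun j => ha0) j) i
    · simp [Fin.sum_univ_succ, add_assoc]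
  have h2 : (X - X).card = (A - A).card := by
    have : X - X = (A - A).image (fun x => l 0 * x) := by
      ext x
      simp only [hX, Finset.mem_sub, Finset.mem_image]
      constructor
      · rintro ⟨_, ⟨a, ha, rfl⟩, _, ⟨b, hb, rfl⟩, rfl⟩
        exact ⟨a - b, ⟨a, ha, b, hb, rfl⟩, by ring⟩
      · rintro ⟨_, ⟨a, ha, b, hb, rfl⟩, rfl⟩
        exact ⟨_, ⟨a, ha, rfl⟩, _, ⟨b, hb, rfl⟩, by ring⟩
    rw [this, Finset.card_image_of_injective _ (inj 0)]
  have h3 := Finset.ruzsa_triangle_inequality_sub_add_add X Y X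
  rw [h2, hYc] at h3
  have h4 : (A - A).card * A.card ≤ (S ^ 2 * A.card) * A.card := by
    refine h3.trans ((Nat.mul_le_mul (h1.trans h) (h1.trans h)).trans (le_of_eq (by ring)))
  exact Nat.le_of_mul_le_mul_right h4 (Finset.card_pos.2 ⟨a0, ha0⟩)

/-- An `N`-fold sum of elements of `F` is determined by their multiplicities. -/
lemma card_iter_le (F : Finset ℤ) (N : ℕ) : (iter F N).card ≤ (N + 1) ^ F.card := by
  classical
  have h : ∀ N, ∀ x ∈ iter F N, ∃ c : F → ℕ, (∀ f, c f ≤ N) ∧ ∑ f, (c f : ℤ) * f = x := by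
    intro N
    induction N with
    | zero =>
      intro x hx
      exact ⟨0, fun _ => le_rfl, by rw [Finset.mem_singleton.1 hx]; simp⟩
    | succ N ih =>
      intro x hx
      obtain ⟨y, hy, f, hf, rfl⟩ := Finset.mem_add.1 hx
      obtain ⟨c, hc, rfl⟩ := ih y hy
      refine ⟨c + Pi.single ⟨f, hf⟩ 1, ?_, ?_⟩
      · intro g
        refine Nat.add_le_add (hc g) ?_
        by_cases hg : g = ⟨f, hf⟩
        · subst hg; simp
        · simp [Pi.single_eq_of_ne hg]
      · simp only [Pi.add_apply, Nat.cast_add, add_mul, Finset.sum_add_distrib]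
        congr 1
        rw [Finset.sum_eq_single ⟨f, hf⟩]
        · simp
        · intro g _ hg
          simp [Pi.single_eq_of_ne hg]
        · simp
  calc (iter F N).card
      ≤ ((Fintype.piFinset (fun _ : F => Finset.range (N + 1))).image
          (fun c : F → ℕ => ∑ f : F, (c f : ℤ) * (f : ℤ))).card := by
        refine Finset.card_le_card fun x hx => ?_
        obtain ⟨c, hc, rfl⟩ := h N x hx
        exact Finset.mem_image_of_mem _ (Fintype.mem_piFinset.2 fun f =>
          Finset.mem_range.2 (Nat.lt_succ_of_le (hc f)))
    _ ≤ _ := Finset.card_image_le.trans (by simp)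

/-- Iterated difference sets of a set of small doubling grow polynomially. -/
lemma card_iter_add_le {A : Finset ℤ} (hA : A.Nonempty) {K : ℕ}
    (hK : (A - A).card ≤ K * A.card) (N : ℕ) :
    (iter (A - A) N + A).card ≤ (N + 1) ^ (K ^ 5) * (K ^ 3 * A.card) := by
  have hAp : (0 : ℚ≥0) < A.card := by exact_mod_cast hA.card_pos
  have hpl : ∀ m n : ℕ, ((m • A - n • A : Finset ℤ).card : ℚ≥0) ≤
      (K : ℚ≥0) ^ (m + n) * A.card := by
    intro m n
    refine (Finset.pluennecke_ruzsa_inequality_nsmul_sub_nsmul_sub hA A m n).trans ?_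
    gcongr
    rw [div_le_iff₀ hAp]
    exact_mod_cast hK
  have h32 : ((A - A) + (A - A) + A).card ≤ K ^ 5 * A.card := by
    have h1 := hpl 3 2
    simp only [succ_nsmul, zero_nsmul, zero_add] at h1
    have h2 : ((A + A + A - (A + A)).card) ≤ K ^ 5 * A.card := by exact_mod_cast h1
    refine le_trans (Finset.card_le_card ?_) h2
    intro x hx
    obtain ⟨y, hy, e, he, rfl⟩ := Finset.mem_add.1 hx
    obtain ⟨u, hu, v, hv, rfl⟩ := Finset.mem_add.1 hy
    obtain ⟨a, ha, b, hb, rfl⟩ := Finset.mem_sub.1 hu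
    obtain ⟨c, hc, d, hd, rfl⟩ := Finset.mem_sub.1 hv
    exact Finset.mem_sub.2 ⟨_, Finset.add_mem_add (Finset.add_mem_add ha hc) he, _,
      Finset.add_mem_add hb hd, by ring⟩
  have h21 : ((A - A) + A).card ≤ K ^ 3 * A.card := by
    have h1 := hpl 2 1
    simp only [succ_nsmul, zero_nsmul, zero_add] at h1
    have h2 : ((A + A - A).card) ≤ K ^ 3 * A.card := by exact_mod_cast h1
    refine le_trans (Finset.card_le_card ?_) h2
    intro x hx
    obtain ⟨y, hy, e, he, rfl⟩ := Finset.mem_add.1 hx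
    obtain ⟨a, ha, b, hb, rfl⟩ := Finset.mem_sub.1 hy
    exact Finset.mem_sub.2 ⟨_, Finset.add_mem_add ha he, _, hb, by ring⟩
  obtain ⟨F, -, hF, hcov⟩ := Finset.ruzsa_covering_add (K := ((K ^ 5 : ℕ) : ℝ))
    (A := (A - A) + (A - A)) (B := A) hA (by exact_mod_cast h32)
  have hF : F.card ≤ K ^ 5 := by exact_mod_cast hF
  have h0 : (0 : ℤ) ∈ A - A := by
    obtain ⟨a, ha⟩ := hA
    exact Finset.mem_sub.2 ⟨a, ha, a, ha, sub_self a⟩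
  have hit : ∀ N, iter (A - A) N ⊆ iter F N + (A - A) := by
    intro N
    induction N with
    | zero =>
      intro x hx
      rw [Finset.mem_singleton.1 hx]
      exact Finset.mem_add.2 ⟨0, Finset.mem_singleton_self _, 0, h0, by simp⟩
    | succ N ih =>
      rw [iter_succ, iter_succ]
      refine (Finset.add_subset_add ih subset_rfl).trans ?_
      rw [add_assoc, add_assoc]
      exact Finset.add_subset_add subset_rfl hcov
  calc _ ≤ (iter F N + ((A - A) + A)).card := by
        rw [← add_assoc]
        exact Finset.card_le_card (Finset.add_subset_add (hit N) subset_rfl)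
    _ ≤ (iter F N).card * ((A - A) + A).card := Finset.card_add_le
    _ ≤ _ := by
      refine Nat.mul_le_mul ((card_iter_le F N).trans ?_) h21
      exact Nat.pow_le_pow_right (Nat.succ_pos N) hF

/-- One representative of each occupied class minus each element of one class gives distinct
differences. -/
lemma card_image_mul_cls_le {A : Finset ℤ} {K : ℕ} (hK : (A - A).card ≤ K * A.card) (M : ℕ)
    (r : ZMod M) :
    (A.image (Int.cast : ℤ → ZMod M)).card * (cls A M r).card ≤ K * A.card := by
  refine le_trans ?_ hK
  rw [← Finset.card_product]
  have : ∀ x : ZMod M, ∃ a : ℤ, x ∈ A.image (Int.cast : ℤ → ZMod M) → a ∈ A ∧ (a : ZMod M) = x := by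
    intro x
    by_cases hx : x ∈ A.image (Int.cast : ℤ → ZMod M)
    · obtain ⟨a, ha, rfl⟩ := Finset.mem_image.1 hx
      exact ⟨a, fun _ => ⟨ha, rfl⟩⟩
    · exact ⟨0, fun h => absurd h hx⟩
  choose f hf using this
  refine Finset.card_le_card_of_injOn (fun p => f p.1 - p.2) ?_ ?_
  · rintro ⟨x, b⟩ hp
    obtain ⟨hx, hb⟩ := Finset.mem_product.1 (Finset.mem_coe.1 hp)
    exact Finset.sub_mem_sub (hf x hx).1 (mem_cls.1 hb).1
  · rintro ⟨x, b⟩ hp ⟨y, c⟩ hq he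
    obtain ⟨hx, hb⟩ := Finset.mem_product.1 (Finset.mem_coe.1 hp)
    obtain ⟨hy, hc⟩ := Finset.mem_product.1 (Finset.mem_coe.1 hq)
    have he' : f x - b = f y - c := he
    have h1 := congrArg (Int.cast : ℤ → ZMod M) he'
    simp only [Int.cast_sub, (hf x hx).2, (hf y hy).2] at h1
    rw [(mem_cls.1 hb).2, (mem_cls.1 hc).2] at h1
    have h2 : x = y := sub_left_injective h1
    subst h2
    rw [Prod.mk.injEq]
    exact ⟨rfl, sub_right_injective he'⟩

/-- A symmetric set of integers with greatest common divisor `M` reaches every multiple of `M`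
modulo `L * M` in `L` steps. -/
lemma exists_mem_iter {E : Finset ℤ} (h0 : (0 : ℤ) ∈ E) (hneg : ∀ e ∈ E, -e ∈ E) {M L : ℕ}
    (hL : 0 < L) (hdvd : ∀ e ∈ E, (M : ℤ) ∣ e)
    (hgcd : ∀ d : ℤ, (∀ e ∈ E, d ∣ e) → d ∣ M) (c : ℤ) :
    ∃ e ∈ iter E L, ((L * M : ℕ) : ℤ) ∣ e - M * c := by
  set π : ℤ → ZMod (L * M) := Int.cast with hπ
  set P : ℕ → Finset (ZMod (L * M)) := fun k => (iter E k).image π with hP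
  have hstep : ∀ k, ∀ x ∈ P k, ∀ e ∈ E, x + π e ∈ P (k + 1) := by
    intro k x hx e he
    obtain ⟨y, hy, rfl⟩ := Finset.mem_image.1 hx
    exact Finset.mem_image.2 ⟨y + e, Finset.add_mem_add hy he, by simp [hπ]⟩
  have hstep' : ∀ k, ∀ x ∈ P (k + 1), ∃ y ∈ P k, ∃ e ∈ E, y + π e = x := by
    intro k x hx
    obtain ⟨y, hy, rfl⟩ := Finset.mem_image.1 hx
    obtain ⟨u, hu, e, he, rfl⟩ := Finset.mem_add.1 hy
    exact ⟨π u, Finset.mem_image_of_mem _ hu, e, he, by simp [hπ]⟩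
  have hmono : ∀ k, P k ⊆ P (k + 1) := by
    intro k x hx
    have := hstep k x hx 0 h0
    simpa [hπ] using this
  have hclaim : ∀ k, k + 1 ≤ (P k).card ∨ ∀ x ∈ P k, ∀ e ∈ E, x + π e ∈ P k := by
    intro k
    induction k with
    | zero => left; simp [hP, iter]
    | succ k ih =>
      rcases ih with ih | ih
      · by_cases hle : (P (k + 1)).card ≤ (P k).card
        · right
          have := Finset.eq_of_subset_of_card_le (hmono k) hle
          intro x hx e he
          rw [← this] at hx
          exact hstep k x hx e he
        · left; omega
      · right
        intro x hx e he
        obtain ⟨y, hy, e', he', rfl⟩ := hstep' k x hx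
        exact hstep k _ (ih y hy e' he') e he
  have hiter : ∀ k, ∀ x ∈ iter E k, (M : ℤ) ∣ x := by
    intro k
    induction k with
    | zero => intro x hx; rw [Finset.mem_singleton.1 hx]; exact dvd_zero _
    | succ k ih =>
      intro x hx
      obtain ⟨y, hy, e, he, rfl⟩ := Finset.mem_add.1 hx
      exact dvd_add (ih y hy) (hdvd e he)
  have hPL : (P L).card ≤ L := by
    calc (P L).card ≤ ((Finset.range L).image (fun i : ℕ => ((M * i : ℕ) : ZMod (L * M)))).card := by
          refine Finset.card_le_card fun x hx => ?_
          obtain ⟨y, hy, rfl⟩ := Finset.mem_image.1 hx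
          obtain ⟨t, rfl⟩ := hiter L y hy
          have hLz : (L : ℤ) ≠ 0 := by exact_mod_cast hL.ne'
          have ht0 := Int.emod_nonneg t hLz
          have htL := Int.emod_lt_of_pos t (by exact_mod_cast hL : (0 : ℤ) < L)
          refine Finset.mem_image.2 ⟨(t % L).toNat, Finset.mem_range.2 (by omega), ?_⟩
          have h1 : ((M * (t % L).toNat : ℕ) : ZMod (L * M)) =
              ((M * (t % L) : ℤ) : ZMod (L * M)) := by
            rw [← Int.cast_natCast, Nat.cast_mul, Int.toNat_of_nonneg ht0]
          rw [h1, hπ, ZMod.intCast_eq_intCast_iff_dvd_sub]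
          refine ⟨t / L, ?_⟩
          have := Int.emod_add_mul_ediv t L
          push_cast
          linear_combination (-(M : ℤ)) * this
      _ ≤ _ := Finset.card_image_le.trans (by simp)
  have hst : ∀ x ∈ P L, ∀ e ∈ E, x + π e ∈ P L := by
    rcases hclaim L with h | h
    · omega
    · exact h
  let S : AddSubgroup ℤ :=
    { carrier := {m | ∀ x, x + π m ∈ P L ↔ x ∈ P L}
      zero_mem' := by intro x; simp [hπ]
      add_mem' := by
        intro a b ha hb x
        have : x + π (a + b) = (x + π a) + π b := by simp [hπ, add_assoc]
        rw [this, hb, ha]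
      neg_mem' := by
        intro a ha x
        rw [← ha (x + π (-a))]
        simp [hπ] }
  have hES : ∀ e ∈ E, e ∈ S := by
    intro e he x
    refine ⟨fun h => ?_, fun h => hst x h e he⟩
    have := hst _ h _ (hneg e he)
    simpa [hπ] using this
  have hMS : (M : ℤ) ∈ S := by
    obtain ⟨d, hd⟩ := Int.subgroup_cyclic S
    have h' : ∀ m : ℤ, m ∈ S ↔ d ∣ m := by
      intro m
      rw [hd, ← AddSubgroup.zmultiples_eq_closure, Int.mem_zmultiples_iff]
    exact (h' _).2 (hgcd d fun e he => (h' e).1 (hES e he))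
  have hMc : (M : ℤ) * c ∈ S := by
    have := S.zsmul_mem hMS c
    rwa [smul_eq_mul, mul_comm] at this
  have h1 : (0 : ZMod (L * M)) ∈ P L :=
    Finset.mem_image.2 ⟨0, zero_mem_iter h0 L, by simp [hπ]⟩
  have h2 := (hMc 0).2 h1
  rw [zero_add] at h2
  obtain ⟨e, he, hee⟩ := Finset.mem_image.1 h2
  refine ⟨e, he, ?_⟩
  rw [hπ, ZMod.intCast_eq_intCast_iff_dvd_sub] at hee
  rw [← dvd_neg]
  simpa using hee

/-! ### A modulus for which most residue classes are full -/

/-- The set of residues of `A` modulo `M`. -/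
def res (A : Finset ℤ) (M : ℕ) : Finset (ZMod M) := A.image (Int.cast : ℤ → ZMod M)

lemma mem_res {A : Finset ℤ} {M : ℕ} {r : ZMod M} : r ∈ res A M ↔ ∃ a ∈ A, (a : ZMod M) = r :=
  Finset.mem_image

lemma cast_eq_iff {M : ℕ} {a b : ℤ} : (a : ZMod M) = b ↔ (M : ℤ) ∣ a - b := by
  rw [← ZMod.intCast_zmod_eq_zero_iff_dvd, Int.cast_sub, sub_eq_zero]

/-- If congruence of elements of `A` modulo `M` implies congruence modulo `M'`, then `A` occupies no
more classes modulo `M'` than modulo `M`. -/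
lemma card_res_le_of {A : Finset ℤ} {M M' : ℕ}
    (h : ∀ e ∈ A - A, (M : ℤ) ∣ e → (M' : ℤ) ∣ e) : (res A M').card ≤ (res A M).card := by
  have : ∀ x : ZMod M', ∃ a : ℤ, x ∈ res A M' → a ∈ A ∧ (a : ZMod M') = x := by
    intro x
    by_cases hx : x ∈ res A M'
    · obtain ⟨a, ha, rfl⟩ := mem_res.1 hx
      exact ⟨a, fun _ => ⟨ha, rfl⟩⟩
    · exact ⟨0, fun h => absurd h hx⟩
  choose f hf using this
  refine Finset.card_le_card_of_injOn (fun x => ((f x : ℤ) : ZMod M)) ?_ ?_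
  · intro x hx
    exact Finset.mem_coe.2 (mem_res.2 ⟨_, (hf x hx).1, rfl⟩)
  · intro x hx y hy hxy
    rw [← (hf x hx).2, ← (hf y hy).2, cast_eq_iff]
    exact h _ (Finset.sub_mem_sub (hf x hx).1 (hf y hy).1) (cast_eq_iff.1 hxy)

/-- A modulus `M` is saturated for `A` if it is the greatest common divisor of the differences of
`A` that are divisible by `M`. -/
def Sat (A : Finset ℤ) (M : ℕ) : Prop :=
  ∀ d : ℤ, (∀ e ∈ A - A, (M : ℤ) ∣ e → d ∣ e) → d ∣ M

lemma exists_sat {A : Finset ℤ} {M : ℕ} (h : (res A M).card < A.card) :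
    ∃ M' : ℕ, 0 < M' ∧ M ∣ M' ∧ Sat A M' ∧ (res A M').card ≤ (res A M).card := by
  classical
  set E := (A - A).filter (fun e => (M : ℤ) ∣ e) with hE
  set g : ℤ := E.gcd id with hg
  have hgE : ∀ e ∈ E, g ∣ e := fun e he => Finset.gcd_dvd he
  have hMg : (M : ℤ) ∣ g := Finset.dvd_gcd fun e he => (Finset.mem_filter.1 he).2
  have hg0 : g ≠ 0 := by
    obtain ⟨a, ha, b, hb, hab, he⟩ := Finset.exists_ne_map_eq_of_card_lt_of_maps_to h
      (f := (Int.cast : ℤ → ZMod M)) (fun a ha => Finset.mem_coe.2 (mem_res.2 ⟨a, ha, rfl⟩))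
    intro h0
    have h1 := hgE (a - b) (Finset.mem_filter.2 ⟨Finset.sub_mem_sub ha hb, cast_eq_iff.1 he⟩)
    rw [h0, zero_dvd_iff, sub_eq_zero] at h1
    exact hab h1
  refine ⟨g.natAbs, Int.natAbs_pos.2 hg0, Int.natCast_dvd.1 hMg, ?_, ?_⟩
  · intro d hd
    rw [Int.dvd_natAbs]
    refine Finset.dvd_gcd fun e he => hd e (Finset.mem_filter.1 he).1 ?_
    rw [Int.natAbs_dvd]
    exact hgE e he
  · refine card_res_le_of fun e he hMe => ?_
    rw [Int.natAbs_dvd]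
    exact hgE e (Finset.mem_filter.2 ⟨he, hMe⟩)

open Classical in
/-- Classes that are not full make the number of residues grow more slowly. -/
lemma card_not_full_add {k : ℕ} (l : Fin k → ℤ) (hl : ∀ i, l i ≠ 0) (A : Finset ℤ) {M : ℕ}
    (hM : 0 < M) :
    ((res A M).filter (fun r => ¬ Full l A M r)).card + (res A (prodAbs l * M)).card ≤
      prodAbs l * (res A M).card := by
  set L := prodAbs l with hL
  have hL0 : 0 < L := prodAbs_pos hl
  have : NeZero M := ⟨hM.ne'⟩
  have : NeZero (L * M) := ⟨(Nat.mul_pos hL0 hM).ne'⟩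
  let ψ : ZMod (L * M) →+ ZMod M := (ZMod.castHom (Dvd.intro_left L rfl) (ZMod M)).toAddMonoidHom
  have hψc : ∀ z : ℤ, ψ (z : ZMod (L * M)) = (z : ZMod M) := fun z =>
    map_intCast (ZMod.castHom (Dvd.intro_left L rfl) (ZMod M)) z
  have hψ : Function.Surjective ψ := by
    intro r
    obtain ⟨z, rfl⟩ := ZMod.intCast_surjective r
    exact ⟨z, hψc z⟩
  have hfib : ∀ r, (fib ψ Finset.univ r).card = L := by
    intro r
    have h1 := Finset.card_eq_sum_card_fiberwise (f := ψ) (s := Finset.univ) (t := Finset.univ)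
      (fun x _ => Finset.mem_coe.2 (Finset.mem_univ _))
    have hc : ∀ x : ZMod M, (Finset.univ.filter (fun y => ψ y = x)).card =
        (Finset.univ.filter (fun y => ψ y = r)).card := fun x =>
      AddMonoidHom.card_fiber_eq_of_mem_range ψ (hψ x) (hψ r)
    rw [Finset.sum_congr rfl (fun x _ => hc x), Finset.sum_const, smul_eq_mul, Finset.card_univ,
      Finset.card_univ, ZMod.card, ZMod.card] at h1
    exact Nat.eq_of_mul_eq_mul_left hM (h1.symm.trans (Nat.mul_comm L M))
  have h1 : ∀ r ∈ res A M, (if ¬ Full l A M r then 1 else 0) + (fib ψ (res A (L * M)) r).card ≤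
      L := by
    intro r _
    have hsub : fib ψ (res A (L * M)) r ⊆ fib ψ Finset.univ r :=
      fun x hx => mem_fib.2 ⟨Finset.mem_univ _, (mem_fib.1 hx).2⟩
    by_cases hr : Full l A M r
    swap
    · rw [if_pos hr, add_comm]
      refine lt_of_lt_of_eq ?_ (hfib r)
      refine Finset.card_lt_card ⟨hsub, fun hle => hr fun z hz => ?_⟩
      have h2 := hle (mem_fib.2 ⟨Finset.mem_univ _, (hψc z).trans hz⟩)
      obtain ⟨a, ha, haz⟩ := mem_res.1 (mem_fib.1 h2).1
      exact ⟨a, ha, cast_eq_iff.1 haz⟩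
    · rw [if_neg (not_not.2 hr), zero_add]
      exact (Finset.card_le_card hsub).trans_eq (hfib r)
  have h2 := Finset.sum_le_sum h1
  rw [Finset.sum_add_distrib, ← Finset.card_filter, Finset.sum_const, smul_eq_mul,
    mul_comm _ L] at h2
  refine le_trans (Nat.add_le_add_left (le_of_eq ?_) _) h2
  refine Finset.card_eq_sum_card_fiberwise fun x hx => ?_
  obtain ⟨a, ha, rfl⟩ := mem_res.1 (Finset.mem_coe.1 hx)
  exact Finset.mem_coe.2 (mem_res.2 ⟨a, ha, (hψc a).symm⟩)

/-- Exponential decay beats polynomial growth. -/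
lemma exists_J (L p K : ℕ) {ν : ℝ} (hν : 0 < ν) (hν1 : ν < 1) :
    ∃ J : ℕ, (1 - ν) ^ J * (((J * L + 1) ^ p * K : ℕ) : ℝ) < 1 := by
  have h1 := tendsto_pow_const_mul_const_pow_of_abs_lt_one p (r := 1 - ν)
    (by rw [abs_lt]; constructor <;> linarith)
  have h2 := h1.const_mul (((L + 1) ^ p * K : ℕ) : ℝ)
  rw [mul_zero] at h2
  obtain ⟨J, hJ, hJ1⟩ := ((h2.eventually_lt_const one_pos).and
    (Filter.eventually_ge_atTop 1)).exists
  refine ⟨J, lt_of_le_of_lt ?_ hJ⟩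
  have h3 : (J * L + 1) ^ p * K ≤ (L + 1) ^ p * K * J ^ p := by
    calc (J * L + 1) ^ p * K ≤ ((L + 1) * J) ^ p * K := by
          refine Nat.mul_le_mul_right _ (Nat.pow_le_pow_left ?_ _)
          nlinarith
      _ = _ := by rw [mul_pow]; ring
  have h4 : (((J * L + 1) ^ p * K : ℕ) : ℝ) ≤ ((L + 1) ^ p * K * J ^ p : ℕ) :=
    Nat.cast_le.2 h3
  have h5 : (0 : ℝ) ≤ (1 - ν) ^ J := pow_nonneg (by linarith) _
  refine (mul_le_mul_of_nonneg_left h4 h5).trans (le_of_eq ?_)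
  push_cast
  ring

/-- One step of the iteration: refining a saturated modulus by the factor `L` multiplies the size
of a set of incongruent elements of the iterated difference set by `L`. -/
lemma grow {A : Finset ℤ} (hA : A.Nonempty) {L M M' : ℕ} (hL : 0 < L) (hM : 0 < M)
    (hsat : Sat A M) (hM' : L * M ∣ M') {j : ℕ} {H : Finset ℤ}
    (hH : H ⊆ iter (A - A) (j * L)) (hinj : ∀ x ∈ H, ∀ y ∈ H, (M : ℤ) ∣ x - y → x = y) :
    ∃ H' ⊆ iter (A - A) ((j + 1) * L), H'.card = H.card * L ∧
      ∀ x ∈ H', ∀ y ∈ H', (M' : ℤ) ∣ x - y → x = y := by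
  classical
  set E := (A - A).filter (fun e => (M : ℤ) ∣ e) with hE
  have h0 : (0 : ℤ) ∈ E := by
    obtain ⟨a, ha⟩ := hA
    exact Finset.mem_filter.2 ⟨Finset.mem_sub.2 ⟨a, ha, a, ha, sub_self a⟩, dvd_zero _⟩
  have hneg : ∀ e ∈ E, -e ∈ E := by
    intro e he
    obtain ⟨h1, h2⟩ := Finset.mem_filter.1 he
    obtain ⟨a, ha, b, hb, rfl⟩ := Finset.mem_sub.1 h1
    exact Finset.mem_filter.2 ⟨Finset.mem_sub.2 ⟨b, hb, a, ha, by ring⟩, (dvd_neg).2 h2⟩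
  have hgcd : ∀ d : ℤ, (∀ e ∈ E, d ∣ e) → d ∣ M :=
    fun d hd => hsat d fun e he hMe => hd e (Finset.mem_filter.2 ⟨he, hMe⟩)
  choose e he hed using fun c : ℕ =>
    exists_mem_iter h0 hneg hL (fun e he => (Finset.mem_filter.1 he).2) hgcd (c : ℤ)
  have hMz : (M : ℤ) ≠ 0 := by exact_mod_cast hM.ne'
  have hLM : ((L * M : ℕ) : ℤ) ∣ M' := Int.natCast_dvd_natCast.2 hM'
  have hMe : ∀ c, (M : ℤ) ∣ e c := by
    intro c
    have h1 : (M : ℤ) ∣ e c - M * c := (Int.natCast_dvd_natCast.2 (Dvd.intro_left _ rfl)).trans (hed c)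
    simpa using dvd_add h1 (Dvd.intro _ rfl : (M : ℤ) ∣ M * c)
  have key : ∀ x ∈ H, ∀ c ∈ Finset.range L, ∀ y ∈ H, ∀ d ∈ Finset.range L,
      (M' : ℤ) ∣ (x + e c) - (y + e d) → x = y ∧ c = d := by
    intro x hx c hc y hy d hd h
    have h1 : ((L * M : ℕ) : ℤ) ∣ (x + e c) - (y + e d) := hLM.trans h
    have h2 : (M : ℤ) ∣ (x + e c) - (y + e d) :=
      (Int.natCast_dvd_natCast.2 (Dvd.intro_left _ rfl)).trans h1
    have h3 : x = y := by
      refine hinj x hx y hy ?_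
      have := dvd_sub h2 (dvd_sub (hMe c) (hMe d))
      have h4 : (x + e c) - (y + e d) - (e c - e d) = x - y := by ring
      rwa [h4] at this
    refine ⟨h3, ?_⟩
    subst h3
    have h4 := dvd_sub h1 (dvd_sub (hed c) (hed d))
    have h5 : (x + e c) - (x + e d) - ((e c - M * c) - (e d - M * d)) = M * ((c : ℤ) - d) := by ring
    rw [h5, Nat.cast_mul, mul_comm (L : ℤ)] at h4
    have h6 := Int.dvd_of_mul_dvd_mul_left hMz h4
    have hc := Finset.mem_range.1 hc
    have hd := Finset.mem_range.1 hd
    obtain ⟨t, ht⟩ := h6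
    have : t = 0 := by
      by_contra ht0
      rcases lt_or_gt_of_ne ht0 with h | h <;> nlinarith
    subst this
    omega
  refine ⟨(H ×ˢ Finset.range L).image (fun p => p.1 + e p.2), ?_, ?_, ?_⟩
  · intro x hx
    obtain ⟨⟨y, c⟩, hp, rfl⟩ := Finset.mem_image.1 hx
    rw [add_mul, one_mul, iter_add]
    exact Finset.add_mem_add (hH (Finset.mem_product.1 hp).1)
      (iter_mono (Finset.filter_subset _ _) L (he c))
  · rw [Finset.card_image_of_injOn, Finset.card_product, Finset.card_range]
    rintro ⟨x, c⟩ hp ⟨y, d⟩ hq hpq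
    obtain ⟨hx, hc⟩ := Finset.mem_product.1 (Finset.mem_coe.1 hp)
    obtain ⟨hy, hd⟩ := Finset.mem_product.1 (Finset.mem_coe.1 hq)
    obtain ⟨h1, h2⟩ := key x hx c hc y hy d hd (by
      rw [show x + e c = y + e d from hpq, sub_self]; exact dvd_zero _)
    rw [h1, h2]
  · intro x hx y hy hxy
    obtain ⟨⟨x, c⟩, hp, rfl⟩ := Finset.mem_image.1 hx
    obtain ⟨⟨y, d⟩, hq, rfl⟩ := Finset.mem_image.1 hy
    obtain ⟨hx, hc⟩ := Finset.mem_product.1 hp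
    obtain ⟨hy, hd⟩ := Finset.mem_product.1 hq
    obtain ⟨h1, h2⟩ := key x hx c hc y hy d hd hxy
    rw [h1, h2]

open Classical in
/-- For a set of small doubling, some modulus with boundedly many occupied residue classes has
almost all of these classes full: otherwise the iterated difference sets would grow too fast. -/
theorem exists_modulus {k : ℕ} (l : Fin k → ℤ) (hl : ∀ i, l i ≠ 0) (K : ℕ) {ν : ℝ} (hν : 0 < ν)
    (hν1 : ν < 1) : ∃ N0 : ℕ, ∀ A : Finset ℤ, (A - A).card ≤ K * A.card → N0 < A.card →
      ∃ M : ℕ, 0 < M ∧ (res A M).card ≤ N0 ∧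
        (((res A M).filter (fun r => ¬ Full l A M r)).card : ℝ) ≤
          ν * (prodAbs l * (res A M).card) := by
  set L := prodAbs l with hL
  have hL0 : 0 < L := prodAbs_pos hl
  have hLr : (1 : ℝ) ≤ L := by exact_mod_cast hL0
  obtain ⟨J, hJ⟩ := exists_J L (K ^ 5) (K ^ 3) hν hν1
  refine ⟨L ^ J, fun A hK hA => ?_⟩
  have hAne : A.Nonempty := Finset.card_pos.1 (lt_of_le_of_lt (Nat.zero_le _) hA)
  by_contra hno
  push Not at hno
  have hν0 : (0 : ℝ) ≤ 1 - ν := by linarith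
  have hpow : ∀ j ≤ J, ∀ N : ℕ, (N : ℝ) ≤ ((1 - ν) * L) ^ j → N ≤ L ^ J := by
    intro j hj N hN
    have h1 : ((1 - ν) * L) ^ j ≤ (L : ℝ) ^ j :=
      pow_le_pow_left₀ (by positivity) (by nlinarith) _
    have h2 : (N : ℝ) ≤ (L : ℝ) ^ j := hN.trans h1
    have h3 : N ≤ L ^ j := by exact_mod_cast h2
    exact h3.trans (Nat.pow_le_pow_right hL0 hj)
  -- If every modulus fails, the number of residues grows more slowly than `L ^ j`, while `L ^ j`
  -- incongruent elements appear in the iterated difference set.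
  have main : ∀ j ≤ J, ∃ M : ℕ, 0 < M ∧ Sat A M ∧ ((res A M).card : ℝ) ≤ ((1 - ν) * L) ^ j ∧
      ∃ H ⊆ iter (A - A) (j * L), H.card = L ^ j ∧
        ∀ x ∈ H, ∀ y ∈ H, (M : ℤ) ∣ x - y → x = y := by
    intro j
    induction j with
    | zero =>
      intro _
      have h1 : (res A 1).card ≤ 1 :=
        (Finset.card_le_univ _).trans (by simp)
      obtain ⟨M, hM, -, hs, hle⟩ := exists_sat (A := A) (M := 1)
        (lt_of_le_of_lt (h1.trans (Nat.one_le_pow _ _ hL0)) hA)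
      refine ⟨M, hM, hs, ?_, {0}, ?_, by simp, ?_⟩
      · rw [pow_zero]; exact_mod_cast hle.trans h1
      · rw [zero_mul]; exact subset_rfl
      · intro x hx y hy _
        rw [Finset.mem_singleton.1 hx, Finset.mem_singleton.1 hy]
    | succ j ih =>
      intro hj
      obtain ⟨M, hM, hs, hcard, H, hH, hHc, hinj⟩ := ih (by omega)
      have h1 := hno M hM (hpow j (by omega) _ hcard)
      have h2 : (((res A M).filter (fun r => ¬ Full l A M r)).card : ℝ) + (res A (L * M)).card ≤
          L * (res A M).card := by
        exact_mod_cast card_not_full_add l hl A hM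
      have h3 : ((res A (L * M)).card : ℝ) ≤ ((1 - ν) * L) ^ (j + 1) := by
        have h4 : (1 - ν) * L * (res A M).card ≤ (1 - ν) * L * ((1 - ν) * L) ^ j :=
          mul_le_mul_of_nonneg_left hcard (by positivity)
        rw [pow_succ']
        linarith
      obtain ⟨M', hM', hdvd, hs', hle⟩ := exists_sat (lt_of_le_of_lt (hpow _ hj _ h3) hA)
      obtain ⟨H', hH', hc', hinj'⟩ := grow hAne hL0 hM hs hdvd hH hinj
      refine ⟨M', hM', hs', (Nat.cast_le.2 hle).trans h3, H', hH', ?_, hinj'⟩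
      rw [hc', hHc, pow_succ]
  obtain ⟨M, hM, -, hcard, H, hH, hHc, hinj⟩ := main J le_rfl
  obtain ⟨r, -, hmax⟩ := exists_max_fiber (Int.cast : ℤ → ZMod M) A hAne
  have hr : A.card ≤ (res A M).card * (cls A M r).card := card_le_of_fibers _ A _ hmax
  have h1 : H.card * (cls A M r).card ≤ (J * L + 1) ^ (K ^ 5) * (K ^ 3 * A.card) := by
    refine le_trans ?_ (card_iter_add_le hAne hK (J * L))
    rw [← Finset.card_product]
    refine Finset.card_le_card_of_injOn (fun p => p.1 + p.2) ?_ ?_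
    · rintro ⟨x, b⟩ hp
      obtain ⟨hx, hb⟩ := Finset.mem_product.1 (Finset.mem_coe.1 hp)
      exact Finset.add_mem_add (hH hx) (mem_cls.1 hb).1
    · rintro ⟨x, b⟩ hp ⟨y, c⟩ hq hpq
      obtain ⟨hx, hb⟩ := Finset.mem_product.1 (Finset.mem_coe.1 hp)
      obtain ⟨hy, hc⟩ := Finset.mem_product.1 (Finset.mem_coe.1 hq)
      have he : x + b = y + c := hpq
      have h2 : x = y := by
        refine hinj x hx y hy ?_
        have h3 : x - y = c - b := by linarith
        rw [h3, ← cast_eq_iff, (mem_cls.1 hc).2, (mem_cls.1 hb).2]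
      subst h2
      rw [add_left_cancel he]
  have h2 : H.card * A.card ≤ (res A M).card * ((J * L + 1) ^ (K ^ 5) * (K ^ 3 * A.card)) := by
    calc H.card * A.card ≤ H.card * ((res A M).card * (cls A M r).card) :=
          Nat.mul_le_mul_left _ hr
      _ = (res A M).card * (H.card * (cls A M r).card) := by ring
      _ ≤ _ := Nat.mul_le_mul_left _ h1
  have h3 : H.card ≤ (res A M).card * ((J * L + 1) ^ (K ^ 5) * K ^ 3) := by
    refine Nat.le_of_mul_le_mul_right (h2.trans (le_of_eq (by ring))) hAne.card_pos
  have h4 : ((L : ℝ)) ^ J ≤ ((1 - ν) * L) ^ J * (((J * L + 1) ^ (K ^ 5) * K ^ 3 : ℕ) : ℝ) := by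
    have h5 : ((L ^ J : ℕ) : ℝ) ≤ (res A M).card * (((J * L + 1) ^ (K ^ 5) * K ^ 3 : ℕ) : ℝ) := by
      rw [← hHc, ← Nat.cast_mul]
      exact Nat.cast_le.2 h3
    rw [Nat.cast_pow] at h5
    exact h5.trans (mul_le_mul_of_nonneg_right hcard (Nat.cast_nonneg _))
  rw [mul_pow] at h4
  have h5 : (0 : ℝ) < (L : ℝ) ^ J := by positivity
  nlinarith

/-! ### Bounds with an arbitrarily small linear loss -/

lemma card_SD_le_pow {k : ℕ} {G : Type} [AddCommGroup G] (l : Fin k → ℤ) (X : Finset G) :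
    (SD l X).card ≤ X.card ^ k := by
  classical
  refine Finset.card_image_le.trans ?_
  simp

lemma sum_card_layers {α : Type} (R : Finset α) (w : α → ℕ) {N : ℕ} (h : ∀ r ∈ R, w r ≤ N) :
    ∑ t ∈ Finset.Icc 1 N, (R.filter (fun r => t ≤ w r)).card = ∑ r ∈ R, w r := by
  simp only [Finset.card_filter]
  rw [Finset.sum_comm]
  refine Finset.sum_congr rfl fun r hr => ?_
  rw [← Finset.card_filter]
  have : (Finset.Icc 1 N).filter (fun t => t ≤ w r) = Finset.Icc 1 (w r) := by
    ext t
    have := h r hr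
    simp only [Finset.mem_filter, Finset.mem_Icc]
    omega
  rw [this]
  simp

lemma sum_cls_le (A : Finset ℤ) (M : ℕ) (R : Finset (ZMod M)) :
    ∑ r ∈ R, (cls A M r).card ≤ A.card := by
  calc ∑ r ∈ R, (cls A M r).card
      ≤ ∑ r ∈ R ∪ res A M, (cls A M r).card :=
        Finset.sum_le_sum_of_subset Finset.subset_union_left
    _ = A.card := (Finset.card_eq_sum_card_fiberwise fun a ha => Finset.mem_coe.2
        (Finset.mem_union_right _ (mem_res.2 ⟨a, ha, rfl⟩))).symm

lemma sum_cls_res (A : Finset ℤ) (M : ℕ) : ∑ r ∈ res A M, (cls A M r).card = A.card :=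
  (Finset.card_eq_sum_card_fiberwise fun a ha => Finset.mem_coe.2
    (mem_res.2 ⟨a, ha, rfl⟩)).symm

lemma cls_card_le (A : Finset ℤ) (M : ℕ) (r : ZMod M) : (cls A M r).card ≤ A.card :=
  Finset.card_le_card (Finset.filter_subset _ _)

/-- The layer-cake bound combined with the sharp bound in the group of residues. -/
lemma sum_cls_le_sum_SD {n : ℕ} (l : Fin (n + 1) → ℤ) (hl : ∀ i, l i ≠ 0)
    (hg : Finset.univ.gcd l = 1) (A : Finset ℤ) {M : ℕ} (hM : 0 < M) (R : Finset (ZMod M))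
    (hR : ∀ r ∈ R, Full l A M r) :
    sumAbs l * ∑ r ∈ R, (cls A M r).card ≤
      ∑ x ∈ SD l R, (cls (SD l A) M x).card + n * prodAbs l * (SD l R).card := by
  have : NeZero M := ⟨hM.ne'⟩
  refine le_trans ?_ (layers l hl hg A hM R hR A.card)
  rw [← sum_card_layers R (fun r => (cls A M r).card) (fun r _ => cls_card_le A M r)]
  exact Nat.mul_le_mul_left _ (Finset.sum_le_sum fun t _ => card_le_SD n l hl hg _ _)

lemma sumAbs_pos {n : ℕ} {l : Fin (n + 1) → ℤ} (hl : ∀ i, l i ≠ 0) : 0 < sumAbs l :=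
  lt_of_lt_of_le (Int.natAbs_pos.2 (hl 0))
    (Finset.single_le_sum (f := fun i => (l i).natAbs) (fun _ _ => Nat.zero_le _)
      (Finset.mem_univ 0))

open Classical in
/-- If the sum of dilates is not larger than claimed, there is a modulus with boundedly many
occupied residue classes such that all but a small proportion of the elements lie in full
classes. -/
theorem exists_modulus_mass {n : ℕ} (l : Fin (n + 2) → ℤ) (hl : ∀ i, l i ≠ 0)
    {κ : ℝ} (hκ : 0 < κ) : ∃ N0 : ℕ, ∀ A : Finset ℤ, (SD l A).card ≤ sumAbs l * A.card →
      N0 < A.card → ∃ M : ℕ, 0 < M ∧ (res A M).card ≤ N0 ∧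
        (1 - κ) * A.card ≤
          ((∑ r ∈ (res A M).filter (Full l A M), (cls A M r).card : ℕ) : ℝ) := by
  set K := sumAbs l ^ 2 with hK
  have hK0 : 0 < K := pow_pos (sumAbs_pos hl) 2
  set L := prodAbs l with hL
  have hL0 : 0 < L := prodAbs_pos hl
  have hLK : (0 : ℝ) < L * K := by exact_mod_cast Nat.mul_pos hL0 hK0
  set ν : ℝ := min (1 / 2) (κ / (L * K)) with hν
  have hν0 : 0 < ν := lt_min (by norm_num) (div_pos hκ hLK)
  have hν1 : ν < 1 := (min_le_left _ _).trans_lt (by norm_num)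
  have hνκ : ν * (L * K) ≤ κ := (le_div_iff₀ hLK).1 (min_le_right _ _)
  obtain ⟨N0, hN0⟩ := exists_modulus l hl K hν0 hν1
  refine ⟨N0, fun A hA hAN => ?_⟩
  have hAA := card_sub_self_le l hl hA
  obtain ⟨M, hM, hres, hbad⟩ := hN0 A hAA hAN
  refine ⟨M, hM, hres, ?_⟩
  have hAne : A.Nonempty := Finset.card_pos.1 (lt_of_le_of_lt (Nat.zero_le _) hAN)
  obtain ⟨r0, -, hmax⟩ := exists_max_fiber (Int.cast : ℤ → ZMod M) A hAne
  have h1 : (res A M).card * (cls A M r0).card ≤ K * A.card := card_image_mul_cls_le hAA M r0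
  have h2 : ∑ r ∈ (res A M).filter (fun r => ¬ Full l A M r), (cls A M r).card ≤
      ((res A M).filter (fun r => ¬ Full l A M r)).card * (cls A M r0).card := by
    rw [← smul_eq_mul, ← Finset.sum_const]
    exact Finset.sum_le_sum fun r _ => hmax r
  have h3 := Finset.sum_filter_add_sum_filter_not (res A M) (Full l A M)
    (fun r => (cls A M r).card)
  rw [sum_cls_res] at h3
  have h4 : ((∑ r ∈ (res A M).filter (fun r => ¬ Full l A M r), (cls A M r).card : ℕ) : ℝ) ≤
      κ * A.card := by
    calc _ ≤ ((((res A M).filter (fun r => ¬ Full l A M r)).card * (cls A M r0).card : ℕ) : ℝ) :=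
          Nat.cast_le.2 h2
      _ ≤ ν * (L * (res A M).card) * (cls A M r0).card := by
          rw [Nat.cast_mul]
          exact mul_le_mul_of_nonneg_right hbad (Nat.cast_nonneg _)
      _ = ν * L * (((res A M).card * (cls A M r0).card : ℕ) : ℝ) := by push_cast; ring
      _ ≤ ν * L * ((K * A.card : ℕ) : ℝ) :=
          mul_le_mul_of_nonneg_left (Nat.cast_le.2 h1) (by positivity)
      _ = ν * (L * K) * A.card := by push_cast; ring
      _ ≤ _ := mul_le_mul_of_nonneg_right hνκ (Nat.cast_nonneg _)
  have h5 : ((∑ r ∈ (res A M).filter (Full l A M), (cls A M r).card : ℕ) : ℝ) +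
      ((∑ r ∈ (res A M).filter (fun r => ¬ Full l A M r), (cls A M r).card : ℕ) : ℝ) = A.card := by
    rw [← h3, Nat.cast_add]
  linarith

/-- The claimed bound with an arbitrarily small linear loss. -/
theorem weak_bound {n : ℕ} (l : Fin (n + 2) → ℤ) (hl : ∀ i, l i ≠ 0)
    (hg : Finset.univ.gcd l = 1) {ε : ℝ} (hε : 0 < ε) :
    ∃ C : ℝ, 0 ≤ C ∧ ∀ A : Finset ℤ, (sumAbs l - ε) * A.card - C ≤ (SD l A).card := by
  classical
  have hS0 : (0 : ℝ) < sumAbs l := Nat.cast_pos.2 (sumAbs_pos hl)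
  obtain ⟨N0, hN0⟩ := exists_modulus_mass l hl (κ := ε / sumAbs l) (div_pos hε hS0)
  refine ⟨sumAbs l * N0 + ((n + 1) * prodAbs l * N0 ^ (n + 2) : ℕ), by positivity,
    fun A => ?_⟩
  have hA0 : (0 : ℝ) ≤ A.card := Nat.cast_nonneg _
  have hC1 : (0 : ℝ) ≤ ((n + 1) * prodAbs l * N0 ^ (n + 2) : ℕ) := Nat.cast_nonneg _
  have hC2 : (0 : ℝ) ≤ sumAbs l * N0 := by positivity
  have hf0 : (0 : ℝ) ≤ (SD l A).card := Nat.cast_nonneg _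
  rcases le_or_gt A.card N0 with h | h
  · have h1 : (A.card : ℝ) ≤ N0 := Nat.cast_le.2 h
    nlinarith
  rcases le_or_gt (SD l A).card (sumAbs l * A.card) with h1 | h1
  swap
  · have h2 : ((sumAbs l * A.card : ℕ) : ℝ) ≤ (SD l A).card := Nat.cast_le.2 h1.le
    push_cast at h2
    nlinarith
  obtain ⟨M, hM, hres, hmass⟩ := hN0 A h1 h
  set R := (res A M).filter (Full l A M) with hR
  have h2 := sum_cls_le_sum_SD l hl hg A hM R (fun r hr => (Finset.mem_filter.1 hr).2)
  have h3 : (SD l R).card ≤ N0 ^ (n + 2) := (card_SD_le_pow l R).trans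
    (Nat.pow_le_pow_left ((Finset.card_le_card (Finset.filter_subset _ _)).trans hres) _)
  have h4 : sumAbs l * ∑ r ∈ R, (cls A M r).card ≤
      (SD l A).card + (n + 1) * prodAbs l * N0 ^ (n + 2) :=
    h2.trans (Nat.add_le_add (sum_cls_le _ _ _) (Nat.mul_le_mul_left _ h3))
  have h5 : (sumAbs l : ℝ) * ((∑ r ∈ R, (cls A M r).card : ℕ) : ℝ) ≤
      (SD l A).card + (((n + 1) * prodAbs l * N0 ^ (n + 2) : ℕ) : ℝ) := by
    exact_mod_cast h4
  have h6 := mul_le_mul_of_nonneg_left hmass hS0.le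
  have h7 : (sumAbs l : ℝ) * ((1 - ε / sumAbs l) * A.card) = (sumAbs l - ε) * A.card := by
    field_simp
  linarith

/-- A set of integers is normalized if its differences are coprime. -/
def Normalized (A : Finset ℤ) : Prop := ∀ d : ℤ, (∀ e ∈ A - A, d ∣ e) → IsUnit d

/-- A normalized set with almost all of its elements in one residue class satisfies the claim: an
element outside this class contributes a further residue class to the sum of dilates. -/
theorem spread {n : ℕ} (l : Fin (n + 2) → ℤ) (hl : ∀ i, l i ≠ 0)
    (hg : Finset.univ.gcd l = 1) : ∃ C ε : ℝ, 0 ≤ C ∧ 0 < ε ∧ ε ≤ 1 ∧ ∀ A : Finset ℤ,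
      Normalized A → (sumAbs l : ℝ) * A.card - C ≤ (SD l A).card ∨
        ∀ d : ℤ, ¬ IsUnit d → ∀ c : ℤ, ∀ B ⊆ A, (∀ b ∈ B, d ∣ b - c) →
          (B.card : ℝ) ≤ (1 - ε) * A.card := by
  classical
  obtain ⟨C, hC, hweak⟩ := weak_bound l hl hg (ε := 1 / 4) (by norm_num)
  set S : ℝ := (sumAbs l : ℝ) with hS
  have hS0 : (0 : ℝ) < S := Nat.cast_pos.2 (sumAbs_pos hl)
  refine ⟨C, 3 / (4 * (S + 1)), hC, by positivity, ?_, fun A hA => ?_⟩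
  · rw [div_le_one (by positivity)]; linarith
  rw [or_iff_not_imp_right]
  intro hno
  push Not at hno
  obtain ⟨d, hd, c, B0, hB0, hB0d, hbig⟩ := hno
  set B := A.filter (fun b => d ∣ b - c) with hB
  have hBB : B0 ⊆ B := fun b hb => Finset.mem_filter.2 ⟨hB0 hb, hB0d b hb⟩
  have hBbig : (1 - 3 / (4 * (S + 1))) * A.card < B.card :=
    hbig.trans_le (Nat.cast_le.2 (Finset.card_le_card hBB))
  have hBA : B ⊆ A := Finset.filter_subset _ _
  have hBd : ∀ b ∈ B, d ∣ b - c := fun b hb => (Finset.mem_filter.1 hb).2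
  have hBne : B.Nonempty := by
    rw [← Finset.card_pos]
    have h1 : (0 : ℝ) ≤ (1 - 3 / (4 * (S + 1))) * A.card := by
      refine mul_nonneg ?_ (Nat.cast_nonneg _)
      rw [sub_nonneg, div_le_one (by positivity)]; linarith
    exact_mod_cast h1.trans_lt hBbig
  obtain ⟨a, ha, had⟩ : ∃ a ∈ A, ¬ d ∣ a - c := by
    by_contra h
    push Not at h
    refine hd (hA d fun e he => ?_)
    obtain ⟨a, ha, b, hb, rfl⟩ := Finset.mem_sub.1 he
    have := dvd_sub (h a ha) (h b hb)
    rwa [sub_sub_sub_cancel_right] at this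
  obtain ⟨i, hi⟩ : ∃ i, ¬ d ∣ l i * (a - c) := by
    by_contra h
    push Not at h
    apply had
    have h1 := Finset.dvd_gcd (s := Finset.univ) (f := fun i => l i * (a - c)) (a := d)
      (fun i _ => h i)
    rw [Finset.gcd_mul_right, hg, one_mul] at h1
    exact (dvd_normalize_iff).1 h1
  -- Replacing `B` by an element outside its class in one summand gives a set that is disjoint from
  -- the sum of dilates of `B` and at least as large as `B`.
  set P : Fin (n + 2) → Finset ℤ := Function.update (fun _ => B) i {a} with hP
  have hPi : P i = {a} := Function.update_self _ _ _
  have hPj : ∀ j, j ≠ i → P j = B := fun j hj => Function.update_of_ne hj _ _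
  have hPA : ∀ j, P j ⊆ A := by
    intro j
    by_cases hj : j = i
    · subst hj; rw [hPi]; exact Finset.singleton_subset_iff.2 ha
    · rw [hPj j hj]; exact hBA
  have hPne : ∀ j, (P j).Nonempty := by
    intro j
    by_cases hj : j = i
    · subst hj; rw [hPi]; exact Finset.singleton_nonempty _
    · rw [hPj j hj]; exact hBne
  have h1 : B.card ≤ (SDt l P).card := by
    have h2 := sum_card_le_SDt (n + 1) l hl P hPne
    have h3 : ∑ j, (P j).card = 1 + (n + 1) * B.card := by
      rw [← Finset.add_sum_erase _ _ (Finset.mem_univ i), hPi, Finset.card_singleton,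
        Finset.sum_congr rfl (fun j hj => by rw [hPj j (Finset.ne_of_mem_erase hj)]),
        Finset.sum_const, Finset.card_erase_of_mem (Finset.mem_univ i)]
      simp
    have h4 := hBne.card_pos
    rw [h3] at h2
    nlinarith
  have hdisj : Disjoint (SD l B) (SDt l P) := by
    rw [Finset.disjoint_left]
    intro x hx hx'
    obtain ⟨g, hgB, rfl⟩ := mem_SD.1 hx
    obtain ⟨h, hh, heq⟩ := mem_SDt.1 hx'
    apply hi
    have h5 : ∀ j, j ≠ i → d ∣ l j * (h j - g j) := by
      intro j hj
      have h6 := hh j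
      rw [hPj j hj] at h6
      have := dvd_sub (hBd _ h6) (hBd _ (hgB j))
      rw [sub_sub_sub_cancel_right] at this
      exact this.mul_left _
    have h7 : ∑ j, l j * (h j - g j) = 0 := by
      simp only [smul_eq_mul] at heq
      simp only [mul_sub, Finset.sum_sub_distrib]
      rw [heq, sub_self]
    rw [← Finset.add_sum_erase _ _ (Finset.mem_univ i)] at h7
    have h8 : d ∣ ∑ j ∈ Finset.univ.erase i, l j * (h j - g j) :=
      Finset.dvd_sum fun j hj => h5 j (Finset.ne_of_mem_erase hj)
    have h9 : d ∣ l i * (h i - g i) := by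
      rw [eq_neg_of_add_eq_zero_left h7]
      exact (dvd_neg).2 h8
    have h10 : h i = a := by
      have := hh i
      rw [hPi] at this
      exact Finset.mem_singleton.1 this
    have h11 := dvd_add h9 ((hBd _ (hgB i)).mul_left (l i))
    rw [h10, ← mul_add, sub_add_sub_cancel] at h11
    exact h11
  have hsub : SD l B ∪ SDt l P ⊆ SD l A := by
    refine Finset.union_subset (SD_mono hBA) fun x hx => ?_
    obtain ⟨g, hgP, rfl⟩ := mem_SDt.1 hx
    exact mem_SD.2 ⟨g, fun j => hPA j (hgP j), rfl⟩
  have h2 := Finset.card_le_card hsub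
  rw [Finset.card_union_of_disjoint hdisj] at h2
  have h3 : ((SD l B).card : ℝ) + B.card ≤ (SD l A).card := by
    exact_mod_cast (Nat.add_le_add_left h1 _).trans h2
  have h4 := hweak B
  have h5 : (S + 3 / 4) * ((1 - 3 / (4 * (S + 1))) * A.card) ≤ (S + 3 / 4) * B.card :=
    mul_le_mul_of_nonneg_left hBbig.le (by positivity)
  have h6 : S * A.card ≤ (S + 3 / 4) * ((1 - 3 / (4 * (S + 1))) * A.card) := by
    rw [← mul_assoc]
    refine mul_le_mul_of_nonneg_right ?_ (Nat.cast_nonneg _)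
    have h7 : 3 / (4 * (S + 1)) * (S + 1) = 3 / 4 := by field_simp
    have h8 : 0 < 3 / (4 * (S + 1)) := by positivity
    nlinarith
  linarith

/-! ### Sets whose large residue classes are full -/

/-- By the pigeonhole principle some scale has no weight between `ρ ^ (i + 2)` and `ρ ^ (i + 1)`. -/
lemma exists_gap {ι : Type} [Fintype ι] {q0 : ℕ} (hq : Fintype.card ι ≤ q0) (w : ι → ℝ) {ρ : ℝ}
    (hρ : 0 < ρ) (hρ1 : ρ ≤ 1) :
    ∃ i ≤ q0, ∀ r, w r < ρ ^ (i + 2) ∨ ρ ^ (i + 1) ≤ w r := by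
  by_contra h
  push Not at h
  choose f hf using fun i : Fin (q0 + 1) => h i (Nat.lt_succ_iff.1 i.2)
  have hinj : Function.Injective f := by
    have aux : ∀ i j : Fin (q0 + 1), i < j → f i ≠ f j := by
      intro i j hij he
      have h1 := (hf i).1
      have h2 := (hf j).2
      rw [he] at h1
      have h3 : ρ ^ ((j : ℕ) + 1) ≤ ρ ^ ((i : ℕ) + 2) :=
        pow_le_pow_of_le_one hρ.le hρ1 (by have := Fin.lt_def.1 hij; omega)
      linarith
    intro i j hij
    rcases lt_trichotomy i j with h | h | h
    · exact absurd hij (aux i j h)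
    · exact h
    · exact absurd hij.symm (aux j i h)
  have := Fintype.card_le_of_injective f hinj
  rw [Fintype.card_fin] at this
  omega

/-- The claim for sets such that, for some bounded modulus, the large residue classes are full and
the others are much smaller. If all occupied classes are full the layer-cake bound suffices. Otherwise
the rigidity of the group inequality provides either an extra layer or an extra residue class in the
sum of dilates, which outweighs the small classes. -/
lemma bound_of_full {n : ℕ} (l : Fin (n + 2) → ℤ) (hl : ∀ i, l i ≠ 0)
    (hg : Finset.univ.gcd l = 1) {q0 q : ℕ} (hq : 0 < q) (hq0 : q ≤ q0) (A : Finset ℤ)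
    {σ σ' : ℝ} (hσ : 0 ≤ σ) (hσ' : sumAbs l * σ' ≤ σ) (R : Finset (ZMod q))
    (hne : R.Nonempty) (hfull : ∀ r ∈ R, Full l A q r)
    (hbig : ∀ r ∈ R, σ * A.card ≤ (cls A q r).card)
    (hmass : (1 - σ') * A.card ≤ ((∑ r ∈ R, (cls A q r).card : ℕ) : ℝ)) :
    (sumAbs l : ℝ) * A.card - ((sumAbs l + (n + 1) * prodAbs l * q0 : ℕ) : ℝ) ≤
      (SD l A).card := by
  classical
  have : NeZero q := ⟨hq.ne'⟩
  have hS1 : (1 : ℝ) ≤ sumAbs l := by exact_mod_cast sumAbs_pos hl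
  set S := sumAbs l with hS
  set D := (n + 1) * prodAbs l * q0 with hD
  have hA0 : (0 : ℝ) ≤ A.card := Nat.cast_nonneg _
  have hSD : (SD l R).card ≤ q0 := ((Finset.card_le_univ _).trans (by simp)).trans hq0
  have hSD' : (n + 1) * prodAbs l * (SD l R).card ≤ D := Nat.mul_le_mul_left _ hSD
  have hlow := sum_cls_le_sum_SD l hl hg A hq R hfull
  have hRA : R ⊆ res A q := by
    intro r hr
    obtain ⟨a, ha⟩ := (hfull r hr).nonempty
    exact mem_res.2 ⟨a, (mem_cls.1 ha).1, (mem_cls.1 ha).2⟩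
  by_cases hex : R = res A q
  · rw [hex, sum_cls_res, ← hex] at hlow
    have h1 : S * A.card ≤ (SD l A).card + D :=
      hlow.trans (Nat.add_le_add (sum_cls_le _ _ _) hSD')
    have h2 : (S : ℝ) * A.card ≤ (SD l A).card + D := by exact_mod_cast h1
    push_cast
    linarith
  rcases le_or_gt (SD l R).card R.card with hle | hgt
  · -- an extra residue class
    obtain ⟨g, hgA, ⟨i, hi⟩, hx⟩ : ∃ g : Fin (n + 2) → ZMod q, (∀ i, g i ∈ res A q) ∧
        (∃ i, g i ∈ R) ∧ ∑ i, l i • g i ∉ SD l R := by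
      by_contra h
      push Not at h
      exact hex (exact_structure l hl hg hRA hne hle h)
    set x := ∑ i, l i • g i with hxdef
    have h1 : (cls A q (g i)).card ≤ (cls (SD l A) q x).card := by
      choose a ha hag using fun j => mem_res.1 (hgA j)
      refine Finset.card_le_card_of_injOn
        (fun b => ∑ j, l j * (Function.update a i b j)) ?_ ?_
      · intro b hb
        obtain ⟨hbA, hbg⟩ := mem_cls.1 (Finset.mem_coe.1 hb)
        refine Finset.mem_coe.2 (mem_cls.2 ⟨mem_SD.2 ⟨_, fun j => ?_, rfl⟩, ?_⟩)
        · by_cases hj : j = i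
          · subst hj; rw [Function.update_self]; exact hbA
          · rw [Function.update_of_ne hj]; exact ha j
        · rw [Int.cast_sum, hxdef]
          refine Finset.sum_congr rfl fun j _ => ?_
          rw [Int.cast_mul, zsmul_eq_mul]
          congr 1
          by_cases hj : j = i
          · subst hj; rw [Function.update_self]; exact hbg
          · rw [Function.update_of_ne hj]; exact hag j
      · intro b _ c _ hbc
        simp only at hbc
        rw [← Finset.add_sum_erase _ _ (Finset.mem_univ i),
          ← Finset.add_sum_erase _ _ (Finset.mem_univ i)] at hbc
        have h2 : ∀ b : ℤ, ∑ j ∈ Finset.univ.erase i, l j * Function.update a i b j =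
            ∑ j ∈ Finset.univ.erase i, l j * a j := fun b =>
          Finset.sum_congr rfl fun j hj => by
            rw [Function.update_of_ne (Finset.ne_of_mem_erase hj)]
        rw [h2, h2, Function.update_self, Function.update_self] at hbc
        exact mul_left_cancel₀ (hl i) (add_right_cancel hbc)
    have h2 : (cls (SD l A) q x).card + ∑ y ∈ SD l R, (cls (SD l A) q y).card ≤ (SD l A).card := by
      rw [← Finset.sum_insert (f := fun y => (cls (SD l A) q y).card) hx]
      exact sum_cls_le _ _ _
    have h3 : S * ∑ r ∈ R, (cls A q r).card + (cls A q (g i)).card ≤ (SD l A).card + D := by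
      linarith
    have h4 : (S : ℝ) * ((∑ r ∈ R, (cls A q r).card : ℕ) : ℝ) + (cls A q (g i)).card ≤
        (SD l A).card + D := by exact_mod_cast h3
    have h5 := hbig _ hi
    have h6 := mul_le_mul_of_nonneg_left hmass (by linarith : (0 : ℝ) ≤ S)
    have h7 := mul_le_mul_of_nonneg_right hσ' hA0
    have h8 : (0 : ℝ) ≤ S := by linarith
    push_cast
    nlinarith
  · -- extra layers
    set T := ⌊σ * A.card⌋₊ with hT
    have hTr : ∀ r ∈ R, T ≤ (cls A q r).card := fun r hr =>
      Nat.floor_le_of_le (hbig r hr)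
    have hTA : T ≤ A.card := by
      obtain ⟨r, hr⟩ := hne
      exact (hTr r hr).trans (cls_card_le _ _ _)
    have h1 := layers l hl hg A hq R hfull A.card
    have h2 : ∑ r ∈ R, (cls A q r).card + T ≤ ∑ t ∈ Finset.Icc 1 A.card,
        (SD l (R.filter (fun r => t ≤ (cls A q r).card))).card := by
      rw [← sum_card_layers R (fun r => (cls A q r).card) (fun r _ => cls_card_le A q r)]
      have h3 : T = ∑ t ∈ Finset.Icc 1 A.card, if t ≤ T then 1 else 0 := by
        rw [← Finset.card_filter]
        have : (Finset.Icc 1 A.card).filter (fun t => t ≤ T) = Finset.Icc 1 T := by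
          ext t
          simp only [Finset.mem_filter, Finset.mem_Icc]
          omega
        rw [this]
        simp
      nth_rewrite 1 [h3]
      rw [← Finset.sum_add_distrib]
      refine Finset.sum_le_sum fun t _ => ?_
      split_ifs with ht
      · have h4 : R.filter (fun r => t ≤ (cls A q r).card) = R :=
          Finset.filter_true_of_mem fun r hr => ht.trans (hTr r hr)
        rw [h4]
        exact hgt
      · exact card_le_SD _ l hl hg _ _
    have h3 : S * (∑ r ∈ R, (cls A q r).card + T) ≤ (SD l A).card + D :=
      (Nat.mul_le_mul_left _ h2).trans (h1.trans (Nat.add_le_add (sum_cls_le _ _ _) hSD'))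
    have h4 : (S : ℝ) * (((∑ r ∈ R, (cls A q r).card : ℕ) : ℝ) + T) ≤ (SD l A).card + D := by
      exact_mod_cast h3
    have h5 : σ * A.card < T + 1 := Nat.lt_floor_add_one _
    have h6 : σ' * A.card ≤ σ * A.card := by
      rcases le_or_gt σ' 0 with h | h
      · exact mul_le_mul_of_nonneg_right (h.trans hσ) hA0
      · refine mul_le_mul_of_nonneg_right (le_trans ?_ hσ') hA0
        nlinarith
    have h7 : (S : ℝ) * (A.card - 1) ≤ S * (((∑ r ∈ R, (cls A q r).card : ℕ) : ℝ) + T) :=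
      mul_le_mul_of_nonneg_left (by linarith) (by linarith)
    push_cast
    linarith

/-- The claim for sets whose large residue classes for some bounded modulus are full. -/
theorem bound_of_large_full {n : ℕ} (l : Fin (n + 2) → ℤ) (hl : ∀ i, l i ≠ 0)
    (hg : Finset.univ.gcd l = 1) (q0 : ℕ) : ∃ σ C : ℝ, 0 < σ ∧ σ ≤ 1 ∧ 0 ≤ C ∧
      ∀ (A : Finset ℤ) (q : ℕ), 0 < q → q ≤ q0 →
        (∀ r : ZMod q, σ * A.card ≤ (cls A q r).card → Full l A q r) →
          (sumAbs l : ℝ) * A.card - C ≤ (SD l A).card := by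
  classical
  have hS1 : (1 : ℝ) ≤ sumAbs l := by exact_mod_cast sumAbs_pos hl
  set ρ : ℝ := 1 / (sumAbs l * q0 + 1) with hρ
  have hden : (0 : ℝ) < sumAbs l * q0 + 1 := by positivity
  have hρ0 : 0 < ρ := by positivity
  have hρ1 : ρ ≤ 1 := by
    rw [hρ, div_le_one hden]
    have : (0 : ℝ) ≤ sumAbs l * q0 := by positivity
    linarith
  have hρS : sumAbs l * q0 * ρ < 1 := by
    rw [hρ, mul_one_div, div_lt_one hden]
    linarith
  refine ⟨ρ ^ (q0 + 1), ((sumAbs l + (n + 1) * prodAbs l * q0 : ℕ) : ℝ), by positivity,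
    pow_le_one₀ hρ0.le hρ1, Nat.cast_nonneg _, fun A q hq hqq hfull => ?_⟩
  have : NeZero q := ⟨hq.ne'⟩
  rcases A.eq_empty_or_nonempty with rfl | hA
  · simp only [Finset.card_empty, Nat.cast_zero, mul_zero]
    have h1 : (0 : ℝ) ≤ ((sumAbs l + (n + 1) * prodAbs l * q0 : ℕ) : ℝ) := Nat.cast_nonneg _
    have h2 : (0 : ℝ) ≤ ((SD l (∅ : Finset ℤ)).card : ℝ) := Nat.cast_nonneg _
    linarith
  have hA0 : (0 : ℝ) < A.card := Nat.cast_pos.2 hA.card_pos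
  obtain ⟨i, hi, hgap⟩ := exists_gap (ι := ZMod q) (q0 := q0) (by rw [ZMod.card]; exact hqq)
    (fun r => ((cls A q r).card : ℝ) / A.card) hρ0 hρ1
  set R : Finset (ZMod q) := Finset.univ.filter (fun r => ρ ^ (i + 1) * A.card ≤ (cls A q r).card)
    with hR
  have hmass : (1 - q0 * ρ ^ (i + 2)) * A.card ≤ ((∑ r ∈ R, (cls A q r).card : ℕ) : ℝ) := by
    have h1 : ((∑ r ∈ R, (cls A q r).card : ℕ) : ℝ) + ∑ r ∈ Finset.univ.filter
        (fun r => ¬ ρ ^ (i + 1) * A.card ≤ (cls A q r).card), ((cls A q r).card : ℝ) = A.card := by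
      rw [Nat.cast_sum, hR, Finset.sum_filter_add_sum_filter_not]
      have : A.card = ∑ r, (cls A q r).card := Finset.card_eq_sum_card_fiberwise
        fun x _ => Finset.mem_coe.2 (Finset.mem_univ _)
      rw [this, Nat.cast_sum]
    have h2 : ∑ r ∈ Finset.univ.filter
        (fun r => ¬ ρ ^ (i + 1) * A.card ≤ (cls A q r).card), ((cls A q r).card : ℝ) ≤
        q0 * (ρ ^ (i + 2) * A.card) := by
      refine (Finset.sum_le_card_nsmul _ _ (ρ ^ (i + 2) * A.card) fun r hr => ?_).trans ?_
      · rcases hgap r with h | h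
        · exact ((div_lt_iff₀ hA0).1 h).le
        · exact absurd ((le_div_iff₀ hA0).1 h) (Finset.mem_filter.1 hr).2
      · rw [nsmul_eq_mul]
        refine mul_le_mul_of_nonneg_right (Nat.cast_le.2 ?_) (by positivity)
        exact ((Finset.card_le_univ _).trans (by rw [ZMod.card])).trans hqq
    linarith
  have hsmall : sumAbs l * (q0 * ρ ^ (i + 2)) ≤ ρ ^ (i + 1) := by
    have : sumAbs l * (q0 * ρ ^ (i + 2)) = (sumAbs l * q0 * ρ) * ρ ^ (i + 1) := by ring
    rw [this]
    exact mul_le_of_le_one_left (by positivity) hρS.le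
  refine bound_of_full l hl hg hq hqq A (σ := ρ ^ (i + 1)) (σ' := q0 * ρ ^ (i + 2)) (by positivity)
    hsmall R ?_ (fun r hr => hfull r ?_) (fun r hr => (Finset.mem_filter.1 hr).2) hmass
  · rw [Finset.nonempty_iff_ne_empty]
    intro h0
    rw [h0, Finset.sum_empty, Nat.cast_zero] at hmass
    have h1 : (q0 : ℝ) * ρ ^ (i + 2) < 1 := by
      calc (q0 : ℝ) * ρ ^ (i + 2) = (q0 * ρ) * ρ ^ (i + 1) := by ring
        _ ≤ q0 * ρ := mul_le_of_le_one_right (by positivity) (pow_le_one₀ hρ0.le hρ1)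
        _ ≤ sumAbs l * (q0 * ρ) := le_mul_of_one_le_left (by positivity) hS1
        _ < 1 := by rw [← mul_assoc]; exact hρS
    have : 0 < (1 - q0 * ρ ^ (i + 2)) * A.card := mul_pos (by linarith) hA0
    linarith
  · refine le_trans (mul_le_mul_of_nonneg_right ?_ hA0.le) (Finset.mem_filter.1 hr).2
    exact pow_le_pow_of_le_one hρ0.le hρ1 (by omega)

/-! ### From superlevel sets to full classes -/

/-- Reduction of residues modulo `M` to residues modulo a divisor `q`. -/
def red {q M : ℕ} (h : q ∣ M) : ZMod M →+ ZMod q := (ZMod.castHom h (ZMod q)).toAddMonoidHom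

lemma red_cast {q M : ℕ} (h : q ∣ M) (z : ℤ) : red h (z : ZMod M) = (z : ZMod q) :=
  map_intCast (ZMod.castHom h (ZMod q)) z

lemma red_surjective {q M : ℕ} (h : q ∣ M) : Function.Surjective (red h) := by
  intro r
  obtain ⟨z, rfl⟩ := ZMod.intCast_surjective r
  exact ⟨z, red_cast h z⟩

/-- A residue class modulo `q` is full as soon as almost all of the classes modulo a multiple of
`q` that compose it are full. -/
lemma full_of_filled {k : ℕ} {l : Fin k → ℤ} (hl : ∀ i, l i ≠ 0) {A : Finset ℤ} {q M : ℕ}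
    [NeZero M] (hqM : q ∣ M) {X : Finset (ZMod M)} (hX : ∀ x ∈ X, Full l A M x) {r : ZMod q}
    (h : prodAbs l * (fib (red hqM) Finset.univ 0).card <
      (fib (red hqM) Finset.univ 0).card + prodAbs l * (fib (red hqM) X r).card) :
    Full l A q r := by
  classical
  intro z hz
  set L := prodAbs l with hL
  have hL0 : (L : ℤ) ≠ 0 := by exact_mod_cast (prodAbs_pos hl).ne'
  set Λ := fib (red hqM) Finset.univ 0 with hΛ
  set P := (Λ.image (fun x => (L : ℤ) • x)).image (fun x => x + (z : ZMod M)) with hP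
  have hPc : Λ.card ≤ L * P.card := by
    rw [hP, Finset.card_image_of_injective _ (add_left_injective _)]
    exact card_le_smul_image hL0 Λ
  have hPr : P ⊆ fib (red hqM) Finset.univ r := by
    intro x hx
    obtain ⟨y, hy, rfl⟩ := Finset.mem_image.1 hx
    obtain ⟨u, hu, rfl⟩ := Finset.mem_image.1 hy
    refine mem_fib.2 ⟨Finset.mem_univ _, ?_⟩
    rw [map_add, map_zsmul, (mem_fib.1 hu).2, smul_zero, zero_add, red_cast, hz]
  have hcard : (fib (red hqM) Finset.univ r).card = Λ.card :=
    AddMonoidHom.card_fiber_eq_of_mem_range (red hqM) (red_surjective hqM r)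
      (red_surjective hqM 0)
  have hnd : ¬ Disjoint P (fib (red hqM) X r) := by
    intro hd
    have h1 : P ∪ fib (red hqM) X r ⊆ fib (red hqM) Finset.univ r :=
      Finset.union_subset hPr fun x hx => mem_fib.2 ⟨Finset.mem_univ _, (mem_fib.1 hx).2⟩
    have h2 := Finset.card_le_card h1
    rw [Finset.card_union_of_disjoint hd, hcard] at h2
    have h3 := Nat.mul_le_mul_left L h2
    rw [mul_add] at h3
    omega
  obtain ⟨x, hxP, hxX⟩ := Finset.not_disjoint_iff.1 hnd
  obtain ⟨y, hy, rfl⟩ := Finset.mem_image.1 hxP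
  obtain ⟨u, hu, rfl⟩ := Finset.mem_image.1 hy
  obtain ⟨v, rfl⟩ := ZMod.intCast_surjective u
  have hqv : (q : ℤ) ∣ v := by
    rw [← ZMod.intCast_zmod_eq_zero_iff_dvd, ← red_cast hqM]
    exact (mem_fib.1 hu).2
  obtain ⟨a, ha, had⟩ := hX _ (mem_fib.1 hxX).1 (L * v + z) (by
    rw [Int.cast_add, Int.cast_mul, zsmul_eq_mul])
  refine ⟨a, ha, ?_⟩
  have h1 : ((L * q : ℕ) : ℤ) ∣ a - (L * v + z) :=
    (Int.natCast_dvd_natCast.2 (Nat.mul_dvd_mul_left L hqM)).trans had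
  have h2 : ((L * q : ℕ) : ℤ) ∣ L * v := by
    rw [Nat.cast_mul]
    exact mul_dvd_mul_left _ hqv
  have h3 := dvd_add h1 h2
  have h4 : a - (L * v + z) + L * v = a - z := by ring
  rwa [h4] at h3

/-- Averaging over layers: some low superlevel set has a small sum of dilates. The sizes `s t` are
those of the sums of dilates of the superlevel sets. -/
lemma exists_layer {α : Type} (R : Finset α) (w : α → ℕ) (s : ℕ → ℕ) {a : ℕ} {N τ δ κ : ℝ}
    (hw : ∀ r ∈ R, w r ≤ a) (hs : ∀ t, (R.filter (fun r => t ≤ w r)).card ≤ s t)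
    (hsum : ((∑ t ∈ Finset.Icc 1 a, s t : ℕ) : ℝ) ≤ ((∑ r ∈ R, w r : ℕ) : ℝ) + κ * N)
    (hlow : ∀ t : ℕ, (t : ℝ) ≤ τ * a → N / 2 ≤ a * (R.filter (fun r => t ≤ w r)).card)
    (hτ1 : τ ≤ 1) (hτa : 1 ≤ τ * a) (hδ : 0 < δ) (hN : 0 < N) (hκ : κ < δ * τ / 4) :
    ∃ t : ℕ, (t : ℝ) ≤ τ * a ∧ (s t : ℝ) ≤ (1 + δ) * (R.filter (fun r => t ≤ w r)).card := by
  by_contra hno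
  push Not at hno
  have ha : (0 : ℝ) < a := by
    by_contra h
    have : (a : ℝ) = 0 := le_antisymm (not_lt.1 h) (Nat.cast_nonneg _)
    rw [this, mul_zero] at hτa
    linarith
  set T := ⌊τ * a⌋₊ with hT
  have hT1 : (T : ℝ) ≤ τ * a := Nat.floor_le (by linarith)
  have hT2 : τ * a < T + 1 := Nat.lt_floor_add_one _
  have hT0 : (1 : ℝ) ≤ T := by
    have : 1 ≤ T := Nat.le_floor (by exact_mod_cast hτa)
    exact_mod_cast this
  have hTa : T ≤ a := by
    have : (T : ℝ) ≤ a := hT1.trans (mul_le_of_le_one_left ha.le hτ1)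
    exact_mod_cast this
  have h1 : ∀ t ∈ Finset.Icc 1 a, ((R.filter (fun r => t ≤ w r)).card : ℝ) +
      (if t ≤ T then δ * (N / (2 * a)) else 0) ≤ s t := by
    intro t _
    split_ifs with ht
    · have htr : (t : ℝ) ≤ τ * a := (Nat.cast_le.2 ht).trans hT1
      have h2 := hno t htr
      have h3 : N / (2 * a) ≤ (R.filter (fun r => t ≤ w r)).card := by
        rw [div_le_iff₀ (by positivity)]
        have := hlow t htr
        linarith
      have h4 := mul_le_mul_of_nonneg_left h3 hδ.le
      linarith
    · rw [add_zero]; exact Nat.cast_le.2 (hs t)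
  have h2 := Finset.sum_le_sum h1
  have h3 : ((∑ t ∈ Finset.Icc 1 a, (R.filter (fun r => t ≤ w r)).card : ℕ) : ℝ) =
      ((∑ r ∈ R, w r : ℕ) : ℝ) := by rw [sum_card_layers R w hw]
  have h4 : ∑ t ∈ Finset.Icc 1 a, (if t ≤ T then δ * (N / (2 * a)) else 0) =
      T * (δ * (N / (2 * a))) := by
    rw [← Finset.sum_filter]
    have : (Finset.Icc 1 a).filter (fun t => t ≤ T) = Finset.Icc 1 T := by
      ext t
      simp only [Finset.mem_filter, Finset.mem_Icc]
      omega
    rw [this, Finset.sum_const, nsmul_eq_mul]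
    simp
  rw [Finset.sum_add_distrib, h4, ← Nat.cast_sum, ← Nat.cast_sum, h3] at h2
  have h5 : δ * τ / 4 * N ≤ T * (δ * (N / (2 * a))) := by
    have h6 : τ * a / 2 ≤ T := by linarith
    have h7 : δ * τ / 4 * N = (τ * a / 2) * (δ * (N / (2 * a))) := by field_simp; norm_num
    rw [h7]
    exact mul_le_mul_of_nonneg_right h6 (by positivity)
  have h8 := mul_lt_mul_of_pos_right hκ hN
  linarith

lemma mass_eq (A : Finset ℤ) (M : ℕ) (Y : Finset (ZMod M)) :
    (A.filter (fun b : ℤ => (b : ZMod M) ∈ Y)).card = ∑ r ∈ Y, (cls A M r).card := by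
  rw [Finset.card_eq_sum_card_fiberwise (f := (Int.cast : ℤ → ZMod M)) (t := Y)
    (fun b hb => Finset.mem_coe.2 (Finset.mem_filter.1 (Finset.mem_coe.1 hb)).2)]
  refine Finset.sum_congr rfl fun r hr => ?_
  congr 1
  ext b
  rw [mem_cls, Finset.mem_filter, Finset.mem_filter]
  constructor
  · rintro ⟨⟨h1, -⟩, h2⟩; exact ⟨h1, h2⟩
  · rintro ⟨h1, h2⟩; exact ⟨⟨h1, by rw [h2]; exact hr⟩, h2⟩

/-- Residue classes of comparable size carrying most of a well-spread set form a robust set. -/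
lemma robust_of_spread {A : Finset ℤ} {M K a : ℕ} {X : Finset (ZMod M)} {εA ε1 : ℝ}
    (ha : 0 < a) (hK : 0 < K) (hmax : ∀ r, (cls A M r).card ≤ a)
    (hXa : X.card * a ≤ K * A.card)
    (hmass : (1 - ε1) * A.card ≤ ((∑ r ∈ X, (cls A M r).card : ℕ) : ℝ)) (hε : ε1 ≤ εA / 2)
    (hεA : 0 < εA)
    (hspread : ∀ d : ℤ, ¬ IsUnit d → ∀ c : ℤ, ∀ B ⊆ A, (∀ b ∈ B, d ∣ b - c) →
      (B.card : ℝ) ≤ (1 - εA) * A.card) : Robust X (εA / (2 * K)) := by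
  classical
  intro H hH c0 Y hY hYH
  obtain ⟨c, rfl⟩ := ZMod.intCast_surjective c0
  obtain ⟨d, hd⟩ := Int.subgroup_cyclic (H.comap (Int.castAddHom (ZMod M)))
  have hd' : ∀ m : ℤ, (m : ZMod M) ∈ H ↔ d ∣ m := by
    intro m
    rw [← Int.mem_zmultiples_iff, AddSubgroup.zmultiples_eq_closure, ← hd]
    rfl
  have hdu : ¬ IsUnit d := by
    intro hu
    apply hH
    rw [eq_top_iff]
    intro x _
    obtain ⟨m, rfl⟩ := ZMod.intCast_surjective x
    exact (hd' m).2 hu.dvd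
  have h1 := hspread d hdu c (A.filter (fun b : ℤ => (b : ZMod M) ∈ Y)) (Finset.filter_subset _ _)
    (fun b hb => by
      rw [← hd', Int.cast_sub]
      exact hYH _ (Finset.mem_filter.1 hb).2)
  rw [mass_eq] at h1
  have h2 : ∑ r ∈ X \ Y, (cls A M r).card + ∑ r ∈ Y, (cls A M r).card =
      ∑ r ∈ X, (cls A M r).card := Finset.sum_sdiff hY
  have h3 : ∑ r ∈ X \ Y, (cls A M r).card ≤ (X \ Y).card * a := by
    rw [← smul_eq_mul, ← Finset.sum_const]
    exact Finset.sum_le_sum fun r _ => hmax r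
  have h4 : (X \ Y).card + Y.card = X.card := Finset.card_sdiff_add_card_eq_card hY
  have h2' : ((∑ r ∈ X \ Y, (cls A M r).card : ℕ) : ℝ) + ((∑ r ∈ Y, (cls A M r).card : ℕ) : ℝ) =
      ((∑ r ∈ X, (cls A M r).card : ℕ) : ℝ) := by exact_mod_cast h2
  have h3' : ((∑ r ∈ X \ Y, (cls A M r).card : ℕ) : ℝ) ≤ (X \ Y).card * a := by exact_mod_cast h3
  have h4' : ((X \ Y).card : ℝ) + Y.card = X.card := by exact_mod_cast h4
  have hXa' : (X.card : ℝ) * a ≤ K * A.card := by exact_mod_cast hXa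
  have ha' : (0 : ℝ) < a := Nat.cast_pos.2 ha
  have hK' : (0 : ℝ) < K := Nat.cast_pos.2 hK
  have hA0 : (0 : ℝ) ≤ A.card := Nat.cast_nonneg _
  have h5 : εA / 2 * A.card ≤ (X \ Y).card * a := by
    have := mul_le_mul_of_nonneg_right hε hA0
    linarith
  have h6 : εA / (2 * K) * X.card * a ≤ (X \ Y).card * a := by
    calc εA / (2 * K) * X.card * a = εA / (2 * K) * (X.card * a) := by ring
      _ ≤ εA / (2 * K) * (K * A.card) := mul_le_mul_of_nonneg_left hXa' (by positivity)
      _ = εA / 2 * A.card := by field_simp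
      _ ≤ _ := h5
  have h7 := le_of_mul_le_mul_right h6 ha'
  linarith

/-! ### The bound for normalized sets of integers -/

/-- The kernel of the reduction from modulus `M` to modulus `gcd(p, M)` is the set of multiples
of `p`. -/
lemma exists_smul_of_red_eq_zero {p : ℤ} {M : ℕ} (hqM : Int.gcd p M ∣ M) {h : ZMod M}
    (hh : red hqM h = 0) : ∃ g : ZMod M, h = p • g := by
  obtain ⟨z, rfl⟩ := ZMod.intCast_surjective h
  rw [red_cast, ZMod.intCast_zmod_eq_zero_iff_dvd] at hh
  obtain ⟨v, hv⟩ := hh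
  refine ⟨((Int.gcdA p M * v : ℤ) : ZMod M), ?_⟩
  rw [zsmul_eq_mul, ← Int.cast_mul, cast_eq_iff]
  refine ⟨Int.gcdB p M * v, ?_⟩
  rw [hv, Int.gcd_eq_gcd_ab]
  ring

/-- If the sum of dilates is not larger than claimed, some superlevel set `X` of the weights of
the full residue classes carries most of `A` and has a small sum of dilates: otherwise summing
over the levels would give too large a sum of dilates of `A`. -/
lemma exists_small_level {n : ℕ} (l : Fin (n + 2) → ℤ) (hl : ∀ i, l i ≠ 0)
    (hg : Finset.univ.gcd l = 1) {A : Finset ℤ} (hA : 0 < A.card)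
    (hf : (SD l A).card ≤ sumAbs l * A.card) {M : ℕ} (hM : 0 < M) {R : Finset (ZMod M)}
    (hR : ∀ r ∈ R, Full l A M r) {κ τ δ : ℝ} {K N0 a : ℕ} (hκ0 : 0 < κ) (hδ : 0 < δ)
    (hmass : (1 - κ) * A.card ≤ ((∑ r ∈ R, (cls A M r).card : ℕ) : ℝ)) (hRN : R.card ≤ N0)
    (hmax : ∀ r, (cls A M r).card ≤ a) (hRa : R.card * a ≤ K * A.card) (hτ0 : 0 < τ)
    (hτ1 : τ ≤ 1) (hτa : 1 ≤ τ * a) (hsmall : κ + τ * K ≤ 1 / 2) (hκ : 2 * κ < δ * τ / 4)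
    (hbig : ((n + 1 : ℕ) : ℝ) * prodAbs l * (N0 : ℝ) ^ (n + 2) ≤ κ * A.card) :
    ∃ X ⊆ R, (1 - (κ + τ * K)) * A.card ≤ ((∑ r ∈ X, (cls A M r).card : ℕ) : ℝ) ∧
      ((SD l X).card : ℝ) ≤ (1 + δ) * X.card := by
  have : NeZero M := ⟨hM.ne'⟩
  have hAR : (0 : ℝ) < A.card := Nat.cast_pos.2 hA
  set w : ZMod M → ℕ := fun r => (cls A M r).card with hw
  have hm : ∀ t : ℕ, (t : ℝ) ≤ τ * a → (1 - (κ + τ * K)) * A.card ≤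
      ((∑ r ∈ R.filter (fun r => t ≤ w r), w r : ℕ) : ℝ) := by
    intro t ht
    have h1 := Finset.sum_filter_add_sum_filter_not R (fun r => t ≤ w r) w
    have h2 : ∑ r ∈ R.filter (fun r => ¬ t ≤ w r), w r ≤ R.card * t := by
      refine (Finset.sum_le_card_nsmul _ _ t fun r hr => ?_).trans ?_
      · exact (not_le.1 (Finset.mem_filter.1 hr).2).le
      · exact Nat.mul_le_mul_right _ (Finset.card_filter_le _ _)
    have h3 : ((R.card * t : ℕ) : ℝ) ≤ τ * (K * A.card) := by
      rw [Nat.cast_mul]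
      have h4 : ((R.card * a : ℕ) : ℝ) ≤ ((K * A.card : ℕ) : ℝ) := Nat.cast_le.2 hRa
      rw [Nat.cast_mul, Nat.cast_mul] at h4
      calc (R.card : ℝ) * t ≤ R.card * (τ * a) :=
            mul_le_mul_of_nonneg_left ht (Nat.cast_nonneg _)
        _ = τ * (R.card * a) := by ring
        _ ≤ τ * (K * A.card) := mul_le_mul_of_nonneg_left h4 hτ0.le
    have h5 : ((∑ r ∈ R.filter (fun r => ¬ t ≤ w r), w r : ℕ) : ℝ) ≤ τ * (K * A.card) :=
      (Nat.cast_le.2 h2).trans h3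
    have h6 : ((∑ r ∈ R.filter (fun r => t ≤ w r), w r : ℕ) : ℝ) +
        ((∑ r ∈ R.filter (fun r => ¬ t ≤ w r), w r : ℕ) : ℝ) = ((∑ r ∈ R, w r : ℕ) : ℝ) := by
      rw [← h1, Nat.cast_add]
    linarith
  have hsum : ((∑ t ∈ Finset.Icc 1 a, (SD l (R.filter (fun r => t ≤ w r))).card : ℕ) : ℝ) ≤
      ((∑ r ∈ R, w r : ℕ) : ℝ) + 2 * κ * A.card := by
    have h1 := layers l hl hg A hM R hR a
    have h2 := sum_cls_le (SD l A) M (SD l R)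
    have h3 : (SD l R).card ≤ N0 ^ (n + 2) :=
      (card_SD_le_pow l R).trans (Nat.pow_le_pow_left hRN _)
    have h4 : sumAbs l * ∑ t ∈ Finset.Icc 1 a, (SD l (R.filter (fun r => t ≤ w r))).card ≤
        sumAbs l * A.card + (n + 1) * prodAbs l * N0 ^ (n + 2) :=
      h1.trans (add_le_add (h2.trans hf) (Nat.mul_le_mul_left _ h3))
    have hS : (1 : ℝ) ≤ sumAbs l := by exact_mod_cast sumAbs_pos hl
    have h5 : (sumAbs l : ℝ) *
        ((∑ t ∈ Finset.Icc 1 a, (SD l (R.filter (fun r => t ≤ w r))).card : ℕ) : ℝ) ≤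
        sumAbs l * A.card + ((n + 1 : ℕ) : ℝ) * prodAbs l * (N0 : ℝ) ^ (n + 2) := by
      exact_mod_cast h4
    have h6 : κ * A.card ≤ sumAbs l * (κ * A.card) :=
      le_mul_of_one_le_left (mul_nonneg hκ0.le hAR.le) hS
    have h7 : ((∑ t ∈ Finset.Icc 1 a, (SD l (R.filter (fun r => t ≤ w r))).card : ℕ) : ℝ) ≤
        A.card + κ * A.card := by
      refine le_of_mul_le_mul_left ?_ (lt_of_lt_of_le one_pos hS)
      rw [mul_add]
      linarith
    linarith
  obtain ⟨t, ht, hst⟩ := exists_layer R w (fun t => (SD l (R.filter (fun r => t ≤ w r))).card)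
    (fun r _ => hmax r) (fun t => card_le_SD (n + 1) l hl hg _ _) hsum (τ := τ) (fun t ht => by
      have h1 := hm t ht
      have h2 : ∑ r ∈ R.filter (fun r => t ≤ w r), w r ≤
          (R.filter (fun r => t ≤ w r)).card * a := by
        rw [← smul_eq_mul]
        exact Finset.sum_le_card_nsmul _ _ a fun r _ => hmax r
      have h3 : ((∑ r ∈ R.filter (fun r => t ≤ w r), w r : ℕ) : ℝ) ≤
          (((R.filter (fun r => t ≤ w r)).card * a : ℕ) : ℝ) := Nat.cast_le.2 h2
      rw [Nat.cast_mul] at h3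
      have h4 : (1 / 2) * (A.card : ℝ) ≤ (1 - (κ + τ * K)) * A.card :=
        mul_le_mul_of_nonneg_right (by linarith) hAR.le
      linarith) hτ1 hτa hδ hAR hκ
  exact ⟨_, Finset.filter_subset _ _, hm t ht, hst⟩

/-- A residue class modulo `q` meeting `A` in a positive proportion cannot be nearly missed by a
set `X` of classes modulo `M` that carries most of `A`. -/
lemma fib_large_of_cls_large {A : Finset ℤ} {M q a K : ℕ} (hqM : q ∣ M) {X : Finset (ZMod M)}
    (hA : 0 < A.card) (hmax : ∀ r, (cls A M r).card ≤ a) (hXa : X.card * a ≤ K * A.card)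
    {σ ε1 θ : ℝ} (hmass : (1 - ε1) * A.card ≤ ((∑ r ∈ X, (cls A M r).card : ℕ) : ℝ))
    (hθ : 0 ≤ θ) (hσ : θ * K + ε1 < σ) {r : ZMod q} (hr : σ * A.card ≤ (cls A q r).card) :
    θ * X.card < (fib (red hqM) X r).card := by
  classical
  by_contra hlt
  have hlt' := not_lt.1 hlt
  have hAR : (0 : ℝ) < A.card := Nat.cast_pos.2 hA
  have h1 : cls A q r ⊆ A.filter (fun b : ℤ => (b : ZMod M) ∈ fib (red hqM) X r) ∪
      A.filter (fun b : ℤ => ¬ (b : ZMod M) ∈ X) := by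
    intro b hb
    obtain ⟨hbA, hbr⟩ := mem_cls.1 hb
    by_cases hbX : (b : ZMod M) ∈ X
    · exact Finset.mem_union_left _ (Finset.mem_filter.2
        ⟨hbA, mem_fib.2 ⟨hbX, by rw [red_cast, hbr]⟩⟩)
    · exact Finset.mem_union_right _ (Finset.mem_filter.2 ⟨hbA, hbX⟩)
  have h2 := (Finset.card_le_card h1).trans (Finset.card_union_le _ _)
  have h3 := mass_eq A M (fib (red hqM) X r)
  have h4 := mass_eq A M X
  have h5 := Finset.card_filter_add_card_filter_not (s := A) (fun b : ℤ => (b : ZMod M) ∈ X)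
  have h6 : ∑ x ∈ fib (red hqM) X r, (cls A M x).card ≤ (fib (red hqM) X r).card * a := by
    rw [← smul_eq_mul]
    exact Finset.sum_le_card_nsmul _ _ a fun x _ => hmax x
  have h7 : ((cls A q r).card : ℝ) + ((∑ r ∈ X, (cls A M r).card : ℕ) : ℝ) ≤
      (fib (red hqM) X r).card * a + A.card := by
    have : (cls A q r).card + ∑ r ∈ X, (cls A M r).card ≤
        (fib (red hqM) X r).card * a + A.card := by omega
    exact_mod_cast this
  have h8 : ((fib (red hqM) X r).card : ℝ) * a ≤ θ * (K * A.card) := by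
    have h9 : (X.card : ℝ) * a ≤ K * A.card := by exact_mod_cast hXa
    calc ((fib (red hqM) X r).card : ℝ) * a ≤ θ * X.card * a :=
          mul_le_mul_of_nonneg_right hlt' (Nat.cast_nonneg _)
      _ = θ * (X.card * a) := by ring
      _ ≤ θ * (K * A.card) := mul_le_mul_of_nonneg_left h9 hθ
  have h10 : (θ * K + ε1) * A.card < σ * A.card := mul_lt_mul_of_pos_right hσ hAR
  linarith

/-- The bound for sets of integers that are not contained in a progression of difference greater
than one. -/
theorem main_normalized {n : ℕ} (l : Fin (n + 2) → ℤ) (hl : ∀ i, l i ≠ 0)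
    (hg : Finset.univ.gcd l = 1) : ∃ C : ℝ, ∀ A : Finset ℤ, Normalized A →
      (sumAbs l : ℝ) * A.card - C ≤ (SD l A).card := by
  classical
  obtain ⟨μ, l', hμ, hl', hg', hs, hcop⟩ := exists_split l hl hg
  have hp0 : l 0 * μ ≠ 0 := mul_ne_zero (hl 0) hμ
  obtain ⟨q0, hq0⟩ : ∃ q0, q0 = (l 0 * μ).natAbs := ⟨_, rfl⟩
  have hq0p : 0 < q0 := hq0 ▸ Int.natAbs_pos.2 hp0
  obtain ⟨σ, C1, hσ0, hσ1, hC1, hlarge⟩ := bound_of_large_full l hl hg q0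
  obtain ⟨C2, εA, hC2, hεA0, hεA1, hspread⟩ := spread l hl hg
  have hSp := sumAbs_pos hl
  obtain ⟨K, hK⟩ : ∃ K, K = sumAbs l ^ 2 := ⟨_, rfl⟩
  have hK0 : 0 < K := hK ▸ pow_pos hSp 2
  have hK1 : (1 : ℝ) ≤ K := by exact_mod_cast hK0
  have hKR : (0 : ℝ) < K := by linarith
  obtain ⟨L, hL⟩ : ∃ L, L = prodAbs l := ⟨_, rfl⟩
  have hL1 : (1 : ℝ) ≤ L := by
    have : 0 < L := hL ▸ prodAbs_pos hl
    exact_mod_cast this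
  have hq1 : (1 : ℝ) ≤ q0 := by exact_mod_cast hq0p
  obtain ⟨σ0, hσ00, hσ0σ, hσ0ε⟩ : ∃ σ0 : ℝ, 0 < σ0 ∧ σ0 ≤ σ ∧ σ0 ≤ εA :=
    ⟨min σ εA, lt_min hσ0 hεA0, min_le_left _ _, min_le_right _ _⟩
  -- The threshold `η` separates nearly empty from nearly full fibres over the small modulus.
  have hden : (0 : ℝ) < 16 * (K * (q0 * L)) := by positivity
  have hqL1 : (1 : ℝ) ≤ q0 * L := one_le_mul_of_one_le_of_one_le hq1 hL1
  obtain ⟨η, hη0, hηeq⟩ : ∃ η : ℝ, 0 < η ∧ η * (K * (q0 * L)) = σ0 / 16 :=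
    ⟨σ0 / (16 * (K * (q0 * L))), by positivity, by field_simp⟩
  have hηK : η * K ≤ σ0 / 16 := by
    rw [← hηeq, ← mul_assoc]
    exact le_mul_of_one_le_right (by positivity) hqL1
  have hηqL : q0 * η * L ≤ 1 / 16 := by
    have : q0 * η * L ≤ η * (K * (q0 * L)) := by
      calc (q0 : ℝ) * η * L = 1 * (η * (q0 * L)) := by ring
        _ ≤ K * (η * (q0 * L)) := mul_le_mul_of_nonneg_right hK1 (by positivity)
        _ = _ := by ring
    linarith
  have hη1 : η ≤ 1 := by
    have : η * 1 ≤ η * K := mul_le_mul_of_nonneg_left hK1 hη0.le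
    linarith
  obtain ⟨τ, hτ0, hτK⟩ : ∃ τ : ℝ, 0 < τ ∧ τ * K = σ0 / 8 :=
    ⟨σ0 / (8 * K), by positivity, by field_simp⟩
  have hτle : τ ≤ σ0 / 8 := by
    rw [← hτK]; exact le_mul_of_one_le_right hτ0.le hK1
  have hl0 : (0 : ℝ) < (l 0).natAbs := Nat.cast_pos.2 (Int.natAbs_pos.2 (hl 0))
  obtain ⟨δ5, hδ50, hδ5⟩ : ∃ δ5 : ℝ, 0 < δ5 ∧ δ5 * q0 * (l 0).natAbs = η * (η / 2) :=
    ⟨η * (η / 2) / (q0 * (l 0).natAbs), by positivity, by field_simp⟩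
  obtain ⟨δ, hδ0, hδη, hδ10, hdisp⟩ := exists_disp l hl μ l' hμ hl' hg' hs hcop (εA / (2 * K)) δ5
    (η / 2) (by positivity) hδ50 (by positivity)
  obtain ⟨κ, hκeq⟩ : ∃ κ : ℝ, κ = δ * τ / 16 := ⟨_, rfl⟩
  have hδτ : 0 < δ * τ := mul_pos hδ0 hτ0
  have hκ0 : 0 < κ := by rw [hκeq]; linarith
  have hκle : κ ≤ τ := by
    have : δ * τ ≤ 1 * τ := mul_le_mul_of_nonneg_right (by linarith) hτ0.le
    linarith
  obtain ⟨N0, hN0⟩ := exists_modulus_mass l hl hκ0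
  obtain ⟨C3, hC3⟩ : ∃ C3 : ℝ, C3 = ((n + 1 : ℕ) : ℝ) * prodAbs l * (N0 : ℝ) ^ (n + 2) := ⟨_, rfl⟩
  have hC30 : 0 ≤ C3 := by rw [hC3]; positivity
  obtain ⟨B0, hB0⟩ : ∃ B0 : ℝ, B0 = N0 + C3 / κ + N0 / τ := ⟨_, rfl⟩
  have hB1 : 0 ≤ C3 / κ := by positivity
  have hB2 : 0 ≤ (N0 : ℝ) / τ := by positivity
  have hB3 : (0 : ℝ) ≤ N0 := Nat.cast_nonneg _
  have hSR : (0 : ℝ) < sumAbs l := Nat.cast_pos.2 hSp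
  refine ⟨C1 + C2 + sumAbs l * B0, fun A hnorm => ?_⟩
  have hSB : 0 ≤ (sumAbs l : ℝ) * B0 := mul_nonneg hSR.le (by linarith)
  have hf0 : (0 : ℝ) ≤ (SD l A).card := Nat.cast_nonneg _
  rcases le_or_gt (A.card : ℝ) B0 with hAB | hAB
  · have := mul_le_mul_of_nonneg_left hAB hSR.le
    linarith
  rcases le_or_gt (SD l A).card (sumAbs l * A.card) with hf | hf
  swap
  · have : ((sumAbs l * A.card : ℕ) : ℝ) ≤ (SD l A).card := Nat.cast_le.2 hf.le
    rw [Nat.cast_mul] at this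
    linarith
  rcases hspread A hnorm with h | hsp
  · linarith
  have hAR : (0 : ℝ) < A.card := by linarith
  have hA : 0 < A.card := Nat.cast_pos.1 hAR
  have hAne : A.Nonempty := Finset.card_pos.1 hA
  have hAN : (N0 : ℝ) < A.card := by linarith
  obtain ⟨M, hM, hresN, hmassR⟩ := hN0 A hf (Nat.cast_lt.1 hAN)
  have : NeZero M := ⟨hM.ne'⟩
  set R := (res A M).filter (Full l A M) with hR
  have hRN : R.card ≤ N0 := (Finset.card_filter_le _ _).trans hresN
  obtain ⟨r0, -, hmax⟩ := exists_max_fiber (Int.cast : ℤ → ZMod M) A hAne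
  obtain ⟨a, ha⟩ : ∃ a, a = (cls A M r0).card := ⟨_, rfl⟩
  have hmax' : ∀ r, (cls A M r).card ≤ a := fun r => ha ▸ hmax r
  have hAa : A.card ≤ N0 * a := by
    rw [← sum_cls_res A M]
    refine (Finset.sum_le_card_nsmul _ _ a fun r _ => hmax' r).trans ?_
    exact Nat.mul_le_mul_right _ hresN
  have ha0 : 0 < a := by
    rcases Nat.eq_zero_or_pos a with h | h
    · rw [h, mul_zero] at hAa; omega
    · exact h
  have hN00 : 0 < N0 := by
    rcases Nat.eq_zero_or_pos N0 with h | h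
    · rw [h, zero_mul] at hAa; omega
    · exact h
  have hτa : 1 ≤ τ * a := by
    have h1 : (A.card : ℝ) ≤ N0 * a := by exact_mod_cast hAa
    have h2 : (N0 : ℝ) / τ ≤ N0 * a := by linarith
    rw [div_le_iff₀ hτ0] at h2
    have h3 : (N0 : ℝ) * 1 ≤ N0 * (τ * a) := by linarith
    exact le_of_mul_le_mul_left h3 (Nat.cast_pos.2 hN00)
  have hKA : (A - A).card ≤ K * A.card := hK ▸ card_sub_self_le l hl hf
  have hresa : (res A M).card * a ≤ K * A.card := ha ▸ card_image_mul_cls_le hKA M r0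
  have hRa : R.card * a ≤ K * A.card :=
    (Nat.mul_le_mul_right _ (Finset.card_filter_le _ _)).trans hresa
  have hbig : C3 ≤ κ * A.card := by
    have : C3 / κ ≤ A.card := by linarith
    rwa [div_le_iff₀' hκ0] at this
  obtain ⟨X, hXR, hmassX, hXsmall⟩ := exists_small_level l hl hg hA hf hM
    (fun r hr => (Finset.mem_filter.1 hr).2) hκ0 hδ0 hmassR hRN hmax' hRa hτ0 (by linarith) hτa
    (by linarith) (by linarith) (hC3 ▸ hbig)
  have hε1 : κ + τ * K ≤ σ0 / 4 := by linarith
  have hXa : X.card * a ≤ K * A.card :=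
    (Nat.mul_le_mul_right _ (Finset.card_le_card hXR)).trans hRa
  have hXne : X.Nonempty := by
    by_contra hne
    rw [Finset.not_nonempty_iff_eq_empty.1 hne, Finset.sum_empty, Nat.cast_zero] at hmassX
    have : 0 < (1 - (κ + τ * K)) * A.card := mul_pos (by linarith) hAR
    linarith
  have hrob : Robust X (εA / (2 * K)) :=
    robust_of_spread ha0 hK0 hmax' hXa hmassX (by linarith) hεA0 hsp
  obtain ⟨q, hq⟩ : ∃ q, q = Int.gcd (l 0 * μ) M := ⟨_, rfl⟩
  have hqM : q ∣ M := by
    rw [hq]; exact Int.natCast_dvd_natCast.1 (Int.gcd_dvd_right _ _)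
  have hq00 : 0 < q := Nat.pos_of_dvd_of_pos hqM hM
  have hqq0 : q ≤ q0 := by
    rw [hq0]
    refine Nat.le_of_dvd (Int.natAbs_pos.2 hp0) ?_
    rw [hq]
    exact Int.natCast_dvd.1 (Int.gcd_dvd_left _ _)
  have : NeZero q := ⟨hq00.ne'⟩
  have hdispX : ∀ h, red hqM h = 0 → (disp (SD l X) h : ℝ) ≤ δ5 * (SD l X).card := by
    intro h hh
    obtain ⟨g, rfl⟩ : ∃ g, h = (l 0 * μ) • g := by
      subst hq
      exact exists_smul_of_red_eq_zero hqM hh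
    exact hdisp (ZMod M) X hXne hrob hXsmall g
  obtain ⟨hΛX, hfill⟩ := fill l hl hg (red hqM) (red_surjective hqM) X hXne
    (by rw [ZMod.card]; exact hqq0) hδ0 (by linarith) hη0 hη1 hδη hδ50 hδ5.le hXsmall hdispX
  have hΛ : (0 : ℝ) < (fib (red hqM) Finset.univ 0).card :=
    Nat.cast_pos.2 (Finset.card_pos.2 ⟨0, mem_fib.2 ⟨Finset.mem_univ _, map_zero _⟩⟩)
  have hfinal := hlarge A q hq00 hqq0 fun r hr => by
    have h1 := fib_large_of_cls_large hqM hA hmax' hXa hmassX (σ := σ) (θ := 4 * η)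
      (by linarith) (by linarith) hr
    have h2 : η * (fib (red hqM) Finset.univ 0).card ≤ 4 * η * X.card := by
      have := mul_le_mul_of_nonneg_left hΛX hη0.le
      linarith
    have h3 := (hfill r).resolve_left (by linarith)
    refine full_of_filled hl hqM (fun x hx => (Finset.mem_filter.1 (hXR hx)).2) ?_
    rw [← hL]
    have h4 := mul_le_mul_of_nonneg_left h3 (le_trans zero_le_one hL1)
    have h5 : q0 * η * L * (fib (red hqM) Finset.univ 0).card ≤
        1 / 16 * (fib (red hqM) Finset.univ 0).card :=
      mul_le_mul_of_nonneg_right hηqL hΛ.le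
    have h6 : (L : ℝ) * (fib (red hqM) Finset.univ 0).card <
        (fib (red hqM) Finset.univ 0).card + L * (fib (red hqM) X r).card := by
      linarith
    exact_mod_cast h6
  linarith

/-! ### Passage to sets of rationals -/

/-- Every set of at least two rationals is the image of a normalized set of integers under an
affine map. -/
lemma exists_affine (A : Finset ℚ) (hA : 1 < A.card) : ∃ (B : Finset ℤ) (u v : ℚ), v ≠ 0 ∧
    Normalized B ∧ A = B.image (fun x : ℤ => u + v * x) := by
  classical
  set D : ℕ := ∏ a ∈ A, a.den with hD
  have hD0 : (D : ℚ) ≠ 0 := by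
    rw [Nat.cast_ne_zero]
    exact Finset.prod_ne_zero_iff.2 fun a _ => a.den_nz
  have hint : ∀ a ∈ A, ∃ z : ℤ, (z : ℚ) = D * a := by
    intro a ha
    obtain ⟨m, hm⟩ : a.den ∣ D := Finset.dvd_prod_of_mem (fun a : ℚ => a.den) ha
    refine ⟨m * a.num, ?_⟩
    rw [hm, Nat.cast_mul, mul_right_comm, mul_comm (a.den : ℚ) a, Rat.mul_den_eq_num]
    push_cast
    ring
  choose! f hf using hint
  obtain ⟨a0, ha0, a1, ha1, hne⟩ := Finset.one_lt_card.1 hA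
  set d : ℤ := A.gcd (fun a => f a - f a0) with hd
  have hd0 : d ≠ 0 := by
    intro h
    have h1 : f a1 - f a0 = 0 := Finset.gcd_eq_zero_iff.1 h a1 ha1
    have h2 : (D : ℚ) * a1 = D * a0 := by
      rw [← hf a1 ha1, ← hf a0 ha0, sub_eq_zero.1 h1]
    exact hne (mul_left_cancel₀ hD0 h2).symm
  have hdQ : (d : ℚ) ≠ 0 := Int.cast_ne_zero.2 hd0
  have hdiv : ∀ a ∈ A, ∃ z : ℤ, f a - f a0 = d * z := fun a ha =>
    Finset.gcd_dvd (f := fun a => f a - f a0) ha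
  choose! g hgd using hdiv
  have hg0 : g a0 = 0 := by
    have := hgd a0 ha0
    rw [sub_self] at this
    exact (mul_eq_zero.1 this.symm).resolve_left hd0
  refine ⟨A.image g, a0, d / D, div_ne_zero hdQ hD0, ?_, ?_⟩
  · intro e he
    have h1 : d * e ∣ d := by
      refine Finset.dvd_gcd fun a ha => ?_
      rw [hgd a ha]
      refine mul_dvd_mul_left d (he _ ?_)
      have := Finset.sub_mem_sub (Finset.mem_image_of_mem g ha) (Finset.mem_image_of_mem g ha0)
      rwa [hg0, sub_zero] at this
    have h2 : d * e ∣ d * 1 := by rwa [mul_one]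
    exact isUnit_of_dvd_one ((mul_dvd_mul_iff_left hd0).1 h2)
  · rw [Finset.image_image]
    refine (Finset.image_id.symm).trans (Finset.image_congr fun a ha => ?_)
    have ha' : a ∈ A := ha
    have h1 : ((f a - f a0 : ℤ) : ℚ) = ((d * g a : ℤ) : ℚ) := by rw [hgd a ha']
    rw [Int.cast_sub, hf a ha', hf a0 ha0, Int.cast_mul] at h1
    simp only [id, Function.comp]
    field_simp
    linarith

/-- The sum of dilates of an affine image is an affine image of the sum of dilates. -/
lemma card_sum_image_affine {k : ℕ} (l : Fin k → ℤ) (B : Finset ℤ) {u v : ℚ} (hv : v ≠ 0) :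
    (∑ i, (B.image (fun x : ℤ => u + v * x)).image (fun a => (l i : ℚ) * a)).card =
      (SD l B).card := by
  have h : (∑ i, (B.image (fun x : ℤ => u + v * x)).image (fun a => (l i : ℚ) * a)) =
      (SD l B).image (fun z : ℤ => (∑ i, (l i : ℚ)) * u + v * z) := by
    have key : ∀ g : Fin k → ℤ, ∑ i, (l i : ℚ) * (u + v * g i) =
        (∑ i, (l i : ℚ)) * u + v * ((∑ i, l i • g i : ℤ) : ℚ) := by
      intro g
      simp only [smul_eq_mul, Int.cast_sum, Int.cast_mul]
      rw [Finset.sum_mul, Finset.mul_sum, ← Finset.sum_add_distrib]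
      exact Finset.sum_congr rfl fun i _ => by ring
    ext x
    rw [← Finset.mem_coe, Finset.coe_sum, Set.mem_fintype_sum, Finset.mem_image]
    constructor
    · rintro ⟨y, hy, rfl⟩
      have hy' : ∀ i, y i ∈ (B.image (fun x : ℤ => u + v * x)).image (fun a => (l i : ℚ) * a) :=
        fun i => Finset.mem_coe.1 (hy i)
      have : ∀ i, ∃ b ∈ B, (l i : ℚ) * (u + v * b) = y i := by
        intro i
        obtain ⟨c, hc, hcy⟩ := Finset.mem_image.1 (hy' i)
        obtain ⟨b, hb, rfl⟩ := Finset.mem_image.1 hc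
        exact ⟨b, hb, hcy⟩
      choose g hgB hgy using this
      refine ⟨_, mem_SD.2 ⟨g, hgB, rfl⟩, ?_⟩
      rw [← key]
      exact Finset.sum_congr rfl fun i _ => hgy i
    · rintro ⟨z, hz, rfl⟩
      obtain ⟨g, hgB, rfl⟩ := mem_SD.1 hz
      refine ⟨fun i => (l i : ℚ) * (u + v * g i), fun i => ?_, key g⟩
      exact Finset.mem_coe.2 (Finset.mem_image_of_mem _ (Finset.mem_image_of_mem _ (hgB i)))
  rw [h]
  refine Finset.card_image_of_injective _ fun a b hab => ?_
  exact Int.cast_injective (mul_left_cancel₀ hv (add_left_cancel hab))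

end Dilates

/-- **Sum of many dilates over ℚ.** For coprime nonzero integers `λ₁, …, λ_k` there is
a constant `C` such that for every finite `A ⊆ ℚ`,
`|λ₁·A + … + λ_k·A| ≥ (|λ₁| + … + |λ_k|)·|A| − C`. -/
theorem sum_of_many_dilates_rat (k : ℕ) (hk : 1 ≤ k) (l : Fin k → ℤ)
    (hl : ∀ i, l i ≠ 0) (hcop : Finset.univ.gcd l = 1) :
    ∃ C : ℤ, ∀ A : Finset ℚ,
      (∑ i, |l i|) * A.card - C ≤
        ((∑ i, A.image (fun a => (l i : ℚ) * a)).card : ℤ) := by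
  open Dilates in
  have hS : ∑ i, |l i| = (sumAbs l : ℤ) := by simp [sumAbs]
  rw [hS]
  obtain ⟨n, rfl | rfl⟩ : ∃ n, k = 1 ∨ k = n + 2 :=
    ⟨k - 2, by omega⟩
  · refine ⟨0, fun A => ?_⟩
    have hl0 : l 0 = 1 ∨ l 0 = -1 := unit_of_gcd_one l hcop
    have h1 : sumAbs l = 1 := by
      rcases hl0 with h | h <;> simp [sumAbs, h]
    have h2 : ((l 0 : ℤ) : ℚ) ≠ 0 := Int.cast_ne_zero.2 (hl 0)
    rw [h1, Fin.sum_univ_one, Finset.card_image_of_injective _ (mul_right_injective₀ h2)]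
    simp
  · obtain ⟨C, hC⟩ := main_normalized l hl hcop
    refine ⟨max ⌈C⌉ (sumAbs l), fun A => ?_⟩
    rcases le_or_gt A.card 1 with hA | hA
    · have h1 : (sumAbs l : ℤ) * A.card ≤ sumAbs l * 1 :=
        mul_le_mul_of_nonneg_left (by exact_mod_cast hA) (Int.natCast_nonneg _)
      have h2 : (sumAbs l : ℤ) ≤ max ⌈C⌉ (sumAbs l) := le_max_right _ _
      have h3 : (0 : ℤ) ≤ ((∑ i, A.image (fun a => (l i : ℚ) * a)).card : ℤ) :=
        Int.natCast_nonneg _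
      linarith
    · obtain ⟨B, u, v, hv, hB, rfl⟩ := exists_affine A hA
      rw [card_sum_image_affine l B hv, Finset.card_image_of_injective _
        (fun a b hab => Int.cast_injective (mul_left_cancel₀ hv (add_left_cancel hab)))]
      have h1 := hC B hB
      have h2 : C ≤ ((max ⌈C⌉ (sumAbs l : ℤ) : ℤ) : ℝ) :=
        (Int.le_ceil C).trans (Int.cast_le.2 (le_max_left _ _))
      have h3 : (((sumAbs l : ℤ) * B.card - max ⌈C⌉ (sumAbs l : ℤ) : ℤ) : ℝ) ≤
          (((SD l B).card : ℤ) : ℝ) := by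
        rw [Int.cast_sub]
        push_cast at h2 ⊢
        linarith
      exact Int.cast_le.1 h3
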